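/- There exist W₀ and a constant K such that for every W ≥ W₀ and every finite union Λ of cubes of side W in ℤ³ containing 0, for all E ∈ 𝓘 the averaged density of states satisfies |ρ̄_Λ(E)| ≤ K e^{K|Λ|/W³}, with K independent of W and Λ. -/

import Mathlib

open scoped BigOperators Topology
open Matrix MeasureTheory Filter

noncomputable section

/-- The discrete torus of side lengths `L i`; when each `L i` is a positive multiple of `W`,
this is a union of cubes of side `W` (containing `0`) with periodic boundary conditions. -/
abbrev Torus (L : Fin 3 → ℕ) := (i : Fin 3) → ZMod (L i)

/-- Unit lattice vector in direction `i`. -/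
def unitVec (L : Fin 3 → ℕ) (i : Fin 3) : Torus L := fun j => if j = i then 1 else 0

/-- Discrete Laplacian with periodic boundary conditions. -/
def lap (L : Fin 3 → ℕ) : Matrix (Torus L) (Torus L) ℝ :=
  Matrix.of fun x y =>
    (∑ i : Fin 3, ((if y = x + unitVec L i then (1 : ℝ) else 0) +
        (if y = x - unitVec L i then (1 : ℝ) else 0))) - (if y = x then 6 else 0)

/-- Distance to `0` in `ℤ/n`, via the minimal representative. -/
def zdist {n : ℕ} (x : ZMod n) : ℕ := min x.val (n - x.val)

/-- Euclidean distance on the torus. -/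
def tdist (L : Fin 3 → ℕ) (x y : Torus L) : ℝ :=
  Real.sqrt (∑ i : Fin 3, ((zdist (x i - y i) : ℝ)) ^ 2)

/-- The band covariance profile `J = (-W²Δ + 1)⁻¹`. -/
def Jmat (L : Fin 3 → ℕ) [∀ i, NeZero (L i)] (W : ℕ) : Matrix (Torus L) (Torus L) ℝ :=
  (((W : ℝ) ^ 2) • (-lap L) + 1)⁻¹

def mr2 (E : ℝ) : ℝ := 2 * (1 - E ^ 2 / 4)
def mi2 (E : ℝ) : ℝ := E * Real.sqrt (1 - E ^ 2 / 4)
def mr (E : ℝ) : ℝ := Real.sqrt (mr2 E)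

/-- `ℰ = E/2 - i√(1 - E²/4)`. -/
def calE (E : ℝ) : ℂ := ((E / 2 : ℝ) : ℂ) - (Real.sqrt (1 - E ^ 2 / 4) : ℝ) * Complex.I
/-- `ℰ̄ = E - ℰ = E/2 + i√(1 - E²/4)`, the complex conjugate of `ℰ`. -/
def calEbar (E : ℝ) : ℂ := ((E / 2 : ℝ) : ℂ) + (Real.sqrt (1 - E ^ 2 / 4) : ℝ) * Complex.I

/-- `C = (-W²Δ + m_r²)⁻¹`. -/
def Cmat (L : Fin 3 → ℕ) [∀ i, NeZero (L i)] (W : ℕ) (E : ℝ) : Matrix (Torus L) (Torus L) ℝ :=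
  (((W : ℝ) ^ 2) • (-lap L) + mr2 E • 1)⁻¹

/-- `B = (C⁻¹ + i m_i²·Id)⁻¹`. -/
def Bmat (L : Fin 3 → ℕ) [∀ i, NeZero (L i)] (W : ℕ) (E : ℝ) : Matrix (Torus L) (Torus L) ℂ :=
  (((Cmat L W E)⁻¹).map Complex.ofReal + (mi2 E * Complex.I) • 1)⁻¹

/-- The energy window `𝓘 = {E : η ≤ |E| ≤ 1.8}`. -/
def specI (η : ℝ) : Set ℝ := {E : ℝ | η ≤ |E| ∧ |E| ≤ 1.8}

/-- Wigner semicircle density `(1/π)√(1 - E²/4)`. -/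
def rhoSC (E : ℝ) : ℝ := Real.sqrt (1 - E ^ 2 / 4) / Real.pi

/-- Real quadratic form `aᵀ M a`. -/
def qf (L : Fin 3 → ℕ) [∀ i, NeZero (L i)] (M : Matrix (Torus L) (Torus L) ℝ)
    (a : Torus L → ℝ) : ℝ := a ⬝ᵥ M.mulVec a

/-- Sample space: one standard Gaussian for each ordered pair of sites. -/
abbrev Config (L : Fin 3 → ℕ) := (Torus L × Torus L) → ℝ

/-- Product of standard Gaussians. -/
def gaussMeas (L : Fin 3 → ℕ) [∀ i, NeZero (L i)] : Measure (Config L) :=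
  Measure.pi fun _ => ProbabilityTheory.gaussianReal 0 1

/-- An (arbitrary) linear order on the sites, used to build the Hermitian matrix. -/
def siteIdx (L : Fin 3 → ℕ) [∀ i, NeZero (L i)] (x : Torus L) : ℕ :=
  ((Fintype.equivFin (Torus L)) x).val

/-- The random band matrix: Hermitian, with centered jointly Gaussian entries of covariance
`E[H_ij H_kl] = δ_jk δ_il J_ij` (off-diagonal entries complex, diagonal entries real). -/
def Hmat (L : Fin 3 → ℕ) [∀ i, NeZero (L i)] (W : ℕ) (ω : Config L) :
    Matrix (Torus L) (Torus L) ℂ :=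
  Matrix.of fun i j =>
    if i = j then ((Real.sqrt (Jmat L W i i) * ω (i, i) : ℝ) : ℂ)
    else if siteIdx L i < siteIdx L j then
      ((Real.sqrt (Jmat L W i j / 2) : ℝ) : ℂ) * ((ω (i, j) : ℂ) + Complex.I * (ω (j, i) : ℂ))
    else
      ((Real.sqrt (Jmat L W i j / 2) : ℝ) : ℂ) * ((ω (j, i) : ℂ) - Complex.I * (ω (i, j) : ℂ))

/-- Retarded Green's function `G⁺ = (E + iε - H)⁻¹`. -/
def Green (L : Fin 3 → ℕ) [∀ i, NeZero (L i)] (W : ℕ) (E ε : ℝ) (ω : Config L) :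
    Matrix (Torus L) (Torus L) ℂ :=
  (((E : ℂ) + (ε : ℂ) * Complex.I) • (1 : Matrix (Torus L) (Torus L) ℂ) - Hmat L W ω)⁻¹

/-- Averaged Green's function entry `E[(G⁺)_{xy}]`. -/
def avgGreen (L : Fin 3 → ℕ) [∀ i, NeZero (L i)] (W : ℕ) (E ε : ℝ) (x y : Torus L) : ℂ :=
  ∫ ω, Green L W E ε ω x y ∂(gaussMeas L)

/-- Regularized averaged density of states `-(1/π) Im E[(G⁺)₀₀]`. -/
def dos (L : Fin 3 → ℕ) [∀ i, NeZero (L i)] (W : ℕ) (E ε : ℝ) : ℝ :=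
  -(1 / Real.pi) * (avgGreen L W E ε 0 0).im

/-!
Write `H = L w`, where `w` is a standard Gaussian vector and `L` a linear bijection onto the
Hermitian matrices with `‖w‖² = ∑ |(L w) i j|² / J i j`. Let `B` be a set of sites on which
`s ≤ J`, so that the rank-two matrices `u v* + v u*` supported in `B` are cheap directions for `w`.

* Rotating `w` in the plane spanned by itself and such a direction turns the characteristic
  polynomial into one of degree at most four in the tangent of the angle, and each of its roots
  contributes at most `π` to the averaged Lorentzian. Hence `Im G⁺ u`, restricted to `B`, has
  expected norm at most `C ‖u‖ / √s`; averaging over a Gaussian `u` supported in `B` bounds the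
  expected Hilbert–Schmidt norm of the block `1_B Im G⁺ 1_B` by `C √(|B| / s)`.
* The spectrum of `H` is almost surely simple, so for small `ε` at most one eigenvalue is within
  reach of `E`, the block is nearly of rank one, and its trace is at most its Hilbert–Schmidt norm
  plus `O(ε)`. Shifting `H` along the identity matrix smooths the Lorentzian by a Gaussian, which
  supplies the domination needed to let `ε ↓ 0`. By translation invariance of `J` all diagonal
  entries have the same expectation, and so the density of states is at most `C / √(|B| s)`.
* By the maximum principle `(-W²Δ + 2)⁻⁴ ≤ (-W²Δ + 1)⁻¹` entrywise, and the Fourier series of the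
  left side shows that, with `N = |Λ| / W³`, it is at least `1 / (32 |Λ|)` between the sites of a
  box of side of order `W / N`. For this box `|B| s ≥ c / N⁴`, so the density of states is at most
  `K N²`.
-/

open ProbabilityTheory

section Gaussian

variable {V : Type*} [NormedAddCommGroup V] [InnerProductSpace ℝ V] [FiniteDimensional ℝ V]
  [MeasurableSpace V] [BorelSpace V]

lemma stdGaussian_real : stdGaussian ℝ = gaussianReal 0 1 := by
  refine Measure.ext_of_charFun (funext fun t => ?_)
  rw [charFun_stdGaussian, charFun_gaussianReal, Real.norm_eq_abs, ← Complex.ofReal_pow, sq_abs]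
  simp [neg_div]

lemma map_inner_stdGaussian {e : V} (he : ‖e‖ = 1) :
    (stdGaussian V).map (fun w => inner ℝ e w) = gaussianReal 0 1 := by
  have hvar : Var[innerSL ℝ e; stdGaussian V] = 1 := by
    rw [variance_dual_stdGaussian, innerSL_apply_norm, he, one_pow]
  have h := IsGaussian.map_eq_gaussianReal (μ := stdGaussian V) (innerSL ℝ e)
  rw [integral_strongDual_stdGaussian, hvar, Real.toNNReal_one] at h
  exact h

lemma measurePreserving_add_stdGaussian_prod {U X : Type*}
    [NormedAddCommGroup U] [InnerProductSpace ℝ U] [FiniteDimensional ℝ U] [MeasurableSpace U]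
    [BorelSpace U]
    [NormedAddCommGroup X] [InnerProductSpace ℝ X] [FiniteDimensional ℝ X] [MeasurableSpace X]
    [BorelSpace X] (f : V →L[ℝ] X) (g : U →L[ℝ] X)
    (hfg : ∀ t, ‖f.adjoint t‖ ^ 2 + ‖g.adjoint t‖ ^ 2 = ‖t‖ ^ 2) :
    MeasurePreserving (fun p : V × U => f p.1 + g p.2)
      ((stdGaussian V).prod (stdGaussian U)) (stdGaussian X) := by
  refine ⟨by fun_prop, Measure.ext_of_charFun (funext fun t => ?_)⟩
  have hsplit : charFun (stdGaussian X) t =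
      charFun (stdGaussian V) (f.adjoint t) * charFun (stdGaussian U) (g.adjoint t) := by
    simp only [charFun_stdGaussian, ← Complex.exp_add, ← Complex.ofReal_pow, ← hfg t,
      Complex.ofReal_add]
    ring_nf
  rw [hsplit, charFun_apply, charFun_apply, charFun_apply,
    integral_map (by fun_prop) (by fun_prop), ← integral_prod_mul]
  refine integral_congr_ae (ae_of_all _ fun p => ?_)
  simp only [← Complex.exp_add, ContinuousLinearMap.adjoint_inner_right, inner_add_left,
    Complex.ofReal_add, add_mul]

lemma measurePreserving_toLp_stdGaussian_prod :
    MeasurePreserving (MeasurableEquiv.toLp 2 (V × V)) ((stdGaussian V).prod (stdGaussian V))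
      (stdGaussian (WithLp 2 (V × V))) := by
  refine ⟨by fun_prop, Measure.ext_of_charFun (funext fun t => ?_)⟩
  rw [MeasurableEquiv.coe_toLp, charFun_prod]
  simp only [charFun_stdGaussian, ← Complex.exp_add, ← Complex.ofReal_pow,
    WithLp.prod_norm_sq_eq_of_L2, Complex.ofReal_add]
  congr 1
  change -((‖t.fst‖ ^ 2 : ℝ) : ℂ) / 2 + -((‖t.snd‖ ^ 2 : ℝ) : ℂ) / 2 = _
  ring

lemma measurePreserving_stdGaussian_prod_of_norm_sq (f : V × V →ₗ[ℝ] V × V)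
    (hf : ∀ p, ‖(f p).1‖ ^ 2 + ‖(f p).2‖ ^ 2 = ‖p.1‖ ^ 2 + ‖p.2‖ ^ 2) :
    MeasurePreserving f ((stdGaussian V).prod (stdGaussian V))
      ((stdGaussian V).prod (stdGaussian V)) := by
  let e := WithLp.linearEquiv 2 ℝ (V × V)
  let g : WithLp 2 (V × V) →ₗᵢ[ℝ] WithLp 2 (V × V) :=
    { toLinearMap := e.symm.toLinearMap ∘ₗ f ∘ₗ e.toLinearMap
      norm_map' := fun p => by
        rw [← sq_eq_sq₀ (norm_nonneg _) (norm_nonneg _), WithLp.prod_norm_sq_eq_of_L2,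
          WithLp.prod_norm_sq_eq_of_L2]
        exact hf (e p) }
  have hg : MeasurePreserving (g.toLinearIsometryEquiv rfl) (stdGaussian (WithLp 2 (V × V)))
      (stdGaussian (WithLp 2 (V × V))) := ⟨by fun_prop, stdGaussian_map _⟩
  have hLp := measurePreserving_toLp_stdGaussian_prod (V := V)
  exact (hLp.symm _).comp (hg.comp hLp)

lemma measurePreserving_rotation_stdGaussian_prod (K : Submodule ℝ V) {c s : ℝ}
    (hcs : c ^ 2 + s ^ 2 = 1) :
    MeasurePreserving
      (fun p : V × V => (p.1 + (c - 1) • K.starProjection p.1 + s • K.starProjection p.2,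
        p.2 + (c - 1) • K.starProjection p.2 - s • K.starProjection p.1))
      ((stdGaussian V).prod (stdGaussian V)) ((stdGaussian V).prod (stdGaussian V)) := by
  let P : V →ₗ[ℝ] V := K.starProjection.toLinearMap
  let x : V × V →ₗ[ℝ] V := LinearMap.fst ℝ V V
  let y : V × V →ₗ[ℝ] V := LinearMap.snd ℝ V V
  refine measurePreserving_stdGaussian_prod_of_norm_sq
    ((x + (c - 1) • P ∘ₗ x + s • P ∘ₗ y).prod (y + (c - 1) • P ∘ₗ y - s • P ∘ₗ x)) ?_
  rintro ⟨x, y⟩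
  change ‖x + (c - 1) • K.starProjection x + s • K.starProjection y‖ ^ 2 +
    ‖y + (c - 1) • K.starProjection y - s • K.starProjection x‖ ^ 2 = ‖x‖ ^ 2 + ‖y‖ ^ 2
  have hPP : ∀ z, K.starProjection (K.starProjection z) = K.starProjection z := fun z =>
    Submodule.starProjection_eq_self_iff.2 (Submodule.starProjection_apply_mem K z)
  have hsymm : inner ℝ y (K.starProjection x) = inner ℝ x (K.starProjection y) := by
    rw [real_inner_comm, Submodule.inner_starProjection_left_eq_right]
  simp only [← real_inner_self_eq_norm_sq, inner_add_left, inner_add_right, inner_sub_left,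
    inner_sub_right, real_inner_smul_left, real_inner_smul_right,
    Submodule.inner_starProjection_left_eq_right, hPP, hsymm]
  linear_combination (inner ℝ x (K.starProjection x) + inner ℝ y (K.starProjection y)) * hcs

lemma measurePreserving_resample_stdGaussian {e : V} (he : ‖e‖ = 1) :
    MeasurePreserving (fun p : V × ℝ => p.1 + (p.2 - inner ℝ e p.1) • e)
      ((stdGaussian V).prod (gaussianReal 0 1)) (stdGaussian V) := by
  rw [← stdGaussian_real]
  let T : V →L[ℝ] V := ContinuousLinearMap.id ℝ V - (innerSL ℝ e).smulRight e
  let S : ℝ →L[ℝ] V := (ContinuousLinearMap.id ℝ ℝ).smulRight e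
  have hT : T.adjoint = T := by
    refine ((ContinuousLinearMap.eq_adjoint_iff T T).2 fun x y => ?_).symm
    simp only [T, _root_.sub_apply, ContinuousLinearMap.id_apply,
      ContinuousLinearMap.smulRight_apply, innerSL_apply_apply, inner_sub_left, inner_sub_right,
      real_inner_smul_left, real_inner_smul_right, real_inner_comm x e]
    ring
  have hS : S.adjoint = innerSL ℝ e := by
    refine ((ContinuousLinearMap.eq_adjoint_iff _ S).2 fun x y => ?_).symm
    simp [S, real_inner_smul_right, real_inner_comm]
  have hTS : ∀ t, ‖T.adjoint t‖ ^ 2 + ‖S.adjoint t‖ ^ 2 = ‖t‖ ^ 2 := fun t => by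
    have hTt : T t = t - inner ℝ e t • e := rfl
    rw [hT, hS, hTt, innerSL_apply_apply, norm_sub_sq_real, real_inner_smul_right, norm_smul, he,
      real_inner_comm, Real.norm_eq_abs, mul_one, sq_abs]
    ring
  convert measurePreserving_add_stdGaussian_prod T S hTS using 2 with p
  change p.1 + (p.2 - inner ℝ e p.1) • e = p.1 - inner ℝ e p.1 • e + p.2 • e
  module

/-- The first absolute moment of a standard real Gaussian. -/
def gaussianAbsMoment : ℝ := ∫ x, |x| ∂(gaussianReal 0 1)

lemma integrable_abs_gaussianReal : Integrable (fun x : ℝ => |x|) (gaussianReal 0 1) :=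
  (IsGaussian.integrable_id (μ := gaussianReal 0 1)).abs

lemma gaussianAbsMoment_pos : 0 < gaussianAbsMoment := by
  rw [gaussianAbsMoment,
    integral_pos_iff_support_of_nonneg (fun x => abs_nonneg x) integrable_abs_gaussianReal]
  have hsupp : Function.support (fun x : ℝ => |x|) = {0}ᶜ := by ext x; simp
  have := nullSingletonClass_gaussianReal (μ := 0) (v := 1) one_ne_zero
  rw [hsupp, prob_compl_eq_one_sub (measurableSet_singleton 0)]
  simp

lemma lintegral_abs_inner_stdGaussian (c : V) :
    ∫⁻ w, ENNReal.ofReal |inner ℝ c w| ∂(stdGaussian V) =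
      ENNReal.ofReal (gaussianAbsMoment * ‖c‖) := by
  rcases eq_or_ne c 0 with rfl | hc
  · simp
  have hunit : ‖‖c‖⁻¹ • c‖ = 1 := norm_smul_inv_norm hc
  have hscale : ∀ w, |inner ℝ c w| = ‖c‖ * |inner ℝ (‖c‖⁻¹ • c) w| := fun w => by
    rw [real_inner_smul_left, abs_mul, abs_inv, abs_norm,
      mul_inv_cancel_left₀ (norm_ne_zero_iff.2 hc)]
  calc ∫⁻ w, ENNReal.ofReal |inner ℝ c w| ∂(stdGaussian V)
      = ENNReal.ofReal ‖c‖ * ∫⁻ w, ENNReal.ofReal |inner ℝ (‖c‖⁻¹ • c) w| ∂(stdGaussian V) := by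
        simp only [hscale, ENNReal.ofReal_mul (norm_nonneg c)]
        exact lintegral_const_mul _ (by fun_prop)
    _ = ENNReal.ofReal ‖c‖ * ∫⁻ x, ENNReal.ofReal |x| ∂(gaussianReal 0 1) := by
        rw [← map_inner_stdGaussian hunit, lintegral_map (by fun_prop) (by fun_prop)]
    _ = ENNReal.ofReal (gaussianAbsMoment * ‖c‖) := by
        rw [← ofReal_integral_eq_lintegral_ofReal integrable_abs_gaussianReal
          (ae_of_all _ fun x => abs_nonneg x), ← gaussianAbsMoment, mul_comm,
          ← ENNReal.ofReal_mul gaussianAbsMoment_pos.le]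

end Gaussian

section PolynomialWinding

lemma abs_im_one_div_sub (r : ℂ) (x : ℝ) :
    |(1 / ((x : ℂ) - r)).im| =
      Real.pi * cauchyPDFReal r.re ‖r.im‖₊ x := by
  have him : (1 / ((x : ℂ) - r)).im = r.im / ((x - r.re) ^ 2 + r.im ^ 2) := by
    rw [one_div, Complex.inv_im, Complex.normSq_apply]
    simp only [Complex.sub_im, Complex.ofReal_im, Complex.sub_re, Complex.ofReal_re]
    ring_nf
  rw [him, abs_div, abs_of_nonneg (by positivity : 0 ≤ (x - r.re) ^ 2 + r.im ^ 2),
    cauchyPDFReal_def, coe_nnnorm, Real.norm_eq_abs, sq_abs]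
  field_simp

lemma lintegral_abs_im_one_div_sub_le (r : ℂ) :
    ∫⁻ x : ℝ, ENNReal.ofReal |(1 / ((x : ℂ) - r)).im| ≤ ENNReal.ofReal Real.pi := by
  simp only [abs_im_one_div_sub, ENNReal.ofReal_mul Real.pi_pos.le]
  rw [lintegral_const_mul _ (by fun_prop)]
  refine mul_le_of_le_one_right zero_le ?_
  rcases eq_or_ne r.im 0 with hr | hr
  · simp [hr]
  · exact (lintegral_cauchyPDF_eq_one r.re (nnnorm_ne_zero_iff.2 hr)).le

lemma lintegral_abs_im_sum_one_div_sub_le (s : Multiset ℂ) :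
    ∫⁻ x : ℝ, ENNReal.ofReal |((s.map fun r => 1 / ((x : ℂ) - r)).sum).im| ≤
      s.card * ENNReal.ofReal Real.pi := by
  induction s using Multiset.induction_on with
  | empty => simp
  | cons r s ih =>
    have : Measurable fun x : ℝ => (1 / ((x : ℂ) - r)).im :=
      Complex.measurable_im.comp (by fun_prop)
    calc ∫⁻ x : ℝ, ENNReal.ofReal |(((r ::ₘ s).map fun r => 1 / ((x : ℂ) - r)).sum).im|
        ≤ ∫⁻ x : ℝ, (ENNReal.ofReal |(1 / ((x : ℂ) - r)).im| +
          ENNReal.ofReal |((s.map fun r => 1 / ((x : ℂ) - r)).sum).im|) := by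
          refine lintegral_mono fun x => ?_
          rw [← ENNReal.ofReal_add (abs_nonneg _) (abs_nonneg _), Multiset.map_cons,
            Multiset.sum_cons, Complex.add_im]
          exact ENNReal.ofReal_le_ofReal (abs_add_le _ _)
      _ = (∫⁻ x : ℝ, ENNReal.ofReal |(1 / ((x : ℂ) - r)).im|) +
          ∫⁻ x : ℝ, ENNReal.ofReal |((s.map fun r => 1 / ((x : ℂ) - r)).sum).im| :=
          lintegral_add_left (by fun_prop) _
      _ ≤ ENNReal.ofReal Real.pi + s.card * ENNReal.ofReal Real.pi :=
          add_le_add (lintegral_abs_im_one_div_sub_le r) ih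
      _ = (r ::ₘ s).card * ENNReal.ofReal Real.pi := by
          rw [Multiset.card_cons, Nat.cast_add, Nat.cast_one, add_mul, one_mul, add_comm]

lemma lintegral_abs_im_derivative_div_eval_le {q : Polynomial ℂ}
    (hq : ∀ x : ℝ, q.eval (x : ℂ) ≠ 0) :
    ∫⁻ x : ℝ, ENNReal.ofReal |(q.derivative.eval (x : ℂ) / q.eval (x : ℂ)).im| ≤
      q.natDegree * ENNReal.ofReal Real.pi := by
  simp only [fun x : ℝ => (IsAlgClosed.splits q).eval_derivative_div_eval_of_ne_zero (hq x)]
  refine (lintegral_abs_im_sum_one_div_sub_le q.roots).trans ?_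
  gcongr
  exact q.card_roots'

end PolynomialWinding

section Resolvent

variable {ι : Type*} [Fintype ι] [DecidableEq ι]

lemma det_sub_vecMulVec_sub_vecMulVec {R : Type*} [CommRing R] {A G : Matrix ι ι R}
    (hG : A * G = 1) (p q r t : ι → R) :
    (A - vecMulVec p q - vecMulVec r t).det = A.det *
      ((1 - q ⬝ᵥ G *ᵥ p) * (1 - t ⬝ᵥ G *ᵥ r) - (q ⬝ᵥ G *ᵥ r) * (t ⬝ᵥ G *ᵥ p)) := by
  let U : Matrix ι (Fin 2) R := Matrix.of fun i => ![p i, r i]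
  let V : Matrix (Fin 2) ι R := Matrix.of ![q, t]
  have hUV : U * V = vecMulVec p q + vecMulVec r t := by
    ext i j
    simp [U, V, Matrix.mul_apply, vecMulVec_apply]
  have hfactor : A - vecMulVec p q - vecMulVec r t = A * (1 - G * U * V) := by
    rw [mul_sub, mul_one, ← Matrix.mul_assoc, ← Matrix.mul_assoc, hG, Matrix.one_mul, hUV,
      sub_add_eq_sub_sub]
  have hVGU : ∀ k l, (V * (G * U)) k l = ![q, t] k ⬝ᵥ G *ᵥ ![p, r] l := by
    intro k l
    fin_cases k <;> fin_cases l <;> simp [U, V, Matrix.mul_apply, dotProduct, mulVec]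
  rw [hfactor, det_mul, det_one_sub_mul_comm, det_fin_two]
  simp [hVGU]

lemma hasDerivAt_det {A : ℝ → Matrix ι ι ℂ} {A' : Matrix ι ι ℂ} {t : ℝ}
    (hA : ∀ i j, HasDerivAt (fun t => A t i j) (A' i j) t) :
    HasDerivAt (fun t => (A t).det) ((A t).adjugate * A').trace t := by
  have hterm : HasDerivAt (fun t => (A t).det)
      (∑ σ : Equiv.Perm ι, ((σ.sign : ℤ) : ℂ) *
        ∑ j, (∏ k ∈ Finset.univ.erase j, A t (σ k) k) • A' (σ j) j) t := by
    simp only [det_apply']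
    exact HasDerivAt.fun_sum fun σ _ =>
      (HasDerivAt.fun_finsetProd fun k _ => hA (σ k) k).const_mul _
  refine hterm.congr_deriv ?_
  have hcol : ∀ j, ((A t).adjugate * A') j j =
      ∑ σ : Equiv.Perm ι, ((σ.sign : ℤ) : ℂ) *
        ((∏ k ∈ Finset.univ.erase j, A t (σ k) k) * A' (σ j) j) := fun j => by
    have hdet : ((A t).adjugate * A') j j = ((A t).updateCol j (fun i => A' i j)).det := by
      rw [← cramer_apply, cramer_eq_adjugate_mulVec]; rfl
    rw [hdet, det_apply']
    refine Finset.sum_congr rfl fun σ _ => ?_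
    rw [← Finset.prod_erase_mul _ _ (Finset.mem_univ j), updateCol_self]
    congr 2
    exact Finset.prod_congr rfl fun k hk => updateCol_ne (Finset.ne_of_mem_erase hk)
  simp only [trace, diag_apply, hcol, Finset.mul_sum, smul_eq_mul]
  exact Finset.sum_comm

/-- The resolvent `(z - M)⁻¹`. -/
def resolventMatrix (z : ℂ) (M : Matrix ι ι ℂ) : Matrix ι ι ℂ :=
  (z • (1 : Matrix ι ι ℂ) - M)⁻¹

open scoped ComplexOrder in
lemma det_smul_one_sub_ne_zero {M : Matrix ι ι ℂ} (hM : M.IsHermitian) {z : ℂ}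
    (hz : z.im ≠ 0) : (z • (1 : Matrix ι ι ℂ) - M).det ≠ 0 := by
  intro hdet
  obtain ⟨v, hv, hzv⟩ := exists_mulVec_eq_zero_iff.2 hdet
  rw [sub_mulVec, smul_mulVec, one_mulVec, sub_eq_zero] at hzv
  have him : (z * (star v ⬝ᵥ v)).im = 0 := by
    rw [← smul_eq_mul, ← dotProduct_smul, hzv]
    exact hM.im_star_dotProduct_mulVec_self v
  obtain ⟨hpos, hreal⟩ := Complex.pos_iff.1 (dotProduct_star_self_pos_iff.2 hv)
  rw [Complex.mul_im, ← hreal, mul_zero, zero_add] at him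
  exact mul_ne_zero hz hpos.ne' him

lemma continuous_resolventMatrix {α : Type*} [TopologicalSpace α] {M : α → Matrix ι ι ℂ}
    {z : α → ℂ} (hM : Continuous M) (hherm : ∀ a, (M a).IsHermitian) (hzc : Continuous z)
    (hz : ∀ a, (z a).im ≠ 0) : Continuous fun a => resolventMatrix (z a) (M a) := by
  have hA : Continuous fun a => z a • (1 : Matrix ι ι ℂ) - M a :=
    (hzc.smul continuous_const).sub hM
  simp only [resolventMatrix, Matrix.inv_def, Ring.inverse_eq_inv']
  exact (hA.matrix_det.inv₀ fun a => det_smul_one_sub_ne_zero (hherm a) (hz a)).smul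
    hA.matrix_adjugate

end Resolvent

section Rotation

/-- The cosine in the rational parametrisation `t ↦ ((1 - t²) / (1 + t²), 2t / (1 + t²))` of the
unit circle. -/
def circleCos (t : ℝ) : ℝ := (1 - t ^ 2) / (1 + t ^ 2)

/-- The sine in the rational parametrisation `t ↦ ((1 - t²) / (1 + t²), 2t / (1 + t²))` of the
unit circle. -/
def circleSin (t : ℝ) : ℝ := 2 * t / (1 + t ^ 2)

lemma one_add_sq_ne_zero (t : ℝ) : 1 + t ^ 2 ≠ 0 := by positivity

lemma one_add_ofReal_sq_ne_zero (t : ℝ) : (1 : ℂ) + (t : ℂ) ^ 2 ≠ 0 :=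
  mod_cast one_add_sq_ne_zero t

lemma circleCos_sq_add_circleSin_sq (t : ℝ) : circleCos t ^ 2 + circleSin t ^ 2 = 1 := by
  have := one_add_sq_ne_zero t
  unfold circleCos circleSin
  field_simp
  ring

lemma hasDerivAt_circleCos (t : ℝ) :
    HasDerivAt circleCos (-(2 / (1 + t ^ 2) * circleSin t)) t := by
  have h := one_add_sq_ne_zero t
  refine (((hasDerivAt_pow 2 t).const_sub 1).div ((hasDerivAt_pow 2 t).const_add 1) h).congr_deriv
    ?_
  unfold circleSin
  push_cast
  field_simp
  ring

lemma hasDerivAt_circleSin (t : ℝ) :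
    HasDerivAt circleSin (2 / (1 + t ^ 2) * circleCos t) t := by
  have h := one_add_sq_ne_zero t
  refine (((hasDerivAt_id t).const_mul 2).div ((hasDerivAt_pow 2 t).const_add 1) h).congr_deriv ?_
  unfold circleCos
  push_cast
  simp only [id_eq]
  field_simp
  ring

@[fun_prop]
lemma continuous_circleCos : Continuous circleCos :=
  continuous_iff_continuousAt.2 fun t => (hasDerivAt_circleCos t).continuousAt

@[fun_prop]
lemma continuous_circleSin : Continuous circleSin :=
  continuous_iff_continuousAt.2 fun t => (hasDerivAt_circleSin t).continuousAt

/-- The rational parametrisation of the circular arc from `a` towards `b`: the rotation of the pair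
`(a, b)` takes it to `(arc a b t, arc b (-a) t)`. -/
def arc {V : Type*} [AddCommGroup V] [Module ℝ V] (a b : V) (t : ℝ) : V :=
  circleCos t • a + circleSin t • b

lemma map_arc {V V' : Type*} [AddCommGroup V] [Module ℝ V] [AddCommGroup V'] [Module ℝ V']
    (f : V →ₗ[ℝ] V') (a b : V) (t : ℝ) : f (arc a b t) = arc (f a) (f b) t := by
  simp only [arc, map_add, map_smul]

lemma hasDerivAt_arc {V : Type*} [NormedAddCommGroup V] [NormedSpace ℝ V] (a b : V) (t : ℝ) :
    HasDerivAt (arc a b) ((2 / (1 + t ^ 2)) • arc b (-a) t) t := by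
  refine (((hasDerivAt_circleCos t).smul_const a).add
    ((hasDerivAt_circleSin t).smul_const b)).congr_deriv ?_
  simp only [arc]
  module

lemma eval_derivative_div_eval_of_eval_eq {q : Polynomial ℂ} {D : ℝ → ℂ} {τ : ℂ} {t : ℝ}
    (hq : ∀ x : ℝ, q.eval (x : ℂ) = (1 + (x : ℂ) ^ 2) ^ 2 * D x)
    (hD : HasDerivAt D (D t * τ) t) (hDt : D t ≠ 0) :
    q.derivative.eval (t : ℂ) / q.eval (t : ℂ) = ((4 * t / (1 + t ^ 2) : ℝ) : ℂ) + τ := by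
  have hsq : HasDerivAt (fun x : ℝ => (1 + (x : ℂ) ^ 2) ^ 2)
      (4 * (t : ℂ) * (1 + (t : ℂ) ^ 2)) t := by
    refine (((hasDerivAt_pow 2 (t : ℂ)).const_add 1).pow 2).comp_ofReal.congr_deriv ?_
    push_cast
    ring
  have hq' := (q.hasDerivAt (t : ℂ)).comp_ofReal
  simp only [hq] at hq'
  rw [hq'.unique (hsq.mul hD), hq]
  have := one_add_ofReal_sq_ne_zero t
  push_cast
  field_simp

end Rotation

section SymRankTwo

variable {ι : Type*}

/-- The real linear map `b ↦ u b* + b u*` into the Hermitian matrices. -/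
def symRankTwo (u : ι → ℂ) : (ι → ℂ) →ₗ[ℝ] Matrix ι ι ℂ where
  toFun b := vecMulVec u (star b) + vecMulVec b (star u)
  map_add' a b := by
    rw [star_add, vecMulVec_add, add_vecMulVec]
    abel
  map_smul' r b := by
    rw [star_smul, star_trivial, vecMulVec_smul, smul_vecMulVec, RingHom.id_apply, smul_add]

lemma symRankTwo_apply (u b : ι → ℂ) :
    symRankTwo u b = vecMulVec u (star b) + vecMulVec b (star u) := rfl

lemma isHermitian_symRankTwo (u b : ι → ℂ) : (symRankTwo u b).IsHermitian := by
  rw [symRankTwo_apply, Matrix.IsHermitian, conjTranspose_add, conjTranspose_vecMulVec,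
    conjTranspose_vecMulVec, star_star, star_star, add_comm]

variable [Fintype ι]

lemma trace_mul_symRankTwo (G : Matrix ι ι ℂ) (u b : ι → ℂ) :
    (G * symRankTwo u b).trace = star b ⬝ᵥ G *ᵥ u + star u ⬝ᵥ G *ᵥ b := by
  rw [symRankTwo_apply, Matrix.mul_add, mul_vecMulVec, mul_vecMulVec, trace_add, trace_vecMulVec,
    trace_vecMulVec, dotProduct_comm, dotProduct_comm (G *ᵥ b)]

lemma star_arc_dotProduct (a b v : ι → ℂ) (t : ℝ) :
    star (arc a b t) ⬝ᵥ v = circleCos t * (star a ⬝ᵥ v) + circleSin t * (star b ⬝ᵥ v) := by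
  simp only [arc, star_add, star_smul, star_trivial, add_dotProduct, smul_dotProduct,
    Complex.real_smul]

lemma dotProduct_mulVec_arc (G : Matrix ι ι ℂ) (a b v : ι → ℂ) (t : ℝ) :
    v ⬝ᵥ G *ᵥ arc a b t = circleCos t * (v ⬝ᵥ G *ᵥ a) + circleSin t * (v ⬝ᵥ G *ᵥ b) := by
  simp only [arc, mulVec_add, mulVec_smul, dotProduct_add, dotProduct_smul, Complex.real_smul]

variable [DecidableEq ι]

lemma det_sub_symRankTwo {A G : Matrix ι ι ℂ} (hG : A * G = 1) (u b : ι → ℂ) :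
    (A - symRankTwo u b).det = A.det *
      ((1 - star b ⬝ᵥ G *ᵥ u) * (1 - star u ⬝ᵥ G *ᵥ b) -
        (star b ⬝ᵥ G *ᵥ b) * (star u ⬝ᵥ G *ᵥ u)) := by
  rw [← det_sub_vecMulVec_sub_vecMulVec hG, symRankTwo_apply, sub_add_eq_sub_sub]

lemma exists_polynomial_eval_eq_det_sub_symRankTwo_arc {A : Matrix ι ι ℂ} (hA : A.det ≠ 0)
    (u a b : ι → ℂ) :
    ∃ q : Polynomial ℂ, q.natDegree ≤ 4 ∧ ∀ t : ℝ, q.eval (t : ℂ) =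
      (1 + (t : ℂ) ^ 2) ^ 2 * (A - symRankTwo u (arc a b t)).det := by
  obtain ⟨G, hG⟩ : ∃ G, A * G = 1 := ⟨A⁻¹, mul_nonsing_inv A hA.isUnit⟩
  open Polynomial in
  refine ⟨C A.det * (
    ((1 + X ^ 2) - ((1 - X ^ 2) * C (star a ⬝ᵥ G *ᵥ u) + 2 * X * C (star b ⬝ᵥ G *ᵥ u))) *
    ((1 + X ^ 2) - ((1 - X ^ 2) * C (star u ⬝ᵥ G *ᵥ a) + 2 * X * C (star u ⬝ᵥ G *ᵥ b))) -
    ((1 - X ^ 2) * ((1 - X ^ 2) * C (star a ⬝ᵥ G *ᵥ a) + 2 * X * C (star a ⬝ᵥ G *ᵥ b)) +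
      2 * X * ((1 - X ^ 2) * C (star b ⬝ᵥ G *ᵥ a) + 2 * X * C (star b ⬝ᵥ G *ᵥ b))) *
      C (star u ⬝ᵥ G *ᵥ u)), ?_, fun t => ?_⟩
  · compute_degree
  · have := one_add_ofReal_sq_ne_zero t
    simp only [det_sub_symRankTwo hG, star_arc_dotProduct, dotProduct_mulVec_arc, circleCos,
      circleSin, Polynomial.eval_add, Polynomial.eval_sub, Polynomial.eval_mul,
      Polynomial.eval_one, Polynomial.eval_pow, Polynomial.eval_X, Polynomial.eval_C,
      Polynomial.eval_ofNat]
    push_cast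
    field_simp
    ring

lemma hasDerivAt_det_sub_arc {A M N : Matrix ι ι ℂ} {t : ℝ} (ht : (A - arc M N t).det ≠ 0) :
    HasDerivAt (fun x => (A - arc M N x).det)
      ((A - arc M N t).det *
        -(((2 / (1 + t ^ 2) : ℝ) : ℂ) * ((A - arc M N t)⁻¹ * arc N (-M) t).trace)) t := by
  have hentry : ∀ i j, HasDerivAt (fun x => (A - arc M N x) i j)
      ((-((2 / (1 + t ^ 2) : ℝ) • arc N (-M) t)) i j) t := fun i j =>
    (hasDerivAt_arc (M i j) (N i j) t).const_sub (A i j)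
  refine (hasDerivAt_det hentry).congr_deriv ?_
  rw [Matrix.inv_def, Ring.inverse_eq_inv', Matrix.mul_neg, trace_neg, Matrix.mul_smul, trace_smul,
    Matrix.smul_mul, trace_smul, Complex.real_smul, smul_eq_mul]
  field_simp

lemma lintegral_abs_im_trace_arc_le {Z : Matrix ι ι ℂ} (hZ : Z.IsHermitian) (u a b : ι → ℂ) {z : ℂ}
    (hz : z.im ≠ 0) :
    ∫⁻ t in Set.Icc (0 : ℝ) 1, ENNReal.ofReal
      |(resolventMatrix z (Z + symRankTwo u (arc a b t)) *
        symRankTwo u (arc b (-a) t)).trace.im| ≤ 4 * ENNReal.ofReal Real.pi := by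
  set τ : ℝ → ℂ := fun t =>
    (resolventMatrix z (Z + symRankTwo u (arc a b t)) * symRankTwo u (arc b (-a) t)).trace with hτ
  obtain ⟨q, hdeg, hq⟩ := exists_polynomial_eval_eq_det_sub_symRankTwo_arc
    (det_smul_one_sub_ne_zero hZ hz) u a b
  have hdet : ∀ t, (z • 1 - Z - symRankTwo u (arc a b t)).det ≠ 0 := fun t => by
    rw [← sub_add_eq_sub_sub]
    exact det_smul_one_sub_ne_zero (hZ.add (isHermitian_symRankTwo u _)) hz
  have hlog : ∀ t : ℝ, q.derivative.eval (t : ℂ) / q.eval (t : ℂ) =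
      ((4 * t / (1 + t ^ 2) : ℝ) : ℂ) + -(((2 / (1 + t ^ 2) : ℝ) : ℂ) * τ t) := fun t => by
    refine eval_derivative_div_eval_of_eval_eq hq ?_ (hdet t)
    have h := hdet t
    simp only [hτ, resolventMatrix, sub_add_eq_sub_sub, map_arc, map_neg] at h ⊢
    exact hasDerivAt_det_sub_arc h
  have hle : ∀ t ∈ Set.Icc (0 : ℝ) 1,
      |(τ t).im| ≤ |(q.derivative.eval (t : ℂ) / q.eval (t : ℂ)).im| := fun t ht => by
    have hpos : 0 < 1 + t ^ 2 := by positivity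
    rw [hlog, Complex.add_im, Complex.ofReal_im, zero_add, Complex.neg_im, abs_neg,
      Complex.im_ofReal_mul, abs_mul, abs_of_pos (show 0 < 2 / (1 + t ^ 2) by positivity)]
    refine le_mul_of_one_le_left (abs_nonneg _) ((one_le_div hpos).2 ?_)
    linarith [pow_le_one₀ (n := 2) ht.1 ht.2]
  calc ∫⁻ t in Set.Icc (0 : ℝ) 1, ENNReal.ofReal |(τ t).im|
      ≤ ∫⁻ t in Set.Icc (0 : ℝ) 1,
          ENNReal.ofReal |(q.derivative.eval (t : ℂ) / q.eval (t : ℂ)).im| :=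
        setLIntegral_mono' measurableSet_Icc fun t ht => ENNReal.ofReal_le_ofReal (hle t ht)
    _ ≤ ∫⁻ t : ℝ, ENNReal.ofReal |(q.derivative.eval (t : ℂ) / q.eval (t : ℂ)).im| :=
        setLIntegral_le_lintegral _ _
    _ ≤ q.natDegree * ENNReal.ofReal Real.pi := lintegral_abs_im_derivative_div_eval_le fun t => by
        rw [hq]
        exact mul_ne_zero (pow_ne_zero _ (one_add_ofReal_sq_ne_zero t)) (hdet t)
    _ ≤ 4 * ENNReal.ofReal Real.pi := by gcongr; exact_mod_cast hdeg

end SymRankTwo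

section Wegner

variable {ι V : Type*} [Fintype ι] [DecidableEq ι] [NormedAddCommGroup V] [InnerProductSpace ℝ V]
  [FiniteDimensional ℝ V]

/-- The parameters `v` for which `L v` is of the form `u b* + b u*`. -/
def symRankTwoComap (L : V →ₗ[ℝ] Matrix ι ι ℂ) (u : ι → ℂ) : Submodule ℝ V :=
  (LinearMap.range (symRankTwo u)).comap L

lemma continuous_trace_resolventMatrix_mul {L : V →ₗ[ℝ] Matrix ι ι ℂ}
    (hL : ∀ v, (L v).IsHermitian) (K : Submodule ℝ V) {z : ℂ} (hz : z.im ≠ 0) :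
    Continuous fun p : V × V =>
      (resolventMatrix z (L p.1) * L (K.starProjection p.2)).trace := by
  have hLc : Continuous L := L.continuous_of_finiteDimensional
  have hres : Continuous fun p : V × V => resolventMatrix z (L p.1) :=
    continuous_resolventMatrix (hLc.comp continuous_fst) (fun p => hL p.1) continuous_const
      fun _ => hz
  exact (hres.matrix_mul
    (hLc.comp (K.starProjection.continuous.comp continuous_snd))).matrix_trace

lemma lintegral_trace_rotation_le {L : V →ₗ[ℝ] Matrix ι ι ℂ} (hL : ∀ v, (L v).IsHermitian)
    (u : ι → ℂ) {z : ℂ} (hz : z.im ≠ 0) (w w' : V) :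
    let P := (symRankTwoComap L u).starProjection
    ∫⁻ t in Set.Icc (0 : ℝ) 1, ENNReal.ofReal
      |(resolventMatrix z (L (w + (circleCos t - 1) • P w + circleSin t • P w')) *
        L (P (w' + (circleCos t - 1) • P w' - circleSin t • P w))).trace.im| ≤
      4 * ENNReal.ofReal Real.pi := by
  intro P
  obtain ⟨a, ha⟩ : ∃ a, symRankTwo u a = L (P w) :=
    (symRankTwoComap L u).starProjection_apply_mem w
  obtain ⟨b, hb⟩ : ∃ b, symRankTwo u b = L (P w') :=
    (symRankTwoComap L u).starProjection_apply_mem w'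
  have hPP : ∀ v, P (P v) = P v := fun v =>
    Submodule.starProjection_eq_self_iff.2 (Submodule.starProjection_apply_mem _ _)
  have hposition : ∀ t, L (w + (circleCos t - 1) • P w + circleSin t • P w') =
      L (w - P w) + symRankTwo u (arc a b t) := fun t => by
    rw [map_arc, ha, hb, ← map_arc, ← map_add, arc]
    congr 1
    module
  have hvelocity : ∀ t, L (P (w' + (circleCos t - 1) • P w' - circleSin t • P w)) =
      symRankTwo u (arc b (-a) t) := fun t => by
    rw [map_arc, map_neg, ha, hb, ← map_neg, ← map_arc, arc]
    simp only [map_add, map_sub, map_smul, map_neg, hPP, smul_neg]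
    module
  simp only [hposition, hvelocity]
  exact lintegral_abs_im_trace_arc_le (hL _) u a b hz

variable [MeasurableSpace V] [BorelSpace V]

lemma lintegral_abs_im_trace_resolventMatrix_le {L : V →ₗ[ℝ] Matrix ι ι ℂ}
    (hL : ∀ v, (L v).IsHermitian) (u : ι → ℂ) {z : ℂ} (hz : z.im ≠ 0) :
    ∫⁻ p : V × V, ENNReal.ofReal |(resolventMatrix z (L p.1) *
      L ((symRankTwoComap L u).starProjection p.2)).trace.im|
      ∂(stdGaussian V).prod (stdGaussian V) ≤ 4 * ENNReal.ofReal Real.pi := by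
  set K := symRankTwoComap L u
  set μ := (stdGaussian V).prod (stdGaussian V)
  let Φ : V × V → ENNReal := fun p =>
    ENNReal.ofReal |(resolventMatrix z (L p.1) * L (K.starProjection p.2)).trace.im|
  have hΦ : Continuous Φ := ENNReal.continuous_ofReal.comp
    (Complex.continuous_im.comp (continuous_trace_resolventMatrix_mul hL K hz)).abs
  let rot : ℝ → V × V → V × V := fun t p =>
    (p.1 + (circleCos t - 1) • K.starProjection p.1 + circleSin t • K.starProjection p.2,
      p.2 + (circleCos t - 1) • K.starProjection p.2 - circleSin t • K.starProjection p.1)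
  have hrot : Continuous fun q : ℝ × (V × V) => rot q.1 q.2 := by
    unfold rot
    fun_prop
  calc ∫⁻ p, Φ p ∂μ
      = ∫⁻ _ in Set.Icc (0 : ℝ) 1, ∫⁻ p, Φ p ∂μ := by
        rw [setLIntegral_const, Real.volume_Icc, sub_zero, ENNReal.ofReal_one, mul_one]
    _ = ∫⁻ t in Set.Icc (0 : ℝ) 1, ∫⁻ p, Φ (rot t p) ∂μ :=
        lintegral_congr fun t => ((measurePreserving_rotation_stdGaussian_prod K
          (circleCos_sq_add_circleSin_sq t)).lintegral_comp hΦ.measurable).symm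
    _ = ∫⁻ p, (∫⁻ t in Set.Icc (0 : ℝ) 1, Φ (rot t p)) ∂μ :=
        lintegral_lintegral_swap (hΦ.comp hrot).measurable.aemeasurable
    _ ≤ ∫⁻ _, 4 * ENNReal.ofReal Real.pi ∂μ :=
        lintegral_mono fun p => lintegral_trace_rotation_le hL u hz p.1 p.2
    _ = 4 * ENNReal.ofReal Real.pi := by rw [lintegral_const, measure_univ, mul_one]

end Wegner

section LocalNorms

variable {ι : Type*}

/-- The `ℓ²` norm of the restriction of `v` to `B`. -/
def l2On (B : Finset ι) (v : ι → ℂ) : ℝ := √(∑ i ∈ B, ‖v i‖ ^ 2)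

/-- The Hilbert–Schmidt norm of the `B × B` block of `T`. -/
def hsOn (B : Finset ι) (T : Matrix ι ι ℂ) : ℝ := √(∑ i ∈ B, ∑ j ∈ B, ‖T i j‖ ^ 2)

lemma l2On_nonneg (B : Finset ι) (v : ι → ℂ) : 0 ≤ l2On B v := Real.sqrt_nonneg _

lemma hsOn_nonneg (B : Finset ι) (T : Matrix ι ι ℂ) : 0 ≤ hsOn B T := Real.sqrt_nonneg _

lemma l2On_sq (B : Finset ι) (v : ι → ℂ) : l2On B v ^ 2 = ∑ i ∈ B, ‖v i‖ ^ 2 :=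
  Real.sq_sqrt (by positivity)

lemma hsOn_sq (B : Finset ι) (T : Matrix ι ι ℂ) : hsOn B T ^ 2 = ∑ i ∈ B, l2On B (T i) ^ 2 := by
  simp only [hsOn, l2On_sq]
  exact Real.sq_sqrt (by positivity)

lemma l2On_congr {B : Finset ι} {v w : ι → ℂ} (h : ∀ i ∈ B, v i = w i) : l2On B v = l2On B w := by
  rw [l2On, l2On, Finset.sum_congr rfl fun i hi => by rw [h i hi]]

@[fun_prop]
lemma continuous_l2On (B : Finset ι) : Continuous (l2On B) := by
  unfold l2On
  fun_prop

lemma hsOn_symRankTwo_le (B : Finset ι) (u b : ι → ℂ) :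
    hsOn B (symRankTwo u b) ≤ 2 * l2On B u * l2On B b := by
  have hentry : ∀ i j, ‖symRankTwo u b i j‖ ^ 2 ≤
      2 * (‖u i‖ ^ 2 * ‖b j‖ ^ 2) + 2 * (‖b i‖ ^ 2 * ‖u j‖ ^ 2) := fun i j => by
    have htri : ‖symRankTwo u b i j‖ ≤ ‖u i‖ * ‖b j‖ + ‖b i‖ * ‖u j‖ := by
      rw [symRankTwo_apply, Matrix.add_apply, vecMulVec_apply, vecMulVec_apply]
      refine (norm_add_le _ _).trans_eq ?_
      rw [norm_mul, norm_mul, Pi.star_apply, Pi.star_apply, norm_star, norm_star]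
    calc ‖symRankTwo u b i j‖ ^ 2 ≤ (‖u i‖ * ‖b j‖ + ‖b i‖ * ‖u j‖) ^ 2 := by gcongr
      _ ≤ 2 * (‖u i‖ ^ 2 * ‖b j‖ ^ 2) + 2 * (‖b i‖ ^ 2 * ‖u j‖ ^ 2) := by
        linarith [add_sq_le (a := ‖u i‖ * ‖b j‖) (b := ‖b i‖ * ‖u j‖),
          mul_pow ‖u i‖ ‖b j‖ 2, mul_pow ‖b i‖ ‖u j‖ 2]
  have hu := l2On_nonneg B u
  have hb := l2On_nonneg B b
  refine Real.sqrt_le_iff.2 ⟨by positivity, ?_⟩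
  calc ∑ i ∈ B, ∑ j ∈ B, ‖symRankTwo u b i j‖ ^ 2
      ≤ ∑ i ∈ B, ∑ j ∈ B, (2 * (‖u i‖ ^ 2 * ‖b j‖ ^ 2) + 2 * (‖b i‖ ^ 2 * ‖u j‖ ^ 2)) :=
        Finset.sum_le_sum fun i _ => Finset.sum_le_sum fun j _ => hentry i j
    _ = (2 * l2On B u * l2On B b) ^ 2 := by
        simp only [Finset.sum_add_distrib, ← Finset.mul_sum, ← Finset.sum_mul, mul_pow, l2On_sq]
        ring

lemma norm_sum_sum_mul_mul_le_hsOn_mul (B : Finset ι) (T : Matrix ι ι ℂ) (x : ι → ℂ) :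
    ‖∑ i ∈ B, ∑ j ∈ B, star (x i) * T i j * x j‖ ≤ hsOn B T * l2On B x ^ 2 := by
  calc ‖∑ i ∈ B, ∑ j ∈ B, star (x i) * T i j * x j‖
      ≤ ∑ p ∈ B ×ˢ B, ‖T p.1 p.2‖ * (‖x p.1‖ * ‖x p.2‖) := by
        rw [← Finset.sum_product']
        refine norm_sum_le_of_le _ fun p _ => le_of_eq ?_
        rw [norm_mul, norm_mul, norm_star]
        ring
    _ ≤ √(∑ p ∈ B ×ˢ B, ‖T p.1 p.2‖ ^ 2) * √(∑ p ∈ B ×ˢ B, (‖x p.1‖ * ‖x p.2‖) ^ 2) :=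
        Real.sum_mul_le_sqrt_mul_sqrt _ _ _
    _ = hsOn B T * l2On B x ^ 2 := by
        simp only [mul_pow, Finset.sum_product]
        rw [← Finset.sum_mul_sum, ← l2On_sq, ← sq, Real.sqrt_sq (sq_nonneg _), hsOn]

lemma star_indicator_dotProduct_self [Fintype ι] (B : Finset ι) (v : ι → ℂ) :
    star ((B : Set ι).indicator v) ⬝ᵥ v = ((l2On B v ^ 2 : ℝ) : ℂ) := by
  classical
  simp only [dotProduct, Pi.star_apply, Set.indicator_apply, Finset.mem_coe, apply_ite star,
    star_zero, ite_mul, zero_mul, Finset.sum_ite_mem, Finset.univ_inter, l2On_sq,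
    Complex.ofReal_sum, Complex.ofReal_pow]
  exact Finset.sum_congr rfl fun i _ => Complex.conj_mul' (v i)

end LocalNorms

section WegnerBlock

variable {ι : Type*} [Fintype ι] [DecidableEq ι]

/-- The negative imaginary part `-(G - G*) / (2 i)` of the resolvent `G = (z - M)⁻¹`. -/
def negImResolvent (z : ℂ) (M : Matrix ι ι ℂ) : Matrix ι ι ℂ :=
  (Complex.I / 2) • (resolventMatrix z M - (resolventMatrix z M)ᴴ)

lemma continuous_negImResolvent {α : Type*} [TopologicalSpace α] {M : α → Matrix ι ι ℂ}
    {z : α → ℂ} (hM : Continuous M) (hherm : ∀ a, (M a).IsHermitian) (hzc : Continuous z)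
    (hz : ∀ a, (z a).im ≠ 0) : Continuous fun a => negImResolvent (z a) (M a) := by
  have h := continuous_resolventMatrix hM hherm hzc hz
  exact (h.sub h.matrix_conjTranspose).const_smul (Complex.I / 2)

lemma im_trace_resolventMatrix_mul_symRankTwo (z : ℂ) (M : Matrix ι ι ℂ) (u b : ι → ℂ) :
    (resolventMatrix z M * symRankTwo u b).trace.im =
      -2 * (star b ⬝ᵥ negImResolvent z M *ᵥ u).re := by
  have hadj : star u ⬝ᵥ resolventMatrix z M *ᵥ b =
      star (star b ⬝ᵥ (resolventMatrix z M)ᴴ *ᵥ u) := by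
    rw [← star_dotProduct_star, star_star, star_mulVec, conjTranspose_conjTranspose,
      dotProduct_mulVec, dotProduct_comm]
  rw [trace_mul_symRankTwo, hadj, negImResolvent, smul_mulVec, dotProduct_smul, sub_mulVec,
    dotProduct_sub, smul_eq_mul]
  simp only [Complex.add_im, Complex.star_def, Complex.conj_im, Complex.mul_re, Complex.sub_re,
    Complex.sub_im, Complex.div_ofNat_re, Complex.div_ofNat_im, Complex.I_re, Complex.I_im]
  ring

variable {V : Type*} [NormedAddCommGroup V] [InnerProductSpace ℝ V]

/-- `L` parametrises the Hermitian matrices. -/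
structure IsHermitianParam (L : V →ₗ[ℝ] Matrix ι ι ℂ) : Prop where
  isHermitian : ∀ v, (L v).IsHermitian
  exists_eq : ∀ M : Matrix ι ι ℂ, M.IsHermitian → ∃ v, L v = M

/-- `L` is bounded below by `κ` on the parameters of the matrices supported in `B × B`. For a
Gaussian matrix `L w`, `κ²` is a lower bound on the variances of the entries in this block. -/
def BlockBoundedBelow (L : V →ₗ[ℝ] Matrix ι ι ℂ) (B : Finset ι) (κ : ℝ) : Prop :=
  ∀ v, (∀ i j, L v i j ≠ 0 → i ∈ B ∧ j ∈ B) → κ * ‖v‖ ≤ hsOn B (L v)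

variable [FiniteDimensional ℝ V]

lemma mul_l2On_negImResolvent_mulVec_le_of_inner_eq {L : V →ₗ[ℝ] Matrix ι ι ℂ}
    (hL : IsHermitianParam L) {B : Finset ι} {κ : ℝ} (hκ : BlockBoundedBelow L B κ) (hκ0 : 0 ≤ κ)
    {u : ι → ℂ} (hu : ∀ i ∉ B, u i = 0) {z : ℂ} {M : Matrix ι ι ℂ} {c : V}
    (hc : ∀ v, inner ℝ c v = (resolventMatrix z M *
      L ((symRankTwoComap L u).starProjection v)).trace.im) :
    κ * l2On B (negImResolvent z M *ᵥ u) ≤ ‖c‖ * l2On B u := by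
  set x := negImResolvent z M *ᵥ u
  set b := (B : Set ι).indicator x
  obtain ⟨d, hd⟩ := hL.exists_eq _ (isHermitian_symRankTwo u b)
  have hproj : (symRankTwoComap L u).starProjection d = d :=
    Submodule.starProjection_eq_self_iff.2 ⟨b, hd.symm⟩
  have hinner : inner ℝ c d = -2 * l2On B x ^ 2 := by
    rw [hc, hproj, hd, im_trace_resolventMatrix_mul_symRankTwo, star_indicator_dotProduct_self,
      Complex.ofReal_re]
  have hb : ∀ i ∉ B, b i = 0 := fun i hi => Set.indicator_of_notMem (by simpa using hi) x
  have hsupp : ∀ i j, L d i j ≠ 0 → i ∈ B ∧ j ∈ B := fun i j hij => by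
    contrapose! hij
    rw [hd, symRankTwo_apply, Matrix.add_apply, vecMulVec_apply, vecMulVec_apply]
    by_cases hi : i ∈ B
    · simp [hu j (hij hi), hb j (hij hi)]
    · simp [hu i hi, hb i hi]
  have hd_le : κ * ‖d‖ ≤ 2 * l2On B u * l2On B x := by
    have hbx : l2On B b = l2On B x := l2On_congr fun i hi => Set.indicator_of_mem hi x
    rw [← hbx]
    exact (hκ d hsupp).trans (hd ▸ hsOn_symRankTwo_le B u b)
  have hx_le : 2 * l2On B x ^ 2 ≤ ‖c‖ * ‖d‖ := by
    have h := abs_real_inner_le_norm c d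
    rwa [hinner, neg_mul, abs_neg, abs_of_nonneg (by positivity)] at h
  rcases (l2On_nonneg B x).eq_or_lt with hx | hx
  · rw [← hx, mul_zero]
    exact mul_nonneg (norm_nonneg c) (l2On_nonneg B u)
  · refine le_of_mul_le_mul_right (a := 2 * l2On B x) ?_ (by positivity)
    calc κ * l2On B x * (2 * l2On B x) = κ * (2 * l2On B x ^ 2) := by ring
      _ ≤ κ * (‖c‖ * ‖d‖) := by gcongr
      _ = ‖c‖ * (κ * ‖d‖) := by ring
      _ ≤ ‖c‖ * (2 * l2On B u * l2On B x) := by gcongr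
      _ = ‖c‖ * l2On B u * (2 * l2On B x) := by ring

variable [MeasurableSpace V] [BorelSpace V]

lemma ofReal_l2On_negImResolvent_mulVec_le {L : V →ₗ[ℝ] Matrix ι ι ℂ} (hL : IsHermitianParam L)
    {B : Finset ι} {κ : ℝ} (hκ : BlockBoundedBelow L B κ) (hκ0 : 0 ≤ κ) {u : ι → ℂ}
    (hu : ∀ i ∉ B, u i = 0) (z : ℂ) (M : Matrix ι ι ℂ) :
    ENNReal.ofReal (gaussianAbsMoment * κ * l2On B (negImResolvent z M *ᵥ u)) ≤
      ENNReal.ofReal (l2On B u) * ∫⁻ v, ENNReal.ofReal |(resolventMatrix z M *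
        L ((symRankTwoComap L u).starProjection v)).trace.im| ∂stdGaussian V := by
  let l : V →ₗ[ℝ] ℝ := Complex.imLm ∘ₗ traceLinearMap ι ℝ ℂ ∘ₗ
    LinearMap.mulLeft ℝ (resolventMatrix z M) ∘ₗ L ∘ₗ
      (symRankTwoComap L u).starProjection.toLinearMap
  obtain ⟨c, hc⟩ : ∃ c, ∀ v, inner ℝ c v = l v :=
    ⟨(InnerProductSpace.toDual ℝ V).symm l.toContinuousLinearMap, fun v => by
      rw [InnerProductSpace.toDual_symm_apply, LinearMap.coe_toContinuousLinearMap']⟩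
  change _ ≤ _ * ∫⁻ v, ENNReal.ofReal |l v| ∂stdGaussian V
  simp only [← hc]
  rw [lintegral_abs_inner_stdGaussian, ← ENNReal.ofReal_mul (l2On_nonneg B u)]
  refine ENNReal.ofReal_le_ofReal ?_
  have h := mul_le_mul_of_nonneg_left
    (mul_l2On_negImResolvent_mulVec_le_of_inner_eq hL hκ hκ0 hu hc) gaussianAbsMoment_pos.le
  linarith

lemma lintegral_l2On_negImResolvent_mulVec_le {L : V →ₗ[ℝ] Matrix ι ι ℂ}
    (hL : IsHermitianParam L) {B : Finset ι} {κ : ℝ} (hκ : BlockBoundedBelow L B κ) (hκ0 : 0 ≤ κ)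
    {u : ι → ℂ} (hu : ∀ i ∉ B, u i = 0) {z : ℂ} (hz : z.im ≠ 0) :
    ∫⁻ w, ENNReal.ofReal (gaussianAbsMoment * κ * l2On B (negImResolvent z (L w) *ᵥ u))
      ∂stdGaussian V ≤ ENNReal.ofReal (4 * Real.pi) * ENNReal.ofReal (l2On B u) := by
  set K := symRankTwoComap L u
  have hcont := continuous_trace_resolventMatrix_mul hL.isHermitian K hz
  calc ∫⁻ w, ENNReal.ofReal (gaussianAbsMoment * κ * l2On B (negImResolvent z (L w) *ᵥ u))
        ∂stdGaussian V
      ≤ ∫⁻ w, ENNReal.ofReal (l2On B u) * ∫⁻ v, ENNReal.ofReal |(resolventMatrix z (L w) *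
          L (K.starProjection v)).trace.im| ∂stdGaussian V ∂stdGaussian V :=
        lintegral_mono fun w => ofReal_l2On_negImResolvent_mulVec_le hL hκ hκ0 hu z (L w)
    _ = ENNReal.ofReal (l2On B u) * ∫⁻ p : V × V, ENNReal.ofReal |(resolventMatrix z (L p.1) *
          L (K.starProjection p.2)).trace.im| ∂(stdGaussian V).prod (stdGaussian V) := by
        rw [lintegral_const_mul' _ _ ENNReal.ofReal_ne_top, lintegral_prod]
        exact (ENNReal.continuous_ofReal.comp
          (Complex.continuous_im.comp hcont).abs).measurable.aemeasurable
    _ ≤ ENNReal.ofReal (l2On B u) * (4 * ENNReal.ofReal Real.pi) :=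
        mul_le_mul_right (lintegral_abs_im_trace_resolventMatrix_le hL.isHermitian u hz) _
    _ = ENNReal.ofReal (4 * Real.pi) * ENNReal.ofReal (l2On B u) := by
        rw [mul_comm, ENNReal.ofReal_mul zero_le_four, ENNReal.ofReal_ofNat]

end WegnerBlock

section GaussianVector

lemma lintegral_sq_gaussianReal :
    ∫⁻ x, ENNReal.ofReal (x ^ 2) ∂(gaussianReal 0 1) = 1 := by
  have hint : Integrable (fun x : ℝ => x ^ 2) (gaussianReal 0 1) :=
    (memLp_id_gaussianReal 2).integrable_sq
  have hvar : Var[id; gaussianReal 0 1] = ∫ x, x ^ 2 ∂(gaussianReal 0 1) :=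
    variance_of_integral_eq_zero (by fun_prop) (by simp)
  rw [← ofReal_integral_eq_lintegral_ofReal hint (ae_of_all _ sq_nonneg), ← hvar,
    variance_id_gaussianReal, NNReal.coe_one, ENNReal.ofReal_one]

variable {ι : Type*}

/-- The complex vector `1_B g`. -/
def restrictVec (B : Finset ι) (g : EuclideanSpace ℝ ι) : ι → ℂ :=
  (B : Set ι).indicator fun i => (g i : ℂ)

lemma restrictVec_of_mem {B : Finset ι} {i : ι} (hi : i ∈ B) (g : EuclideanSpace ℝ ι) :
    restrictVec B g i = g i := Set.indicator_of_mem (Finset.mem_coe.2 hi) _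

lemma restrictVec_of_notMem {B : Finset ι} {i : ι} (hi : i ∉ B) (g : EuclideanSpace ℝ ι) :
    restrictVec B g i = 0 := Set.indicator_of_notMem (mt Finset.mem_coe.1 hi) _

@[fun_prop]
lemma continuous_restrictVec (B : Finset ι) : Continuous (restrictVec B) := by
  refine continuous_pi fun i => ?_
  by_cases hi : i ∈ B
  · simp only [restrictVec_of_mem hi]
    fun_prop
  · simp only [restrictVec_of_notMem hi]
    fun_prop

lemma l2On_le_sqrt_sum_re_add_sqrt_sum_im (B : Finset ι) (t : ι → ℂ) :
    l2On B t ≤ √(∑ i ∈ B, (t i).re ^ 2) + √(∑ i ∈ B, (t i).im ^ 2) := by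
  have hsplit : ∑ i ∈ B, ‖t i‖ ^ 2 = ∑ i ∈ B, (t i).re ^ 2 + ∑ i ∈ B, (t i).im ^ 2 := by
    rw [← Finset.sum_add_distrib]
    exact Finset.sum_congr rfl fun i _ => by
      rw [← Complex.normSq_eq_norm_sq, Complex.normSq_apply, sq, sq]
  simp only [l2On, hsplit, Real.sqrt_eq_rpow]
  exact Real.rpow_add_le_add_rpow (by positivity) (by positivity) (by norm_num) (by norm_num)

variable [Fintype ι]

lemma dotProduct_restrictVec (B : Finset ι) (t : ι → ℂ) (g : EuclideanSpace ℝ ι) :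
    t ⬝ᵥ restrictVec B g = ∑ i ∈ B, t i * g i := by
  rw [dotProduct, ← Finset.sum_subset (Finset.subset_univ B) fun i _ hi => by
    rw [restrictVec_of_notMem hi, mul_zero]]
  exact Finset.sum_congr rfl fun i hi => by rw [restrictVec_of_mem hi]

lemma lintegral_l2On_restrictVec_le (B : Finset ι) :
    ∫⁻ g, ENNReal.ofReal (l2On B (restrictVec B g)) ∂stdGaussian (EuclideanSpace ℝ ι) ≤
      ENNReal.ofReal √B.card := by
  classical
  set μ := stdGaussian (EuclideanSpace ℝ ι)
  have hcoord : ∀ i, ∫⁻ g, ENNReal.ofReal ((g i) ^ 2) ∂μ = 1 := fun i => by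
    have hmap := map_inner_stdGaussian (e := EuclideanSpace.single i (1 : ℝ)) (by simp)
    have h := lintegral_map (μ := μ) (f := fun x : ℝ => ENNReal.ofReal (x ^ 2)) (by fun_prop)
      (g := fun w => inner ℝ (EuclideanSpace.single i (1 : ℝ)) w) (by fun_prop)
    rw [hmap, lintegral_sq_gaussianReal] at h
    simpa [EuclideanSpace.inner_single_left] using h.symm
  have hsq : ∫⁻ g, ENNReal.ofReal (l2On B (restrictVec B g)) ^ 2 ∂μ = B.card := by
    have hsum : ∀ g, ENNReal.ofReal (l2On B (restrictVec B g)) ^ 2 =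
        ∑ i ∈ B, ENNReal.ofReal ((g i) ^ 2) := fun g => by
      rw [← ENNReal.ofReal_pow (l2On_nonneg _ _), l2On_sq,
        ← ENNReal.ofReal_sum_of_nonneg fun i _ => sq_nonneg _]
      congr 1
      exact Finset.sum_congr rfl fun i hi => by
        rw [restrictVec_of_mem hi, Complex.norm_real, Real.norm_eq_abs, sq_abs]
    simp only [hsum]
    rw [lintegral_finsetSum _ fun i _ => by fun_prop]
    simp only [hcoord, Finset.sum_const, nsmul_eq_mul, mul_one]
  have hmeas : AEMeasurable (fun g => ENNReal.ofReal (l2On B (restrictVec B g))) μ := by fun_prop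
  have hholder := ENNReal.lintegral_mul_le_Lp_mul_Lq μ Real.HolderConjugate.two_two hmeas
    (aemeasurable_const (b := (1 : ENNReal)))
  simp only [Pi.mul_apply, mul_one, ENNReal.rpow_two, one_pow, lintegral_one, measure_univ,
    ENNReal.one_rpow, hsq] at hholder
  rwa [← ENNReal.ofReal_natCast, ENNReal.ofReal_rpow_of_nonneg (by positivity) (by norm_num),
    ← Real.sqrt_eq_rpow] at hholder

lemma lintegral_abs_sum_mul_stdGaussian (B : Finset ι) (v : ι → ℝ) :
    ∫⁻ g, ENNReal.ofReal |∑ i ∈ B, v i * g i| ∂stdGaussian (EuclideanSpace ℝ ι) =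
      ENNReal.ofReal (gaussianAbsMoment * √(∑ i ∈ B, v i ^ 2)) := by
  classical
  set c : EuclideanSpace ℝ ι := WithLp.toLp 2 fun i => if i ∈ B then v i else 0
  have hinner : ∀ g, inner ℝ c g = ∑ i ∈ B, v i * g i := fun g => by
    simp [c, PiLp.inner_apply, mul_comm]
  have hnorm : ‖c‖ = √(∑ i ∈ B, v i ^ 2) := by
    simp [c, EuclideanSpace.norm_eq, apply_ite abs, ite_pow]
  simp only [← hinner, lintegral_abs_inner_stdGaussian, hnorm]

lemma ofReal_l2On_le_lintegral_norm_dotProduct (B : Finset ι) (t : ι → ℂ) :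
    ENNReal.ofReal (gaussianAbsMoment / 2 * l2On B t) ≤
      ∫⁻ g, ENNReal.ofReal ‖t ⬝ᵥ restrictVec B g‖ ∂stdGaussian (EuclideanSpace ℝ ι) := by
  have hg := gaussianAbsMoment_pos
  set x := √(∑ i ∈ B, (t i).re ^ 2)
  set y := √(∑ i ∈ B, (t i).im ^ 2)
  calc ENNReal.ofReal (gaussianAbsMoment / 2 * l2On B t)
      ≤ ENNReal.ofReal (1 / 2) * (ENNReal.ofReal (gaussianAbsMoment * x) +
          ENNReal.ofReal (gaussianAbsMoment * y)) := by
        rw [← ENNReal.ofReal_add (by positivity) (by positivity),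
          ← ENNReal.ofReal_mul (by norm_num), ← mul_add, ← mul_assoc, one_div_mul_eq_div]
        gcongr
        exact l2On_le_sqrt_sum_re_add_sqrt_sum_im B t
    _ = ∫⁻ g, ENNReal.ofReal (1 / 2) * (ENNReal.ofReal |∑ i ∈ B, (t i).re * g i| +
          ENNReal.ofReal |∑ i ∈ B, (t i).im * g i|) ∂stdGaussian (EuclideanSpace ℝ ι) := by
        rw [lintegral_const_mul' _ _ ENNReal.ofReal_ne_top, lintegral_add_left (by fun_prop),
          lintegral_abs_sum_mul_stdGaussian, lintegral_abs_sum_mul_stdGaussian]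
    _ ≤ ∫⁻ g, ENNReal.ofReal ‖t ⬝ᵥ restrictVec B g‖ ∂stdGaussian (EuclideanSpace ℝ ι) := by
        refine lintegral_mono fun g => ?_
        rw [← ENNReal.ofReal_add (abs_nonneg _) (abs_nonneg _),
          ← ENNReal.ofReal_mul (by norm_num), dotProduct_restrictVec]
        refine ENNReal.ofReal_le_ofReal ?_
        have hre := Complex.abs_re_le_norm (∑ i ∈ B, t i * (g i : ℂ))
        have him := Complex.abs_im_le_norm (∑ i ∈ B, t i * (g i : ℂ))
        simp only [Complex.re_sum, Complex.im_sum, Complex.re_mul_ofReal,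
          Complex.im_mul_ofReal] at hre him
        linarith

lemma sum_l2On_mul_norm_dotProduct_le (B : Finset ι) (T : Matrix ι ι ℂ) (v : ι → ℂ) :
    ∑ i ∈ B, l2On B (T i) * ‖T i ⬝ᵥ v‖ ≤ hsOn B T * l2On B (T *ᵥ v) := by
  have hcs := Real.sum_mul_le_sqrt_mul_sqrt B (fun i => l2On B (T i)) fun i => ‖T i ⬝ᵥ v‖
  rwa [← hsOn_sq, Real.sqrt_sq (hsOn_nonneg B T)] at hcs

lemma ofReal_hsOn_le_lintegral (B : Finset ι) (T : Matrix ι ι ℂ) :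
    ENNReal.ofReal (gaussianAbsMoment / 2 * hsOn B T) ≤
      ∫⁻ g, ENNReal.ofReal (l2On B (T *ᵥ restrictVec B g))
        ∂stdGaussian (EuclideanSpace ℝ ι) := by
  have hg := gaussianAbsMoment_pos
  have ht := fun i => l2On_nonneg B (T i)
  rcases (hsOn_nonneg B T).eq_or_lt with h | hpos
  · rw [← h, mul_zero, ENNReal.ofReal_zero]
    exact zero_le
  have hcont : ∀ i, Continuous fun g => ENNReal.ofReal ‖T i ⬝ᵥ restrictVec B g‖ := fun i =>
    ENNReal.continuous_ofReal.comp
      (continuous_const.dotProduct (continuous_restrictVec B)).norm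
  -- Row `i` is tested against its weight in the unit vector `(l2On B (T i) / hsOn B T)_i`.
  refine (ENNReal.mul_le_mul_iff_right (a := ENNReal.ofReal (hsOn B T)) (by simpa using hpos)
    ENNReal.ofReal_ne_top).1 ?_
  calc ENNReal.ofReal (hsOn B T) * ENNReal.ofReal (gaussianAbsMoment / 2 * hsOn B T)
      = ∑ i ∈ B, ENNReal.ofReal (l2On B (T i)) *
          ENNReal.ofReal (gaussianAbsMoment / 2 * l2On B (T i)) := by
        simp only [← ENNReal.ofReal_mul (ht _), ← ENNReal.ofReal_mul hpos.le, mul_left_comm _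
          (gaussianAbsMoment / 2), ← sq, hsOn_sq, Finset.mul_sum]
        exact ENNReal.ofReal_sum_of_nonneg fun i _ => by positivity
    _ ≤ ∑ i ∈ B, ENNReal.ofReal (l2On B (T i)) * ∫⁻ g, ENNReal.ofReal ‖T i ⬝ᵥ restrictVec B g‖
          ∂stdGaussian (EuclideanSpace ℝ ι) := by
        gcongr with i _
        exact ofReal_l2On_le_lintegral_norm_dotProduct B (T i)
    _ = ∫⁻ g, ∑ i ∈ B, ENNReal.ofReal (l2On B (T i)) * ENNReal.ofReal ‖T i ⬝ᵥ restrictVec B g‖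
          ∂stdGaussian (EuclideanSpace ℝ ι) := by
        rw [lintegral_finsetSum _ fun i _ => (hcont i).measurable.const_mul _]
        simp only [lintegral_const_mul' _ _ ENNReal.ofReal_ne_top]
    _ ≤ ∫⁻ g, ENNReal.ofReal (hsOn B T) * ENNReal.ofReal (l2On B (T *ᵥ restrictVec B g))
          ∂stdGaussian (EuclideanSpace ℝ ι) := by
        refine lintegral_mono fun g => ?_
        simp only [← ENNReal.ofReal_mul (ht _), ← ENNReal.ofReal_mul hpos.le]
        rw [← ENNReal.ofReal_sum_of_nonneg fun i _ => mul_nonneg (ht i) (norm_nonneg _)]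
        exact ENNReal.ofReal_le_ofReal (sum_l2On_mul_norm_dotProduct_le B T _)
    _ = ENNReal.ofReal (hsOn B T) * ∫⁻ g, ENNReal.ofReal (l2On B (T *ᵥ restrictVec B g))
          ∂stdGaussian (EuclideanSpace ℝ ι) :=
        lintegral_const_mul' _ _ ENNReal.ofReal_ne_top

variable [DecidableEq ι] {V : Type*} [NormedAddCommGroup V] [InnerProductSpace ℝ V]
  [FiniteDimensional ℝ V]

lemma continuous_l2On_negImResolvent_mulVec_restrictVec {L : V →ₗ[ℝ] Matrix ι ι ℂ}
    (hL : IsHermitianParam L) (B : Finset ι) {z : ℂ} (hz : z.im ≠ 0) :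
    Continuous fun p : V × EuclideanSpace ℝ ι =>
      l2On B (negImResolvent z (L p.1) *ᵥ restrictVec B p.2) :=
  have hres : Continuous fun p : V × EuclideanSpace ℝ ι => negImResolvent z (L p.1) :=
    continuous_negImResolvent (L.continuous_of_finiteDimensional.comp continuous_fst)
      (fun _ => hL.isHermitian _) continuous_const fun _ => hz
  (continuous_l2On B).comp
    (hres.matrix_mulVec ((continuous_restrictVec B).comp continuous_snd))

variable [MeasurableSpace V] [BorelSpace V]

lemma lintegral_hsOn_negImResolvent_le {L : V →ₗ[ℝ] Matrix ι ι ℂ} (hL : IsHermitianParam L)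
    {B : Finset ι} {κ : ℝ} (hκ : BlockBoundedBelow L B κ) (hκ0 : 0 < κ) {z : ℂ} (hz : z.im ≠ 0) :
    ∫⁻ w, ENNReal.ofReal (hsOn B (negImResolvent z (L w))) ∂stdGaussian V ≤
      ENNReal.ofReal (8 * Real.pi / gaussianAbsMoment ^ 2 * √B.card / κ) := by
  have hg := gaussianAbsMoment_pos
  set ν := stdGaussian (EuclideanSpace ℝ ι)
  let F : V → EuclideanSpace ℝ ι → ENNReal := fun w g => ENNReal.ofReal
    (gaussianAbsMoment * κ * l2On B (negImResolvent z (L w) *ᵥ restrictVec B g))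
  have hF : Continuous (Function.uncurry F) := ENNReal.continuous_ofReal.comp
    ((continuous_l2On_negImResolvent_mulVec_restrictVec hL B hz).const_mul _)
  set C := gaussianAbsMoment ^ 2 * κ / 2 with hC
  have hC0 : 0 < C := by positivity
  have hinner : ∀ w, ENNReal.ofReal C * ENNReal.ofReal (hsOn B (negImResolvent z (L w))) ≤
      ∫⁻ g, F w g ∂ν := fun w => by
    simp only [F, ENNReal.ofReal_mul (show 0 ≤ gaussianAbsMoment * κ by positivity)]
    rw [lintegral_const_mul' _ _ ENNReal.ofReal_ne_top, ← ENNReal.ofReal_mul hC0.le,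
      show C * hsOn B (negImResolvent z (L w)) = gaussianAbsMoment * κ *
        (gaussianAbsMoment / 2 * hsOn B (negImResolvent z (L w))) by rw [hC]; ring,
      ENNReal.ofReal_mul (by positivity)]
    exact mul_le_mul_right (ofReal_hsOn_le_lintegral B _) _
  refine (ENNReal.mul_le_mul_iff_right (a := ENNReal.ofReal C) (by simpa using hC0)
    ENNReal.ofReal_ne_top).1 ?_
  calc ENNReal.ofReal C * ∫⁻ w, ENNReal.ofReal (hsOn B (negImResolvent z (L w))) ∂stdGaussian V
      ≤ ∫⁻ w, ∫⁻ g, F w g ∂ν ∂stdGaussian V := by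
        rw [← lintegral_const_mul' _ _ ENNReal.ofReal_ne_top]
        exact lintegral_mono hinner
    _ = ∫⁻ g, ∫⁻ w, F w g ∂stdGaussian V ∂ν :=
        lintegral_lintegral_swap hF.measurable.aemeasurable
    _ ≤ ∫⁻ g, ENNReal.ofReal (4 * Real.pi) * ENNReal.ofReal (l2On B (restrictVec B g)) ∂ν :=
        lintegral_mono fun g => lintegral_l2On_negImResolvent_mulVec_le hL hκ hκ0.le
          (fun i hi => restrictVec_of_notMem hi g) hz
    _ ≤ ENNReal.ofReal (4 * Real.pi) * ENNReal.ofReal √B.card := by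
        rw [lintegral_const_mul' _ _ ENNReal.ofReal_ne_top]
        exact mul_le_mul_right (lintegral_l2On_restrictVec_le B) _
    _ = ENNReal.ofReal C *
          ENNReal.ofReal (8 * Real.pi / gaussianAbsMoment ^ 2 * √B.card / κ) := by
        rw [← ENNReal.ofReal_mul (by positivity), ← ENNReal.ofReal_mul hC0.le, hC]
        congr 1
        field_simp
        ring

end GaussianVector

section SimpleSpectrum

variable {ι R S : Type*} [Fintype ι] [DecidableEq ι] [CommRing R] [CommRing S]

/-- The determinant of the Hankel matrix of the power traces of `M`. It equals the discriminant of
the characteristic polynomial, but is visibly a polynomial in the entries of `M`. -/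
def momentDisc (M : Matrix ι ι R) : R :=
  (Matrix.of fun i j : Fin (Fintype.card ι) => (M ^ ((i : ℕ) + j)).trace).det

lemma momentDisc_map (f : R →+* S) (M : Matrix ι ι R) :
    momentDisc (M.map f) = f (momentDisc M) := by
  rw [momentDisc, momentDisc, RingHom.map_det]
  congr 1
  ext i j
  rw [RingHom.mapMatrix_apply, map_apply, of_apply, of_apply, AddMonoidHom.map_trace,
    ← RingHom.mapMatrix_apply, ← map_pow]
  rfl

lemma momentDisc_smul (c : R) (M : Matrix ι ι R) :
    momentDisc (c • M) = (∏ i : Fin (Fintype.card ι), c ^ (i : ℕ)) *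
      ((∏ i : Fin (Fintype.card ι), c ^ (i : ℕ)) * momentDisc M) := by
  rw [momentDisc, momentDisc, ← det_mul_column (fun j : Fin (Fintype.card ι) => c ^ (j : ℕ)),
    ← det_mul_row (fun j : Fin (Fintype.card ι) => c ^ (j : ℕ))]
  congr 1
  ext i j
  simp only [of_apply, smul_pow, trace_smul, smul_eq_mul]
  ring

lemma momentDisc_smul_eq_zero_iff [IsDomain R] {c : R} (hc : c ≠ 0) (M : Matrix ι ι R) :
    momentDisc (c • M) = 0 ↔ momentDisc M = 0 := by
  have hprod : ∏ i : Fin (Fintype.card ι), c ^ (i : ℕ) ≠ 0 :=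
    Finset.prod_ne_zero_iff.2 fun i _ => pow_ne_zero _ hc
  rw [momentDisc_smul, mul_eq_zero_iff_left hprod, mul_eq_zero_iff_left hprod]

lemma continuous_momentDisc [TopologicalSpace R] [IsTopologicalRing R] :
    Continuous (momentDisc : Matrix ι ι R → R) :=
  Continuous.matrix_det (continuous_matrix fun i j => (continuous_pow ((i : ℕ) + j)).matrix_trace)

lemma momentDisc_eq_sq {M : Matrix ι ι R} {v : ι → R} (h : ∀ m : ℕ, (M ^ m).trace = ∑ k, v k ^ m) :
    momentDisc M = (vandermonde (v ∘ (Fintype.equivFin ι).symm)).det ^ 2 := by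
  set W := vandermonde (v ∘ (Fintype.equivFin ι).symm)
  have hgram : (Matrix.of fun i j : Fin (Fintype.card ι) => (M ^ ((i : ℕ) + j)).trace) =
      Wᵀ * W := by
    ext i j
    rw [vandermonde_transpose_mul_vandermonde, of_apply, h]
    exact (Equiv.sum_comp (Fintype.equivFin ι).symm fun k => v k ^ ((i : ℕ) + j)).symm
  rw [momentDisc, hgram, det_mul, det_transpose, sq]

lemma momentDisc_ne_zero_iff [IsDomain R] {M : Matrix ι ι R} {v : ι → R}
    (h : ∀ m : ℕ, (M ^ m).trace = ∑ k, v k ^ m) : momentDisc M ≠ 0 ↔ Function.Injective v := by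
  rw [momentDisc_eq_sq h, pow_ne_zero_iff two_ne_zero, det_vandermonde_ne_zero_iff]
  exact (Fintype.equivFin ι).symm.injective_comp v

lemma finite_momentDisc_add_smul_eq_zero {k : Type*} [Field k] (A : Matrix ι ι k)
    {D : Matrix ι ι k} (hD : momentDisc D ≠ 0) : {y : k | momentDisc (A + y • D) = 0}.Finite := by
  let Q : Polynomial k :=
    momentDisc ((Polynomial.X : Polynomial k) • A.map Polynomial.C + D.map Polynomial.C)
  have hQ : ∀ t, Q.eval t = momentDisc (t • A + D) := fun t => by
    rw [← Polynomial.coe_evalRingHom, ← momentDisc_map]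
    congr 1
    ext i j
    simp [mul_comm t]
  have hQ0 : Q ≠ 0 := fun h => hD <| by
    simpa only [h, Polynomial.eval_zero, zero_smul, zero_add] using (hQ 0).symm
  have hfin : ({0} ∪ (fun t => t⁻¹) '' {t | Q.IsRoot t}).Finite :=
    (Set.finite_singleton _).union ((Polynomial.finite_setOfPred_isRoot hQ0).image _)
  refine hfin.subset fun y hy => ?_
  rcases eq_or_ne y 0 with hy0 | hy0
  · exact Or.inl hy0
  have hscale : A + y • D = y • (y⁻¹ • A + D) := by
    rw [smul_add, smul_smul, mul_inv_cancel₀ hy0, one_smul]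
  rw [Set.mem_ofPred_eq, hscale, momentDisc_smul_eq_zero_iff hy0, ← hQ] at hy
  exact Or.inr ⟨y⁻¹, hy, inv_inv y⟩

lemma exists_isHermitian_momentDisc_ne_zero (ι : Type*) [Fintype ι] [DecidableEq ι] :
    ∃ D : Matrix ι ι ℂ, D.IsHermitian ∧ momentDisc D ≠ 0 := by
  let v : ι → ℂ := fun i => ((Fintype.equivFin ι i : ℕ) : ℂ)
  have hinj : Function.Injective v :=
    Nat.cast_injective.comp (Fin.val_injective.comp (Fintype.equivFin ι).injective)
  refine ⟨diagonal v, isHermitian_diagonal_of_self_adjoint v ?_, ?_⟩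
  · exact funext fun i => Complex.conj_natCast _
  · refine (momentDisc_ne_zero_iff fun m => ?_).2 hinj
    rw [diagonal_pow, trace_diagonal]
    rfl

lemma trace_pow_eq_sum_eigenvalues {M : Matrix ι ι ℂ} (hM : M.IsHermitian) (m : ℕ) :
    (M ^ m).trace = ∑ k, (hM.eigenvalues k : ℂ) ^ m := by
  conv_lhs =>
    rw [hM.spectral_theorem, ← map_pow, diagonal_pow, Unitary.conjStarAlgAut_apply,
      trace_mul_cycle, Unitary.coe_star_mul_self, Matrix.one_mul, trace_diagonal]
  rfl

lemma momentDisc_ne_zero_iff_injective_eigenvalues {M : Matrix ι ι ℂ} (hM : M.IsHermitian) :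
    momentDisc M ≠ 0 ↔ Function.Injective hM.eigenvalues := by
  rw [momentDisc_ne_zero_iff (trace_pow_eq_sum_eigenvalues hM)]
  exact Complex.ofReal_injective.of_comp_iff hM.eigenvalues

variable {V : Type*} [NormedAddCommGroup V] [InnerProductSpace ℝ V] [FiniteDimensional ℝ V]
  [MeasurableSpace V] [BorelSpace V]

lemma ae_stdGaussian_of_finite_resample {p : V → Prop} (hp : MeasurableSet {w | p w}) {e : V}
    (he : ‖e‖ = 1) (hfin : ∀ w, {x : ℝ | ¬ p (w + (x - inner ℝ e w) • e)}.Finite) :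
    ∀ᵐ w ∂stdGaussian V, p w := by
  have hres := measurePreserving_resample_stdGaussian he
  have : NullSingletonClass (gaussianReal 0 1) := nullSingletonClass_gaussianReal one_ne_zero
  rw [← hres.map_eq, ae_map_iff hres.measurable.aemeasurable hp,
    Measure.ae_prod_iff_ae_ae (p := fun x => p (x.1 + (x.2 - inner ℝ e x.1) • e))
      (hres.measurable hp)]
  exact ae_of_all _ fun w => (hfin w).measure_zero _

lemma ae_momentDisc_ne_zero_of_norm_eq_one (L : V →ₗ[ℝ] Matrix ι ι ℂ) {e : V} (he : ‖e‖ = 1)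
    (hLe : momentDisc (L e) ≠ 0) : ∀ᵐ w ∂stdGaussian V, momentDisc (L w) ≠ 0 := by
  have hcont : Continuous fun w => momentDisc (L w) :=
    continuous_momentDisc.comp L.continuous_of_finiteDimensional
  refine ae_stdGaussian_of_finite_resample
    (isOpen_ne_fun hcont continuous_const).measurableSet he fun w => ?_
  have hline : ∀ x : ℝ, L (w + (x - inner ℝ e w) • e) =
      L w - inner ℝ e w • L e + (x : ℂ) • L e := fun x => by
    rw [Complex.coe_smul, map_add, map_smul, sub_smul]
    abel
  simp only [not_not, hline]
  exact (finite_momentDisc_add_smul_eq_zero _ hLe).preimage Complex.ofReal_injective.injOn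

lemma ae_injective_eigenvalues {L : V →ₗ[ℝ] Matrix ι ι ℂ} (hL : IsHermitianParam L) :
    ∀ᵐ w ∂stdGaussian V, Function.Injective (hL.isHermitian w).eigenvalues := by
  rcases subsingleton_or_nontrivial ι with hι | hι
  · exact ae_of_all _ fun w => Function.injective_of_subsingleton _
  obtain ⟨D, hD, hD0⟩ := exists_isHermitian_momentDisc_ne_zero ι
  obtain ⟨u, rfl⟩ := hL.exists_eq D hD
  have hu : u ≠ 0 := by
    rintro rfl
    rw [momentDisc_ne_zero_iff_injective_eigenvalues hD,
      hD.eigenvalues_eq_zero_iff.2 (map_zero L)] at hD0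
    exact Function.not_injective_const hD0
  have he : momentDisc (L (‖u‖⁻¹ • u)) ≠ 0 := by
    rw [map_smul, ← Complex.coe_smul, Ne, momentDisc_smul_eq_zero_iff (by simpa using hu)]
    exact hD0
  filter_upwards [ae_momentDisc_ne_zero_of_norm_eq_one L
    (norm_smul_inv_norm (𝕜 := ℝ) hu) he] with w hw
  exact (momentDisc_ne_zero_iff_injective_eigenvalues _).1 hw

end SimpleSpectrum

section SpectralResolvent

/-- The unnormalised Cauchy kernel. -/
def lorentzian (ε x : ℝ) : ℝ := ε / (x ^ 2 + ε ^ 2)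

lemma lorentzian_nonneg {ε : ℝ} (hε : 0 ≤ ε) (x : ℝ) : 0 ≤ lorentzian ε x := by
  unfold lorentzian
  positivity

lemma lorentzian_le_of_abs_sub_le {ε x y : ℝ} (hε : 0 ≤ ε) (hxy : x ≠ y) (h : |x - y| ≤ 2 * |x|) :
    lorentzian ε x ≤ 4 / (x - y) ^ 2 * ε := by
  have hd : 0 < (x - y) ^ 2 := by positivity [sub_ne_zero.2 hxy]
  have hsq : (x - y) ^ 2 ≤ 4 * x ^ 2 := by
    have hpow := pow_le_pow_left₀ (abs_nonneg _) h 2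
    rw [mul_pow, sq_abs, sq_abs] at hpow
    linarith
  have : 0 < x ^ 2 := by linarith
  calc lorentzian ε x ≤ ε / ((x - y) ^ 2 / 4) := by
        unfold lorentzian
        gcongr
        linarith [sq_nonneg ε]
    _ = 4 / (x - y) ^ 2 * ε := by field_simp

/-- The complex energy `E + i ε`. -/
def spectralParam (E ε : ℝ) : ℂ := E + ε * Complex.I

@[simp]
lemma spectralParam_im (E ε : ℝ) : (spectralParam E ε).im = ε := by simp [spectralParam]

lemma lorentzian_eq_inv_spectralParam (ε E x : ℝ) :
    (lorentzian ε (E - x) : ℂ) =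
      Complex.I / 2 * ((spectralParam E ε - x)⁻¹ - star (spectralParam E ε - x)⁻¹) := by
  set ζ := spectralParam E ε - x with hζ
  have hre : ζ.re = E - x := by simp [hζ, spectralParam]
  have him : ζ.im = ε := by simp [hζ]
  have hsub : ζ⁻¹ - star ζ⁻¹ = ((2 * ζ⁻¹.im : ℝ) : ℂ) * Complex.I := Complex.sub_conj _
  have hI : Complex.I / 2 * (((2 * ζ⁻¹.im : ℝ) : ℂ) * Complex.I) = ((-ζ⁻¹.im : ℝ) : ℂ) := by
    push_cast
    linear_combination (ζ⁻¹.im : ℂ) * Complex.I_sq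
  rw [hsub, hI, Complex.inv_im, Complex.normSq_apply, hre, him, lorentzian, neg_div, neg_neg,
    sq, sq]

variable {ι : Type*} [Fintype ι] [DecidableEq ι]

lemma resolventMatrix_eq_conj_diagonal {M : Matrix ι ι ℂ} (hM : M.IsHermitian) {z : ℂ}
    (hz : z.im ≠ 0) :
    resolventMatrix z M = Unitary.conjStarAlgAut ℂ _ hM.eigenvectorUnitary
      (diagonal fun k => (z - hM.eigenvalues k)⁻¹) := by
  have hne : ∀ k, z - hM.eigenvalues k ≠ 0 := fun k hk => hz <| by
    simpa using congrArg Complex.im hk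
  have hshift : z • (1 : Matrix ι ι ℂ) - M = Unitary.conjStarAlgAut ℂ _ hM.eigenvectorUnitary
      (diagonal fun k => z - (hM.eigenvalues k : ℂ)) := by
    conv_lhs => rw [hM.spectral_theorem,
      ← map_one (Unitary.conjStarAlgAut ℂ _ hM.eigenvectorUnitary),
      ← map_smul, ← map_sub, smul_one_eq_diagonal, diagonal_sub]
    rfl
  refine inv_eq_right_inv ?_
  simp only [hshift, ← map_mul, diagonal_mul_diagonal, mul_inv_cancel₀ (hne _), diagonal_one,
    map_one]

lemma negImResolvent_eq_conj_diagonal {M : Matrix ι ι ℂ} (hM : M.IsHermitian) (E : ℝ) {ε : ℝ}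
    (hε : ε ≠ 0) :
    negImResolvent (spectralParam E ε) M = Unitary.conjStarAlgAut ℂ _ hM.eigenvectorUnitary
      (diagonal fun k => (lorentzian ε (E - hM.eigenvalues k) : ℂ)) := by
  rw [negImResolvent, resolventMatrix_eq_conj_diagonal hM (by simpa using hε),
    ← star_eq_conjTranspose, ← map_star, ← map_sub, ← map_smul, star_eq_conjTranspose,
    diagonal_conjTranspose, diagonal_sub, ← diagonal_smul]
  simp only [lorentzian_eq_inv_spectralParam]
  rfl

lemma negImResolvent_apply {M : Matrix ι ι ℂ} (hM : M.IsHermitian) (E : ℝ) {ε : ℝ} (hε : ε ≠ 0)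
    (i j : ι) :
    negImResolvent (spectralParam E ε) M i j = ∑ k, (lorentzian ε (E - hM.eigenvalues k) : ℂ) *
      (hM.eigenvectorUnitary.1 i k * star (hM.eigenvectorUnitary.1 j k)) := by
  rw [negImResolvent_eq_conj_diagonal hM E hε, Unitary.conjStarAlgAut_apply, mul_apply]
  refine Finset.sum_congr rfl fun k _ => ?_
  rw [mul_diagonal, star_apply]
  ring

lemma re_negImResolvent_diag {M : Matrix ι ι ℂ} (hM : M.IsHermitian) (E : ℝ) {ε : ℝ} (hε : ε ≠ 0)
    (i : ι) :
    (negImResolvent (spectralParam E ε) M i i).re =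
      ∑ k, lorentzian ε (E - hM.eigenvalues k) * ‖hM.eigenvectorUnitary.1 i k‖ ^ 2 := by
  rw [negImResolvent_apply hM E hε, Complex.re_sum]
  refine Finset.sum_congr rfl fun k _ => ?_
  rw [Complex.star_def, Complex.mul_conj', Complex.re_ofReal_mul, ← Complex.ofReal_pow,
    Complex.ofReal_re]

lemma sum_norm_sq_row_eq_one {U : Matrix ι ι ℂ} (hU : U ∈ unitaryGroup ι ℂ) (i : ι) :
    ∑ k, ‖U i k‖ ^ 2 = 1 := by
  have h := congrFun₂ (mem_unitaryGroup_iff.1 hU) i i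
  simp only [mul_apply, one_apply_eq, star_apply, Complex.star_def, Complex.mul_conj'] at h
  exact_mod_cast h

lemma norm_resolventMatrix_diag_le {M : Matrix ι ι ℂ} (hM : M.IsHermitian) {z : ℂ} (hz : z.im ≠ 0)
    (i : ι) : ‖resolventMatrix z M i i‖ ≤ |z.im|⁻¹ := by
  set U := hM.eigenvectorUnitary.1
  have hinv : ∀ k, ‖(z - hM.eigenvalues k)⁻¹‖ ≤ |z.im|⁻¹ := fun k => by
    rw [norm_inv]
    refine inv_anti₀ (abs_pos.2 hz) ?_
    simpa using Complex.abs_im_le_norm (z - hM.eigenvalues k)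
  calc ‖resolventMatrix z M i i‖ = ‖∑ k, U i k * (z - hM.eigenvalues k)⁻¹ * star (U i k)‖ := by
        rw [resolventMatrix_eq_conj_diagonal hM hz, Unitary.conjStarAlgAut_apply, mul_apply]
        simp only [mul_diagonal, star_apply, U]
    _ ≤ ∑ k, ‖U i k‖ ^ 2 * |z.im|⁻¹ := by
        refine (norm_sum_le _ _).trans (Finset.sum_le_sum fun k _ => ?_)
        rw [norm_mul, norm_mul, norm_star, mul_right_comm, ← sq]
        exact mul_le_mul_of_nonneg_left (hinv k) (sq_nonneg _)
    _ = |z.im|⁻¹ := by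
        rw [← Finset.sum_mul, sum_norm_sq_row_eq_one hM.eigenvectorUnitary.2, one_mul]

lemma re_negImResolvent_diag_eq_neg_im (z : ℂ) (M : Matrix ι ι ℂ) (i : ι) :
    (negImResolvent z M i i).re = -(resolventMatrix z M i i).im := by
  simp only [negImResolvent, Matrix.smul_apply, Matrix.sub_apply, conjTranspose_apply,
    smul_eq_mul, Complex.star_def, Complex.sub_conj]
  generalize resolventMatrix z M i i = g
  simp

lemma sum_norm_sq_col_le_one {U : Matrix ι ι ℂ} (hU : U ∈ unitaryGroup ι ℂ) (B : Finset ι)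
    (k : ι) : ∑ i ∈ B, ‖U i k‖ ^ 2 ≤ 1 := by
  have h := sum_norm_sq_row_eq_one (transpose_mem_unitaryGroup_iff.2 hU) k
  rw [← h]
  exact Finset.sum_le_sum_of_subset_of_nonneg (Finset.subset_univ B) fun _ _ _ => by positivity

lemma sum_sum_star_mul_negImResolvent_mul {M : Matrix ι ι ℂ} (hM : M.IsHermitian) (E : ℝ) {ε : ℝ}
    (hε : ε ≠ 0) (B : Finset ι) (x : ι → ℂ) :
    ∑ i ∈ B, ∑ j ∈ B, star (x i) * negImResolvent (spectralParam E ε) M i j * x j =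
      ((∑ k, lorentzian ε (E - hM.eigenvalues k) *
        ‖∑ i ∈ B, star (x i) * hM.eigenvectorUnitary.1 i k‖ ^ 2 : ℝ) : ℂ) := by
  push_cast
  simp only [← Complex.mul_conj', map_sum, Finset.mul_sum, negImResolvent_apply hM E hε,
    Finset.sum_mul]
  rw [Finset.sum_comm (s := B), Finset.sum_comm (s := Finset.univ)]
  refine Finset.sum_congr rfl fun j _ => ?_
  rw [Finset.sum_comm (s := Finset.univ)]
  refine Finset.sum_congr rfl fun i _ => Finset.sum_congr rfl fun k _ => ?_
  simp only [map_mul, Complex.star_def, Complex.conj_conj]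
  ring

lemma lorentzian_mul_le_hsOn_negImResolvent {M : Matrix ι ι ℂ} (hM : M.IsHermitian)
    (B : Finset ι) (E : ℝ) {ε : ℝ} (hε : 0 < ε) (k : ι) :
    lorentzian ε (E - hM.eigenvalues k) * ∑ i ∈ B, ‖hM.eigenvectorUnitary.1 i k‖ ^ 2 ≤
      hsOn B (negImResolvent (spectralParam E ε) M) := by
  set x : ι → ℂ := fun i => hM.eigenvectorUnitary.1 i k with hx
  set T := negImResolvent (spectralParam E ε) M
  set c : ι → ℂ := fun l => ∑ i ∈ B, star (x i) * hM.eigenvectorUnitary.1 i l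
  have hterm : ∀ l, 0 ≤ lorentzian ε (E - hM.eigenvalues l) * ‖c l‖ ^ 2 := fun l =>
    mul_nonneg (lorentzian_nonneg hε.le _) (sq_nonneg _)
  have hck : ‖c k‖ = l2On B x ^ 2 := by
    have h : c k = ((l2On B x ^ 2 : ℝ) : ℂ) := by
      simp only [c, hx, l2On_sq, Complex.star_def, Complex.conj_mul', Complex.ofReal_sum,
        Complex.ofReal_pow]
    rw [h, Complex.norm_real, Real.norm_of_nonneg (sq_nonneg _)]
  have hbound : lorentzian ε (E - hM.eigenvalues k) * l2On B x ^ 2 * l2On B x ^ 2 ≤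
      hsOn B T * l2On B x ^ 2 := by
    calc lorentzian ε (E - hM.eigenvalues k) * l2On B x ^ 2 * l2On B x ^ 2
        = lorentzian ε (E - hM.eigenvalues k) * ‖c k‖ ^ 2 := by rw [hck, mul_assoc, ← sq]
      _ ≤ ∑ l, lorentzian ε (E - hM.eigenvalues l) * ‖c l‖ ^ 2 :=
          Finset.single_le_sum (fun l _ => hterm l) (Finset.mem_univ k)
      _ = ‖∑ i ∈ B, ∑ j ∈ B, star (x i) * T i j * x j‖ := by
          rw [sum_sum_star_mul_negImResolvent_mul hM E hε.ne', Complex.norm_real,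
            Real.norm_of_nonneg (Finset.sum_nonneg fun l _ => hterm l)]
      _ ≤ hsOn B T * l2On B x ^ 2 := norm_sum_sum_mul_mul_le_hsOn_mul B T x
  rw [← l2On_sq B x]
  rcases (sq_nonneg (l2On B x)).eq_or_lt with h | h
  · rw [← h, mul_zero]
    exact hsOn_nonneg B T
  · exact le_of_mul_le_mul_right hbound h

lemma sum_re_negImResolvent_le_hsOn_add {M : Matrix ι ι ℂ} (hM : M.IsHermitian)
    (hinj : Function.Injective hM.eigenvalues) (B : Finset ι) (E : ℝ) {ε : ℝ} (hε : 0 < ε) :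
    ∑ i ∈ B, (negImResolvent (spectralParam E ε) M i i).re ≤
      hsOn B (negImResolvent (spectralParam E ε) M) +
        (∑ k, ∑ l, 4 / (hM.eigenvalues k - hM.eigenvalues l) ^ 2) * ε := by
  rcases isEmpty_or_nonempty ι with hι | hι
  · rw [Finset.eq_empty_of_isEmpty B]
    simp [hsOn]
  set U := hM.eigenvectorUnitary.1
  set μ := hM.eigenvalues
  obtain ⟨k₀, -, hk₀⟩ := Finset.exists_min_image Finset.univ (fun k => |E - μ k|)
    Finset.univ_nonempty
  have htrace : ∑ i ∈ B, (negImResolvent (spectralParam E ε) M i i).re =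
      ∑ k, lorentzian ε (E - μ k) * ∑ i ∈ B, ‖U i k‖ ^ 2 := by
    simp only [re_negImResolvent_diag hM E hε.ne', Finset.mul_sum]
    exact Finset.sum_comm
  have hfar : ∀ k ≠ k₀, lorentzian ε (E - μ k) * ∑ i ∈ B, ‖U i k‖ ^ 2 ≤
      (∑ l, 4 / (μ k - μ l) ^ 2) * ε := fun k hk => by
    have hdist : |(E - μ k) - (E - μ k₀)| ≤ 2 * |E - μ k| := by
      linarith [abs_sub (E - μ k) (E - μ k₀), hk₀ k (Finset.mem_univ k)]
    calc lorentzian ε (E - μ k) * ∑ i ∈ B, ‖U i k‖ ^ 2 ≤ lorentzian ε (E - μ k) :=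
          mul_le_of_le_one_right (lorentzian_nonneg hε.le _)
            (sum_norm_sq_col_le_one hM.eigenvectorUnitary.2 B k)
      _ ≤ 4 / ((E - μ k) - (E - μ k₀)) ^ 2 * ε :=
          lorentzian_le_of_abs_sub_le hε.le (fun h => hk (hinj (sub_right_injective h))) hdist
      _ = 4 / (μ k - μ k₀) ^ 2 * ε := by
          rw [sub_sub_sub_cancel_left, ← neg_sub (μ k), neg_sq]
      _ ≤ (∑ l, 4 / (μ k - μ l) ^ 2) * ε := by
          gcongr
          exact Finset.single_le_sum (f := fun l => 4 / (μ k - μ l) ^ 2)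
            (fun l _ => by positivity) (Finset.mem_univ k₀)
  rw [htrace, ← Finset.add_sum_erase _ _ (Finset.mem_univ k₀), Finset.sum_mul]
  refine add_le_add (lorentzian_mul_le_hsOn_negImResolvent hM B E hε k₀) ?_
  exact (Finset.sum_le_sum fun k hk => hfar k (Finset.ne_of_mem_erase hk)).trans
    (Finset.sum_le_sum_of_subset_of_nonneg (Finset.erase_subset _ _) fun k _ _ => by positivity)

end SpectralResolvent

section GaussianLorentzian

lemma lorentzian_le_inv {ε : ℝ} (hε : 0 < ε) (x : ℝ) : lorentzian ε x ≤ ε⁻¹ := by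
  unfold lorentzian
  rw [inv_eq_one_div, div_le_div_iff₀ (by positivity) hε]
  linarith [sq_nonneg x]

lemma continuous_lorentzian {ε : ℝ} (hε : 0 < ε) : Continuous (lorentzian ε) :=
  continuous_const.div (by fun_prop) fun x => by positivity

lemma integrable_lorentzian {α : Type*} [MeasurableSpace α] (μ : Measure α)
    [IsFiniteMeasure μ] {ε : ℝ} (hε : 0 < ε) {f : α → ℝ} (hf : Measurable f) :
    Integrable (fun x => lorentzian ε (f x)) μ := by
  refine Integrable.of_bound (C := ε⁻¹)
    ((continuous_lorentzian hε).measurable.comp hf).aestronglyMeasurable (ae_of_all _ fun x => ?_)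
  rw [Real.norm_of_nonneg (lorentzian_nonneg hε.le _)]
  exact lorentzian_le_inv hε _

lemma gaussianPDFReal_zero_one_le_one (x : ℝ) : gaussianPDFReal 0 1 x ≤ 1 := by
  have hnorm : (√(2 * Real.pi * ((1 : NNReal) : ℝ)))⁻¹ ≤ 1 := by
    refine inv_le_one_of_one_le₀ (Real.one_le_sqrt.2 ?_)
    push_cast
    linarith [Real.pi_gt_three]
  have hexp : Real.exp (-(x - 0) ^ 2 / (2 * ((1 : NNReal) : ℝ))) ≤ 1 := by
    refine Real.exp_le_one_iff.2 ?_
    push_cast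
    linarith [sq_nonneg (x - 0)]
  exact mul_le_one₀ hnorm (Real.exp_pos _).le hexp

lemma continuous_gaussianPDFReal_zero_one : Continuous (gaussianPDFReal 0 1) := by
  unfold gaussianPDFReal
  fun_prop

lemma norm_gaussianPDFReal_mul_inv_le (x t : ℝ) :
    ‖gaussianPDFReal 0 1 x * (1 + t ^ 2)⁻¹‖ ≤ (1 + t ^ 2)⁻¹ := by
  rw [Real.norm_of_nonneg (mul_nonneg (gaussianPDFReal_nonneg _ _ _) (by positivity))]
  exact mul_le_of_le_one_left (by positivity) (gaussianPDFReal_zero_one_le_one _)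

lemma integrable_gaussianPDFReal_mul_inv (c a : ℝ) :
    Integrable fun t : ℝ => gaussianPDFReal 0 1 (c - a * t) * (1 + t ^ 2)⁻¹ :=
  integrable_inv_one_add_sq.mono'
    ((continuous_gaussianPDFReal_zero_one.measurable.comp (by fun_prop)).mul
      (by fun_prop)).aestronglyMeasurable
    (ae_of_all _ fun _ => norm_gaussianPDFReal_mul_inv_le _ _)

lemma integral_lorentzian_gaussianReal {ε κ : ℝ} (hε : 0 < ε) (hκ : 0 < κ) (y : ℝ) :
    ∫ x, lorentzian ε (y - κ * x) ∂(gaussianReal 0 1) =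
      κ⁻¹ * ∫ t, gaussianPDFReal 0 1 (y / κ - ε / κ * t) * (1 + t ^ 2)⁻¹ := by
  set f : ℝ → ℝ := fun x => gaussianPDFReal 0 1 x * lorentzian ε (y - κ * x) with hf
  have hscale : ∀ t, gaussianPDFReal 0 1 (y / κ - ε / κ * t) * (1 + t ^ 2)⁻¹ =
      ε * f (y / κ - ε / κ * t) := by
    intro t
    have harg : y - κ * (y / κ - ε / κ * t) = ε * t := by
      field_simp
      ring
    have hlor : lorentzian ε (ε * t) = ε⁻¹ * (1 + t ^ 2)⁻¹ := by
      have hden : (ε * t) ^ 2 + ε ^ 2 = ε ^ 2 * (1 + t ^ 2) := by ring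
      rw [lorentzian, hden]
      field_simp
    rw [hf]
    simp only [harg, hlor]
    field_simp
  have hsubst : ∫ t, f (y / κ - ε / κ * t) = κ / ε * ∫ x, f x := by
    rw [Measure.integral_comp_mul_left (fun t => f (y / κ - t)) (ε / κ),
      integral_sub_left_eq_self f volume (y / κ), inv_div, abs_of_pos (by positivity), smul_eq_mul]
  simp only [integral_gaussianReal_eq_integral_smul one_ne_zero, smul_eq_mul, hscale]
  rw [integral_const_mul, hsubst]
  field_simp
  rfl

lemma integral_lorentzian_gaussianReal_le {ε κ : ℝ} (hε : 0 < ε) (hκ : 0 < κ) (y : ℝ) :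
    ∫ x, lorentzian ε (y - κ * x) ∂(gaussianReal 0 1) ≤ Real.pi / κ := by
  rw [integral_lorentzian_gaussianReal hε hκ, div_eq_inv_mul Real.pi,
    ← integral_univ_inv_one_add_sq]
  refine mul_le_mul_of_nonneg_left ?_ (inv_nonneg.2 hκ.le)
  exact integral_mono (integrable_gaussianPDFReal_mul_inv _ _) integrable_inv_one_add_sq
    fun _ => (le_abs_self _).trans (norm_gaussianPDFReal_mul_inv_le _ _)

lemma exists_tendsto_integral_lorentzian_gaussianReal {κ : ℝ} (hκ : 0 < κ) (y : ℝ) :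
    ∃ ℓ : ℝ, Tendsto (fun ε : ℝ => ∫ x, lorentzian ε (y - κ * x) ∂(gaussianReal 0 1)) (𝓝[>] 0)
      (𝓝 ℓ) := by
  have hlim : Tendsto (fun ε : ℝ => ∫ t, gaussianPDFReal 0 1 (y / κ - ε / κ * t) * (1 + t ^ 2)⁻¹)
      (𝓝[>] 0) (𝓝 (∫ t, gaussianPDFReal 0 1 (y / κ - 0 / κ * t) * (1 + t ^ 2)⁻¹)) := by
    refine tendsto_integral_filter_of_dominated_convergence (fun t => (1 + t ^ 2)⁻¹)
      (Eventually.of_forall fun _ => (integrable_gaussianPDFReal_mul_inv _ _).aestronglyMeasurable)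
      (Eventually.of_forall fun _ => ae_of_all _ fun _ => norm_gaussianPDFReal_mul_inv_le _ _)
      integrable_inv_one_add_sq (ae_of_all _ fun t => ?_)
    have hcont : Continuous fun ε : ℝ =>
        gaussianPDFReal 0 1 (y / κ - ε / κ * t) * (1 + t ^ 2)⁻¹ :=
      (continuous_gaussianPDFReal_zero_one.comp (by fun_prop)).mul continuous_const
    exact (hcont.tendsto 0).mono_left nhdsWithin_le_nhds
  refine ⟨_, (hlim.const_mul κ⁻¹).congr' ?_⟩
  filter_upwards [self_mem_nhdsWithin] with ε hε
  rw [integral_lorentzian_gaussianReal hε hκ]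

end GaussianLorentzian

section ResamplingLimit

variable {V : Type*} [NormedAddCommGroup V] [InnerProductSpace ℝ V] [FiniteDimensional ℝ V]
  [MeasurableSpace V] [BorelSpace V]

lemma integral_stdGaussian_eq_integral_resample {e : V} (he : ‖e‖ = 1) {f : V → ℝ}
    (hf : Integrable f (stdGaussian V)) :
    ∫ w, f w ∂stdGaussian V =
      ∫ w, ∫ x, f (w + (x - inner ℝ e w) • e) ∂gaussianReal 0 1 ∂stdGaussian V := by
  have hres := measurePreserving_resample_stdGaussian he
  rw [← hres.map_eq] at hf
  conv_lhs => rw [← hres.map_eq]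
  rw [integral_map hres.measurable.aemeasurable hf.aestronglyMeasurable]
  exact integral_prod _ (hf.comp_measurable hres.measurable)

lemma tendsto_integral_stdGaussian_of_resample {e : V} (he : ‖e‖ = 1) {f : ℝ → V → ℝ} {g : V → ℝ}
    {C : ℝ} (hf : ∀ ε > 0, Integrable (f ε) (stdGaussian V))
    (hC : ∀ ε > 0, ∀ w, ‖∫ x, f ε (w + (x - inner ℝ e w) • e) ∂gaussianReal 0 1‖ ≤ C)
    (hlim : ∀ᵐ w ∂stdGaussian V,
      Tendsto (fun ε => ∫ x, f ε (w + (x - inner ℝ e w) • e) ∂gaussianReal 0 1) (𝓝[>] 0)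
        (𝓝 (g w))) :
    Tendsto (fun ε => ∫ w, f ε w ∂stdGaussian V) (𝓝[>] 0) (𝓝 (∫ w, g w ∂stdGaussian V)) := by
  have hres := measurePreserving_resample_stdGaussian he
  have hdom : Tendsto (fun ε => ∫ w, ∫ x, f ε (w + (x - inner ℝ e w) • e) ∂gaussianReal 0 1
      ∂stdGaussian V) (𝓝[>] 0) (𝓝 (∫ w, g w ∂stdGaussian V)) := by
    refine tendsto_integral_filter_of_dominated_convergence (fun _ => C) ?_ ?_
      (integrable_const _) hlim
    · filter_upwards [self_mem_nhdsWithin] with ε hε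
      have hint := hres.integrable_comp_of_integrable (hf ε hε)
      exact hint.aestronglyMeasurable.integral_prod_right'
    · filter_upwards [self_mem_nhdsWithin] with ε hε
      exact ae_of_all _ (hC ε hε)
  refine hdom.congr' ?_
  filter_upwards [self_mem_nhdsWithin] with ε hε
  exact (integral_stdGaussian_eq_integral_resample he (hf ε hε)).symm

end ResamplingLimit

section AveragedTrace

lemma exists_unit_map_eq_smul_one {ι V : Type*} [DecidableEq ι] [Nonempty ι]
    [NormedAddCommGroup V] [InnerProductSpace ℝ V] {L : V →ₗ[ℝ] Matrix ι ι ℂ}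
    (hL : IsHermitianParam L) :
    ∃ (e : V) (κ : ℝ), ‖e‖ = 1 ∧ 0 < κ ∧ L e = (κ : ℂ) • 1 := by
  obtain ⟨u, hu⟩ := hL.exists_eq 1 isHermitian_one
  have hu0 : u ≠ 0 := by
    rintro rfl
    rw [map_zero] at hu
    obtain ⟨i⟩ := ‹Nonempty ι›
    simpa using congrFun₂ hu i i
  have hnorm : 0 < ‖u‖ := norm_pos_iff.2 hu0
  refine ⟨‖u‖⁻¹ • u, ‖u‖⁻¹, ?_, by positivity, ?_⟩
  · rw [norm_smul, norm_inv, norm_norm, inv_mul_cancel₀ hnorm.ne']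
  · rw [map_smul, hu, Complex.coe_smul]

variable {ι : Type*} [Fintype ι] [DecidableEq ι]

lemma negImResolvent_add_smul_one (E c ε : ℝ) (M : Matrix ι ι ℂ) :
    negImResolvent (spectralParam E ε) (M + (c : ℂ) • 1) =
      negImResolvent (spectralParam (E - c) ε) M := by
  have hshift : spectralParam E ε • (1 : Matrix ι ι ℂ) - (M + (c : ℂ) • 1) =
      spectralParam (E - c) ε • 1 - M := by
    unfold spectralParam
    push_cast
    module
  simp only [negImResolvent, resolventMatrix, hshift]

lemma re_negImResolvent_diag_nonneg {M : Matrix ι ι ℂ} (hM : M.IsHermitian) (E : ℝ) {ε : ℝ}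
    (hε : 0 < ε) (i : ι) : 0 ≤ (negImResolvent (spectralParam E ε) M i i).re := by
  rw [re_negImResolvent_diag hM E hε.ne']
  exact Finset.sum_nonneg fun k _ => mul_nonneg (lorentzian_nonneg hε.le _) (sq_nonneg _)

lemma re_negImResolvent_diag_le {M : Matrix ι ι ℂ} (hM : M.IsHermitian) (E : ℝ) {ε : ℝ}
    (hε : 0 < ε) (i : ι) : (negImResolvent (spectralParam E ε) M i i).re ≤ ε⁻¹ := by
  have hbound := norm_resolventMatrix_diag_le hM (z := spectralParam E ε) (by simpa using hε.ne') i
  rw [spectralParam_im, abs_of_pos hε] at hbound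
  rw [re_negImResolvent_diag_eq_neg_im]
  exact (neg_le_abs _).trans ((Complex.abs_im_le_norm _).trans hbound)

lemma integrable_re_negImResolvent_diag_sub_mul {M : Matrix ι ι ℂ} (hM : M.IsHermitian) (y κ : ℝ)
    {ε : ℝ} (hε : 0 < ε) (i : ι) :
    Integrable (fun x => (negImResolvent (spectralParam (y - κ * x) ε) M i i).re)
      (gaussianReal 0 1) := by
  simp only [re_negImResolvent_diag hM _ hε.ne']
  exact integrable_finsetSum _ fun k _ =>
    (integrable_lorentzian _ hε (by fun_prop)).mul_const _

lemma integral_re_negImResolvent_diag_sub_mul {M : Matrix ι ι ℂ} (hM : M.IsHermitian) (y κ : ℝ)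
    {ε : ℝ} (hε : 0 < ε) (i : ι) :
    ∫ x, (negImResolvent (spectralParam (y - κ * x) ε) M i i).re ∂gaussianReal 0 1 =
      ∑ k, (∫ x, lorentzian ε (y - hM.eigenvalues k - κ * x) ∂gaussianReal 0 1) *
        ‖hM.eigenvectorUnitary.1 i k‖ ^ 2 := by
  simp only [re_negImResolvent_diag hM _ hε.ne', sub_right_comm y]
  rw [integral_finsetSum _ fun k _ => (integrable_lorentzian _ hε (by fun_prop)).mul_const _]
  simp only [integral_mul_const]

lemma integral_re_negImResolvent_diag_sub_mul_le {M : Matrix ι ι ℂ} (hM : M.IsHermitian) (y : ℝ)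
    {κ : ℝ} (hκ : 0 < κ) {ε : ℝ} (hε : 0 < ε) (i : ι) :
    ∫ x, (negImResolvent (spectralParam (y - κ * x) ε) M i i).re ∂gaussianReal 0 1 ≤
      Real.pi / κ := by
  rw [integral_re_negImResolvent_diag_sub_mul hM y κ hε]
  calc _ ≤ ∑ k, Real.pi / κ * ‖hM.eigenvectorUnitary.1 i k‖ ^ 2 :=
        Finset.sum_le_sum fun k _ =>
          mul_le_mul_of_nonneg_right (integral_lorentzian_gaussianReal_le hε hκ _) (sq_nonneg _)
    _ = Real.pi / κ := by
        rw [← Finset.mul_sum, sum_norm_sq_row_eq_one hM.eigenvectorUnitary.2, mul_one]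

lemma exists_tendsto_integral_re_negImResolvent_diag_sub_mul {M : Matrix ι ι ℂ}
    (hM : M.IsHermitian) (y : ℝ) {κ : ℝ} (hκ : 0 < κ) (i : ι) :
    ∃ ℓ : ℝ, Tendsto (fun ε : ℝ =>
      ∫ x, (negImResolvent (spectralParam (y - κ * x) ε) M i i).re ∂gaussianReal 0 1)
        (𝓝[>] 0) (𝓝 ℓ) := by
  choose ℓ hℓ using fun k =>
    exists_tendsto_integral_lorentzian_gaussianReal hκ (y - hM.eigenvalues k)
  refine ⟨_, (tendsto_finsetSum Finset.univ fun k _ =>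
    (hℓ k).mul_const (‖hM.eigenvectorUnitary.1 i k‖ ^ 2)).congr' ?_⟩
  filter_upwards [self_mem_nhdsWithin] with ε hε
  rw [integral_re_negImResolvent_diag_sub_mul hM y κ hε]

/-- The part of the trace of `negImResolvent z M` over `B` which is not controlled by the
Hilbert–Schmidt norm of its `B × B` block. -/
def traceExcess (B : Finset ι) (z : ℂ) (M : Matrix ι ι ℂ) : ℝ :=
  max (∑ i ∈ B, (negImResolvent z M i i).re - hsOn B (negImResolvent z M)) 0

lemma traceExcess_nonneg (B : Finset ι) (z : ℂ) (M : Matrix ι ι ℂ) : 0 ≤ traceExcess B z M :=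
  le_max_right _ _

lemma sum_re_negImResolvent_le_hsOn_add_traceExcess (B : Finset ι) (z : ℂ) (M : Matrix ι ι ℂ) :
    ∑ i ∈ B, (negImResolvent z M i i).re ≤ hsOn B (negImResolvent z M) + traceExcess B z M :=
  sub_le_iff_le_add'.1 (le_max_left _ _)

lemma traceExcess_le {M : Matrix ι ι ℂ} (hM : M.IsHermitian) (B : Finset ι) (E : ℝ) {ε : ℝ}
    (hε : 0 < ε) : traceExcess B (spectralParam E ε) M ≤
      ∑ i ∈ B, (negImResolvent (spectralParam E ε) M i i).re :=
  max_le (sub_le_self _ (hsOn_nonneg _ _))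
    (Finset.sum_nonneg fun i _ => re_negImResolvent_diag_nonneg hM E hε i)

lemma traceExcess_le_card_mul_inv {M : Matrix ι ι ℂ} (hM : M.IsHermitian) (B : Finset ι) (E : ℝ)
    {ε : ℝ} (hε : 0 < ε) : traceExcess B (spectralParam E ε) M ≤ B.card * ε⁻¹ := by
  rw [← nsmul_eq_mul]
  exact (traceExcess_le hM B E hε).trans
    (Finset.sum_le_card_nsmul _ _ _ fun i _ => re_negImResolvent_diag_le hM E hε i)

lemma integral_traceExcess_sub_mul_le {M : Matrix ι ι ℂ} (hM : M.IsHermitian) (B : Finset ι)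
    (y : ℝ) {κ : ℝ} (hκ : 0 < κ) {ε : ℝ} (hε : 0 < ε) :
    ∫ x, traceExcess B (spectralParam (y - κ * x) ε) M ∂gaussianReal 0 1 ≤
      B.card * (Real.pi / κ) := by
  have hint := integrable_re_negImResolvent_diag_sub_mul hM y κ hε
  calc _ ≤ ∫ x, ∑ i ∈ B, (negImResolvent (spectralParam (y - κ * x) ε) M i i).re
        ∂gaussianReal 0 1 :=
        integral_mono_of_nonneg (ae_of_all _ fun x => traceExcess_nonneg _ _ _)
          (integrable_finsetSum _ fun i _ => hint i) (ae_of_all _ fun x => traceExcess_le hM B _ hε)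
    _ ≤ B.card * (Real.pi / κ) := by
        rw [integral_finsetSum _ fun i _ => hint i, ← nsmul_eq_mul]
        exact Finset.sum_le_card_nsmul _ _ _ fun i _ =>
          integral_re_negImResolvent_diag_sub_mul_le hM _ hκ hε i

lemma tendsto_integral_traceExcess_sub_mul {M : Matrix ι ι ℂ} (hM : M.IsHermitian)
    (hinj : Function.Injective hM.eigenvalues) (B : Finset ι) (y κ : ℝ) :
    Tendsto (fun ε : ℝ => ∫ x, traceExcess B (spectralParam (y - κ * x) ε) M ∂gaussianReal 0 1)
      (𝓝[>] 0) (𝓝 0) := by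
  set C := ∑ k, ∑ l, 4 / (hM.eigenvalues k - hM.eigenvalues l) ^ 2
  have : 0 ≤ C := by positivity
  have hlim : Tendsto (fun ε : ℝ => C * ε) (𝓝[>] 0) (𝓝 0) := by
    simpa only [mul_zero] using
      ((continuous_const_mul C).tendsto 0).mono_left nhdsWithin_le_nhds
  refine squeeze_zero' (Eventually.of_forall fun ε =>
    integral_nonneg fun x => traceExcess_nonneg _ _ _) ?_ hlim
  filter_upwards [self_mem_nhdsWithin] with ε (hε : 0 < ε)
  have hpointwise : ∀ x, traceExcess B (spectralParam (y - κ * x) ε) M ≤ C * ε := fun x =>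
    max_le (sub_le_iff_le_add'.2 (sum_re_negImResolvent_le_hsOn_add hM hinj B _ hε))
      (by positivity)
  calc _ ≤ ∫ _x : ℝ, C * ε ∂gaussianReal 0 1 :=
        integral_mono_of_nonneg (ae_of_all _ fun x => traceExcess_nonneg _ _ _)
          (integrable_const _) (ae_of_all _ hpointwise)
    _ = C * ε := by simp

variable {V : Type*} [NormedAddCommGroup V] [InnerProductSpace ℝ V] {L : V →ₗ[ℝ] Matrix ι ι ℂ}

lemma negImResolvent_resample {e : V} {κ : ℝ} (hLe : L e = (κ : ℂ) • 1) (E ε : ℝ) (w : V)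
    (x : ℝ) :
    negImResolvent (spectralParam E ε) (L (w + (x - inner ℝ e w) • e)) =
      negImResolvent (spectralParam (E + κ * inner ℝ e w - κ * x) ε) (L w) := by
  have hmap : L (w + (x - inner ℝ e w) • e) =
      L w + ((κ * (x - inner ℝ e w) : ℝ) : ℂ) • 1 := by
    rw [map_add, map_smul, hLe, ← Complex.coe_smul, smul_smul, mul_comm κ, Complex.ofReal_mul]
  have henergy : E - κ * (x - inner ℝ e w) = E + κ * inner ℝ e w - κ * x := by ring
  rw [hmap, negImResolvent_add_smul_one, henergy]

variable [FiniteDimensional ℝ V]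

lemma continuous_negImResolvent_map (hL : IsHermitianParam L) (E : ℝ) {ε : ℝ} (hε : 0 < ε) :
    Continuous fun w => negImResolvent (spectralParam E ε) (L w) :=
  continuous_negImResolvent L.continuous_of_finiteDimensional hL.isHermitian continuous_const
    fun _ => by simpa using hε.ne'

lemma continuous_re_negImResolvent_diag (hL : IsHermitianParam L) (E : ℝ) {ε : ℝ} (hε : 0 < ε)
    (i : ι) : Continuous fun w => (negImResolvent (spectralParam E ε) (L w) i i).re :=
  Complex.continuous_re.comp ((continuous_negImResolvent_map hL E hε).matrix_elem i i)

lemma continuous_hsOn_negImResolvent (hL : IsHermitianParam L) (B : Finset ι) (E : ℝ) {ε : ℝ}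
    (hε : 0 < ε) : Continuous fun w => hsOn B (negImResolvent (spectralParam E ε) (L w)) :=
  (continuous_finsetSum _ fun i _ => continuous_finsetSum _ fun j _ =>
    (((continuous_negImResolvent_map hL E hε).matrix_elem i j).norm.pow 2)).sqrt

lemma continuous_traceExcess (hL : IsHermitianParam L) (B : Finset ι) (E : ℝ) {ε : ℝ}
    (hε : 0 < ε) : Continuous fun w => traceExcess B (spectralParam E ε) (L w) :=
  ((continuous_finsetSum _ fun i _ => continuous_re_negImResolvent_diag hL E hε i).sub
    (continuous_hsOn_negImResolvent hL B E hε)).max continuous_const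

variable [MeasurableSpace V] [BorelSpace V]

lemma integrable_re_negImResolvent_diag (hL : IsHermitianParam L) (E : ℝ) {ε : ℝ} (hε : 0 < ε)
    (i : ι) :
    Integrable (fun w => (negImResolvent (spectralParam E ε) (L w) i i).re) (stdGaussian V) := by
  refine Integrable.of_bound (C := ε⁻¹)
    (continuous_re_negImResolvent_diag hL E hε i).aestronglyMeasurable (ae_of_all _ fun w => ?_)
  rw [Real.norm_of_nonneg (re_negImResolvent_diag_nonneg (hL.isHermitian w) E hε i)]
  exact re_negImResolvent_diag_le (hL.isHermitian w) E hε i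

lemma integrable_traceExcess (hL : IsHermitianParam L) (B : Finset ι) (E : ℝ) {ε : ℝ}
    (hε : 0 < ε) :
    Integrable (fun w => traceExcess B (spectralParam E ε) (L w)) (stdGaussian V) := by
  refine Integrable.of_bound (C := B.card * ε⁻¹)
    (continuous_traceExcess hL B E hε).aestronglyMeasurable (ae_of_all _ fun w => ?_)
  rw [Real.norm_of_nonneg (traceExcess_nonneg _ _ _)]
  exact traceExcess_le_card_mul_inv (hL.isHermitian w) B E hε

lemma exists_tendsto_integral_re_negImResolvent_diag (hL : IsHermitianParam L) (E : ℝ) (i : ι) :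
    ∃ ρ : ℝ, Tendsto (fun ε : ℝ =>
      ∫ w, (negImResolvent (spectralParam E ε) (L w) i i).re ∂stdGaussian V) (𝓝[>] 0) (𝓝 ρ) := by
  have : Nonempty ι := ⟨i⟩
  obtain ⟨e, κ, he, hκ, hLe⟩ := exists_unit_map_eq_smul_one hL
  choose ℓ hℓ using fun w => exists_tendsto_integral_re_negImResolvent_diag_sub_mul
    (hL.isHermitian w) (E + κ * inner ℝ e w) hκ i
  refine ⟨∫ w, ℓ w ∂stdGaussian V, tendsto_integral_stdGaussian_of_resample he (C := Real.pi / κ)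
    (fun ε hε => integrable_re_negImResolvent_diag hL E hε i) (fun ε hε w => ?_)
    (ae_of_all _ fun w => ?_)⟩
  · simp only [negImResolvent_resample hLe]
    rw [Real.norm_of_nonneg (integral_nonneg fun x =>
      re_negImResolvent_diag_nonneg (hL.isHermitian w) _ hε i)]
    exact integral_re_negImResolvent_diag_sub_mul_le (hL.isHermitian w) _ hκ hε i
  · simpa only [negImResolvent_resample hLe] using hℓ w

lemma tendsto_integral_traceExcess [Nonempty ι] (hL : IsHermitianParam L) (B : Finset ι) (E : ℝ) :
    Tendsto (fun ε : ℝ => ∫ w, traceExcess B (spectralParam E ε) (L w) ∂stdGaussian V)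
      (𝓝[>] 0) (𝓝 0) := by
  obtain ⟨e, κ, he, hκ, hLe⟩ := exists_unit_map_eq_smul_one hL
  have hres : ∀ (ε : ℝ) w (x : ℝ),
      traceExcess B (spectralParam E ε) (L (w + (x - inner ℝ e w) • e)) =
        traceExcess B (spectralParam (E + κ * inner ℝ e w - κ * x) ε) (L w) := fun ε w x => by
    simp only [traceExcess, negImResolvent_resample hLe]
  suffices h : Tendsto (fun ε : ℝ => ∫ w, traceExcess B (spectralParam E ε) (L w) ∂stdGaussian V)
      (𝓝[>] 0) (𝓝 (∫ _w : V, (0 : ℝ) ∂stdGaussian V)) by rwa [integral_zero] at h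
  refine tendsto_integral_stdGaussian_of_resample he (C := B.card * (Real.pi / κ))
    (fun ε hε => integrable_traceExcess hL B E hε) (fun ε hε w => ?_) ?_
  · simp only [hres]
    rw [Real.norm_of_nonneg (integral_nonneg fun x => traceExcess_nonneg _ _ _)]
    exact integral_traceExcess_sub_mul_le (hL.isHermitian w) B _ hκ hε
  · filter_upwards [ae_injective_eigenvalues hL] with w hw
    simp only [hres]
    exact tendsto_integral_traceExcess_sub_mul (hL.isHermitian w) hw B _ κ

lemma integrable_hsOn_negImResolvent (hL : IsHermitianParam L) {B : Finset ι} {κ : ℝ}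
    (hκ : BlockBoundedBelow L B κ) (hκ0 : 0 < κ) (E : ℝ) {ε : ℝ} (hε : 0 < ε) :
    Integrable (fun w => hsOn B (negImResolvent (spectralParam E ε) (L w))) (stdGaussian V) := by
  refine ⟨(continuous_hsOn_negImResolvent hL B E hε).aestronglyMeasurable, ?_⟩
  rw [hasFiniteIntegral_iff_ofReal (ae_of_all _ fun w => hsOn_nonneg _ _)]
  exact (lintegral_hsOn_negImResolvent_le hL hκ hκ0 (by simpa using hε.ne')).trans_lt
    ENNReal.ofReal_lt_top

lemma integral_hsOn_negImResolvent_le (hL : IsHermitianParam L) {B : Finset ι} {κ : ℝ}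
    (hκ : BlockBoundedBelow L B κ) (hκ0 : 0 < κ) (E : ℝ) {ε : ℝ} (hε : 0 < ε) :
    ∫ w, hsOn B (negImResolvent (spectralParam E ε) (L w)) ∂stdGaussian V ≤
      8 * Real.pi / gaussianAbsMoment ^ 2 * √B.card / κ := by
  have hg := gaussianAbsMoment_pos
  rw [integral_eq_lintegral_of_nonneg_ae (ae_of_all _ fun w => hsOn_nonneg _ _)
    (continuous_hsOn_negImResolvent hL B E hε).aestronglyMeasurable]
  exact ENNReal.toReal_le_of_le_ofReal (by positivity)
    (lintegral_hsOn_negImResolvent_le hL hκ hκ0 (by simpa using hε.ne'))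

lemma sum_densityOfStates_le (hL : IsHermitianParam L) {B : Finset ι} {κ : ℝ}
    (hκ : BlockBoundedBelow L B κ) (hκ0 : 0 < κ) (E : ℝ) {ρ : ι → ℝ}
    (hρ : ∀ i ∈ B, Tendsto (fun ε : ℝ =>
      ∫ w, (negImResolvent (spectralParam E ε) (L w) i i).re ∂stdGaussian V) (𝓝[>] 0) (𝓝 (ρ i))) :
    ∑ i ∈ B, ρ i ≤ 8 * Real.pi / gaussianAbsMoment ^ 2 * √B.card / κ := by
  have hg := gaussianAbsMoment_pos
  rcases B.eq_empty_or_nonempty with rfl | ⟨i₀, -⟩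
  · rw [Finset.sum_empty]
    positivity
  have : Nonempty ι := ⟨i₀⟩
  have hbound := (tendsto_integral_traceExcess (V := V) hL B E).const_add
    (8 * Real.pi / gaussianAbsMoment ^ 2 * √B.card / κ)
  rw [add_zero] at hbound
  refine le_of_tendsto_of_tendsto (tendsto_finsetSum B hρ) hbound ?_
  filter_upwards [self_mem_nhdsWithin] with ε (hε : 0 < ε)
  have hdiag := fun i (_ : i ∈ B) => integrable_re_negImResolvent_diag (V := V) hL E hε i
  have hhs := integrable_hsOn_negImResolvent (V := V) hL hκ hκ0 E hε
  have hexcess := integrable_traceExcess (V := V) hL B E hε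
  calc ∑ i ∈ B, ∫ w, (negImResolvent (spectralParam E ε) (L w) i i).re ∂stdGaussian V
      = ∫ w, ∑ i ∈ B, (negImResolvent (spectralParam E ε) (L w) i i).re ∂stdGaussian V :=
        (integral_finsetSum B hdiag).symm
    _ ≤ ∫ w, (hsOn B (negImResolvent (spectralParam E ε) (L w)) +
          traceExcess B (spectralParam E ε) (L w)) ∂stdGaussian V :=
        integral_mono (integrable_finsetSum B hdiag) (hhs.add hexcess) fun w =>
          sum_re_negImResolvent_le_hsOn_add_traceExcess B _ _
    _ ≤ _ := by
        rw [integral_add hhs hexcess]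
        exact add_le_add_left (integral_hsOn_negImResolvent_le hL hκ hκ0 E hε) _

end AveragedTrace

section TranslationInvariance

variable {ι : Type*} [Fintype ι] {V : Type*} [NormedAddCommGroup V] [InnerProductSpace ℝ V]
  {L : V →ₗ[ℝ] Matrix ι ι ℂ}

/-- The norm for which the entries of `L w`, with `w` a standard Gaussian vector, have the variance
profile `J`. -/
def HasVarianceProfile (L : V →ₗ[ℝ] Matrix ι ι ℂ) (J : ι → ι → ℝ) : Prop :=
  ∀ w, ‖w‖ ^ 2 = ∑ i, ∑ j, ‖L w i j‖ ^ 2 / J i j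

lemma HasVarianceProfile.injective {J : ι → ι → ℝ} (hJ : HasVarianceProfile L J) :
    Function.Injective L := by
  rw [injective_iff_map_eq_zero]
  intro w hw
  simpa [hw] using hJ w

lemma HasVarianceProfile.exists_linearIsometry_submatrix {J : ι → ι → ℝ}
    (hJ : HasVarianceProfile L J) (hL : IsHermitianParam L) (σ : ι ≃ ι)
    (hσ : ∀ i j, J (σ i) (σ j) = J i j) :
    ∃ S : V →ₗᵢ[ℝ] V, ∀ w, L (S w) = (L w).submatrix σ σ := by
  choose S hS using fun w =>
    hL.exists_eq ((L w).submatrix σ σ) ((hL.isHermitian w).submatrix σ)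
  have hnorm : ∀ w, ‖S w‖ = ‖w‖ := fun w => by
    refine (pow_left_inj₀ (norm_nonneg _) (norm_nonneg _) two_ne_zero).1 ?_
    calc ‖S w‖ ^ 2 = ∑ i, ∑ j, ‖L w (σ i) (σ j)‖ ^ 2 / J (σ i) (σ j) := by
          simp only [hJ (S w), hS, submatrix_apply, hσ]
      _ = ∑ i, ∑ j, ‖L w (σ i) j‖ ^ 2 / J (σ i) j :=
          Finset.sum_congr rfl fun i _ => Equiv.sum_comp σ fun j => ‖L w (σ i) j‖ ^ 2 / J (σ i) j
      _ = ∑ i, ∑ j, ‖L w i j‖ ^ 2 / J i j :=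
          Equiv.sum_comp σ fun i => ∑ j, ‖L w i j‖ ^ 2 / J i j
      _ = ‖w‖ ^ 2 := (hJ w).symm
  refine ⟨⟨⟨⟨S, fun v w => hJ.injective ?_⟩, fun c w => hJ.injective ?_⟩, hnorm⟩, hS⟩
  · simp only [hS, map_add, submatrix_add, Pi.add_apply]
  · simp only [hS, map_smul, submatrix_smul, Pi.smul_apply, RingHom.id_apply]

lemma HasVarianceProfile.blockBoundedBelow {J : ι → ι → ℝ} (hJ : HasVarianceProfile L J)
    {B : Finset ι} {s : ℝ} (hs0 : 0 < s) (hs : ∀ i ∈ B, ∀ j ∈ B, s ≤ J i j) :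
    BlockBoundedBelow L B √s := by
  intro w hw
  have hsupp : ∀ i j, (i ∉ B ∨ j ∉ B) → L w i j = 0 := fun i j hij => by
    by_contra h
    exact hij.elim (· (hw i j h).1) (· (hw i j h).2)
  have hblock : ‖w‖ ^ 2 = ∑ i ∈ B, ∑ j ∈ B, ‖L w i j‖ ^ 2 / J i j := by
    rw [hJ, ← Finset.sum_subset (Finset.subset_univ B) fun i _ hi =>
      Finset.sum_eq_zero fun j _ => by simp [hsupp i j (Or.inl hi)]]
    exact Finset.sum_congr rfl fun i _ => (Finset.sum_subset (Finset.subset_univ B) fun j _ hj => by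
      simp [hsupp i j (Or.inr hj)]).symm
  refine (pow_le_pow_iff_left₀ (by positivity) (hsOn_nonneg _ _) two_ne_zero).1 ?_
  rw [mul_pow, Real.sq_sqrt hs0.le, hsOn_sq, hblock]
  simp only [Finset.mul_sum, l2On_sq]
  refine Finset.sum_le_sum fun i hi => Finset.sum_le_sum fun j hj => ?_
  rw [mul_div_left_comm]
  exact mul_le_of_le_one_right (sq_nonneg _)
    ((div_le_one (hs0.trans_le (hs i hi j hj))).2 (hs i hi j hj))

variable [DecidableEq ι]

lemma negImResolvent_submatrix (z : ℂ) (M : Matrix ι ι ℂ) (σ : ι ≃ ι) :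
    negImResolvent z (M.submatrix σ σ) = (negImResolvent z M).submatrix σ σ := by
  have hshift : z • (1 : Matrix ι ι ℂ) - M.submatrix σ σ = (z • 1 - M).submatrix σ σ := by
    ext i j
    simp only [Matrix.sub_apply, Matrix.smul_apply, submatrix_apply, one_apply, σ.injective.eq_iff]
  unfold negImResolvent resolventMatrix
  rw [hshift, inv_submatrix_equiv]
  rfl

variable [FiniteDimensional ℝ V] [MeasurableSpace V] [BorelSpace V]

lemma integral_re_negImResolvent_diag_equiv (hL : IsHermitianParam L) {J : ι → ι → ℝ}
    (hJ : HasVarianceProfile L J) (σ : ι ≃ ι) (hσ : ∀ i j, J (σ i) (σ j) = J i j) (E : ℝ) {ε : ℝ}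
    (hε : 0 < ε) (i : ι) :
    ∫ w, (negImResolvent (spectralParam E ε) (L w) (σ i) (σ i)).re ∂stdGaussian V =
      ∫ w, (negImResolvent (spectralParam E ε) (L w) i i).re ∂stdGaussian V := by
  obtain ⟨S, hS⟩ := hJ.exists_linearIsometry_submatrix hL σ hσ
  conv_rhs => rw [← stdGaussian_map (S.toLinearIsometryEquiv rfl)]
  rw [integral_map (by fun_prop) (continuous_re_negImResolvent_diag hL E hε i).aestronglyMeasurable]
  simp only [LinearIsometry.coe_toLinearIsometryEquiv, hS, negImResolvent_submatrix,
    submatrix_apply]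

lemma exists_densityOfStates_le [AddGroup ι] (hL : IsHermitianParam L) {J : ι → ι → ℝ}
    (hJ : HasVarianceProfile L J) (hJt : ∀ a i j, J (i + a) (j + a) = J i j) {B : Finset ι}
    (hB : B.Nonempty) {s : ℝ} (hs0 : 0 < s) (hs : ∀ i ∈ B, ∀ j ∈ B, s ≤ J i j) (E : ℝ) :
    ∃ ρ : ℝ, 0 ≤ ρ ∧ ρ ≤ 8 * Real.pi / gaussianAbsMoment ^ 2 / √(B.card * s) ∧
      Tendsto (fun ε : ℝ => ∫ w, (negImResolvent (spectralParam E ε) (L w) 0 0).re ∂stdGaussian V)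
        (𝓝[>] 0) (𝓝 ρ) := by
  obtain ⟨ρ, hρ⟩ := exists_tendsto_integral_re_negImResolvent_diag (V := V) hL E 0
  have hρi : ∀ i ∈ B, Tendsto (fun ε : ℝ =>
      ∫ w, (negImResolvent (spectralParam E ε) (L w) i i).re ∂stdGaussian V) (𝓝[>] 0) (𝓝 ρ) := by
    intro i _
    refine hρ.congr' ?_
    filter_upwards [self_mem_nhdsWithin] with ε hε
    simpa using (integral_re_negImResolvent_diag_equiv hL hJ (Equiv.addRight i) (hJt i) E hε 0).symm
  refine ⟨ρ, ge_of_tendsto hρ ?_, ?_, hρ⟩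
  · filter_upwards [self_mem_nhdsWithin] with ε hε
    exact integral_nonneg fun w => re_negImResolvent_diag_nonneg (hL.isHermitian w) E hε 0
  · have hsum := sum_densityOfStates_le (V := V) hL (hJ.blockBoundedBelow hs0 hs)
      (Real.sqrt_pos.2 hs0) E hρi
    have hcard : (0 : ℝ) < B.card := by exact_mod_cast hB.card_pos
    rw [Finset.sum_const, nsmul_eq_mul, ← le_div_iff₀' hcard] at hsum
    refine hsum.trans_eq ?_
    have hsqrt := Real.mul_self_sqrt hcard.le
    have hcard' : √(B.card : ℝ) ≠ 0 := (Real.sqrt_pos.2 hcard).ne'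
    rw [Real.sqrt_mul hcard.le]
    nth_rewrite 2 [← hsqrt]
    field_simp

end TranslationInvariance

section MaximumPrinciple

variable {L : Fin 3 → ℕ}

/-- The operator `κ - W²Δ` on functions on the torus. -/
def massiveLaplacian (W : ℕ) (κ : ℝ) (f : Torus L → ℝ) (x : Torus L) : ℝ :=
  κ * f x + (W : ℝ) ^ 2 *
    (6 * f x - ∑ i : Fin 3, (f (x + unitVec L i) + f (x - unitVec L i)))

lemma massiveLaplacian_comp_sub_right (W : ℕ) (κ : ℝ) (f : Torus L → ℝ) (x y : Torus L) :
    massiveLaplacian W κ (fun z => f (z - y)) x = massiveLaplacian W κ f (x - y) := by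
  simp only [massiveLaplacian, add_sub_right_comm, sub_right_comm _ _ y]

lemma massiveLaplacian_sub (W : ℕ) (κ : ℝ) (f g : Torus L → ℝ) (x : Torus L) :
    massiveLaplacian W κ (f - g) x = massiveLaplacian W κ f x - massiveLaplacian W κ g x := by
  simp only [massiveLaplacian, Pi.sub_apply, Finset.sum_add_distrib, Finset.sum_sub_distrib]
  ring

lemma massiveLaplacian_sum_mul {α : Type*} (s : Finset α) (W : ℕ) (κ : ℝ) (c : α → ℝ)
    (f : α → Torus L → ℝ) (x : Torus L) :
    massiveLaplacian W κ (fun z => ∑ a ∈ s, c a * f a z) x =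
      ∑ a ∈ s, c a * massiveLaplacian W κ (f a) x := by
  simp only [massiveLaplacian, Fin.sum_univ_three, Finset.mul_sum, ← Finset.sum_add_distrib,
    ← Finset.sum_sub_distrib]
  exact Finset.sum_congr rfl fun a _ => by ring

variable [∀ i, NeZero (L i)]

lemma sum_lap_mul (f : Torus L → ℝ) (x : Torus L) :
    ∑ z, lap L x z * f z =
      ∑ i : Fin 3, (f (x + unitVec L i) + f (x - unitVec L i)) - 6 * f x := by
  simp only [lap, of_apply, sub_mul, Finset.sum_sub_distrib, Finset.sum_mul, add_mul]
  rw [Finset.sum_comm]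
  simp [Finset.sum_add_distrib]

lemma smul_neg_lap_add_smul_one_mul_apply (W : ℕ) (κ : ℝ) (M : Matrix (Torus L) (Torus L) ℝ)
    (x y : Torus L) :
    (((W : ℝ) ^ 2 • (-lap L) + κ • 1) * M : Matrix (Torus L) (Torus L) ℝ) x y =
      massiveLaplacian W κ (fun z => M z y) x := by
  rw [add_mul, smul_mul_assoc, smul_mul_assoc, one_mul, neg_mul]
  simp only [Matrix.add_apply, Matrix.smul_apply, Matrix.neg_apply, mul_apply, smul_eq_mul,
    sum_lap_mul (fun z => M z y), massiveLaplacian]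
  ring

lemma sum_val_nsmul_unitVec (x : Torus L) : ∑ i, (x i).val • unitVec L i = x := by
  ext j
  simp [Finset.sum_apply, unitVec, ZMod.natCast_zmod_val, -ZMod.natCast_val]

lemma forall_torus_of_add_unitVec {p : Torus L → Prop}
    (hstep : ∀ z i, p z → p (z + unitVec L i)) {x : Torus L} (hx : p x) (y : Torus L) : p y := by
  have hmul : ∀ i (n : ℕ) z, p z → p (z + n • unitVec L i) := by
    intro i n z hz
    induction n with
    | zero => simpa using hz
    | succ n ih =>
      rw [succ_nsmul, ← add_assoc]
      exact hstep _ i ih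
  have hsum : ∀ s : Finset (Fin 3), p (x + ∑ i ∈ s, ((y - x) i).val • unitVec L i) := by
    intro s
    induction s using Finset.induction_on with
    | empty => simpa using hx
    | insert i s hi ih =>
      rw [Finset.sum_insert hi, add_comm (_ • _), ← add_assoc]
      exact hmul i _ _ ih
  simpa only [sum_val_nsmul_unitVec, add_sub_cancel] using hsum Finset.univ

lemma nonneg_of_massiveLaplacian_nonneg {W : ℕ} {κ : ℝ} (hκ : 0 < κ) {f : Torus L → ℝ}
    (hf : ∀ x, 0 ≤ massiveLaplacian W κ f x) (x : Torus L) : 0 ≤ f x := by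
  obtain ⟨x₀, hx₀⟩ := Finite.exists_min f
  have hneighbours : ∑ _i : Fin 3, (f x₀ + f x₀) ≤
      ∑ i : Fin 3, (f (x₀ + unitVec L i) + f (x₀ - unitVec L i)) :=
    Finset.sum_le_sum fun i _ => add_le_add (hx₀ _) (hx₀ _)
  have hlap : 6 * f x₀ - ∑ i : Fin 3, (f (x₀ + unitVec L i) + f (x₀ - unitVec L i)) ≤ 0 := by
    rw [Fin.sum_const, nsmul_eq_mul] at hneighbours
    push_cast at hneighbours
    linarith
  have hmin : 0 ≤ κ * f x₀ :=
    (hf x₀).trans (add_le_of_nonpos_right (mul_nonpos_of_nonneg_of_nonpos (sq_nonneg _) hlap))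
  exact (nonneg_of_mul_nonneg_right hmin hκ).trans (hx₀ x)

lemma eq_zero_of_massiveLaplacian_nonneg {W : ℕ} (hW : 1 ≤ W) {κ : ℝ} (hκ : 0 < κ)
    {f : Torus L → ℝ} (hf : ∀ x, 0 ≤ massiveLaplacian W κ f x) {x : Torus L} (hx : f x = 0)
    (y : Torus L) : f y = 0 := by
  have hnonneg := nonneg_of_massiveLaplacian_nonneg hκ hf
  refine forall_torus_of_add_unitVec (p := fun z => f z = 0) (fun z i hz => ?_) hx y
  have hpair : ∀ j ∈ Finset.univ, 0 ≤ f (z + unitVec L j) + f (z - unitVec L j) := fun j _ =>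
    add_nonneg (hnonneg _) (hnonneg _)
  have hneighbours : ∑ j : Fin 3, (f (z + unitVec L j) + f (z - unitVec L j)) ≤ 0 := by
    have h := hf z
    simp only [massiveLaplacian, hz, mul_zero, zero_sub, zero_add, mul_neg] at h
    exact nonpos_of_mul_nonpos_right (neg_nonneg.1 h) (by positivity)
  linarith [Finset.single_le_sum hpair (Finset.mem_univ i), hnonneg (z + unitVec L i),
    hnonneg (z - unitVec L i)]

end MaximumPrinciple

section Fourier

lemma stdAddChar_re_le_one {n : ℕ} [NeZero n] (j : ZMod n) : (ZMod.stdAddChar j).re ≤ 1 :=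
  (Complex.re_le_norm _).trans (AddChar.norm_apply _ _).le

variable {L : Fin 3 → ℕ} [∀ i, NeZero (L i)]

/-- The character of the torus with frequency `k`. -/
def torusChar (k x : Torus L) : ℂ := ∏ i, ZMod.stdAddChar (k i * x i)

/-- The eigenvalue of `-Δ` on the character of frequency `k`. -/
def torusEigenvalue (k : Torus L) : ℝ := ∑ i, (2 - 2 * (ZMod.stdAddChar (k i)).re)

lemma torusChar_add (k x y : Torus L) : torusChar k (x + y) = torusChar k x * torusChar k y := by
  simp [torusChar, mul_add, AddChar.map_add_eq_mul, Finset.prod_mul_distrib]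

@[simp] lemma torusChar_zero_right (k : Torus L) : torusChar k 0 = 1 := by simp [torusChar]

lemma torusChar_neg (k x : Torus L) : torusChar k (-x) = (starRingEnd ℂ) (torusChar k x) := by
  simp [torusChar, AddChar.map_neg_eq_conj]

lemma norm_torusChar (k x : Torus L) : ‖torusChar k x‖ = 1 := by
  rw [torusChar, norm_prod, Finset.prod_eq_one fun i _ => AddChar.norm_apply _ _]

lemma torusChar_unitVec (k : Torus L) (i : Fin 3) :
    torusChar k (unitVec L i) = ZMod.stdAddChar (k i) := by
  rw [torusChar, Finset.prod_eq_single i]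
  · simp [unitVec]
  · intro j _ hj
    simp [unitVec, hj]
  · simp

lemma re_torusChar_add_add_re_torusChar_sub (k x : Torus L) (i : Fin 3) :
    (torusChar k (x + unitVec L i)).re + (torusChar k (x - unitVec L i)).re =
      2 * (ZMod.stdAddChar (k i)).re * (torusChar k x).re := by
  rw [sub_eq_add_neg, torusChar_add, torusChar_add, torusChar_neg, torusChar_unitVec]
  simp only [Complex.mul_re, Complex.conj_re, Complex.conj_im]
  ring

lemma torusEigenvalue_nonneg (k : Torus L) : 0 ≤ torusEigenvalue k :=
  Finset.sum_nonneg fun i _ => by linarith [stdAddChar_re_le_one (k i)]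

@[simp] lemma torusEigenvalue_zero : torusEigenvalue (0 : Torus L) = 0 := by
  simp [torusEigenvalue]

lemma massiveLaplacian_re_torusChar (W : ℕ) (κ : ℝ) (k x : Torus L) :
    massiveLaplacian W κ (fun z => (torusChar k z).re) x =
      (κ + (W : ℝ) ^ 2 * torusEigenvalue k) * (torusChar k x).re := by
  simp only [massiveLaplacian, re_torusChar_add_add_re_torusChar_sub, torusEigenvalue,
    Fin.sum_univ_three]
  ring

lemma sum_torusChar (x : Torus L) :
    ∑ k, torusChar k x = if x = 0 then (Fintype.card (Torus L) : ℂ) else 0 := by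
  have hprod : ∑ k, torusChar k x = ∏ i, ∑ j : ZMod (L i), ZMod.stdAddChar (j * x i) := by
    rw [Finset.prod_univ_sum, Fintype.piFinset_univ]
    rfl
  simp only [hprod, AddChar.sum_mulShift _ (ZMod.isPrimitive_stdAddChar _)]
  split_ifs with hx
  · simp [hx, Fintype.card_pi]
  · obtain ⟨i, hi⟩ := Function.ne_iff.1 hx
    refine Finset.prod_eq_zero (Finset.mem_univ i) ?_
    rw [if_neg (by simpa using hi), Nat.cast_zero]

/-- The convolution kernel of `(κ - W²Δ)⁻ᵐ`. -/
def resolventKernel (W : ℕ) (κ : ℝ) (m : ℕ) (x : Torus L) : ℝ :=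
  (∑ k, (torusChar k x).re / (κ + (W : ℝ) ^ 2 * torusEigenvalue k) ^ m) / Fintype.card (Torus L)

lemma resolventKernel_pow_zero (W : ℕ) (κ : ℝ) (x : Torus L) :
    resolventKernel W κ 0 x = if x = 0 then 1 else 0 := by
  simp only [resolventKernel, pow_zero, div_one, ← Complex.re_sum, sum_torusChar]
  split_ifs
  · rw [Complex.natCast_re, div_self (Nat.cast_ne_zero.2 Fintype.card_ne_zero)]
  · simp

lemma resolventKernel_neg (W : ℕ) (κ : ℝ) (m : ℕ) (x : Torus L) :
    resolventKernel W κ m (-x) = resolventKernel W κ m x := by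
  simp [resolventKernel, torusChar_neg]

lemma massiveLaplacian_resolventKernel (W : ℕ) {κ : ℝ} (hκ : 0 < κ) (m : ℕ) (x : Torus L) :
    massiveLaplacian W κ (resolventKernel W κ (m + 1)) x = resolventKernel W κ m x := by
  have hkernel : resolventKernel W κ (m + 1) = fun z : Torus L => ∑ k : Torus L,
      ((κ + (W : ℝ) ^ 2 * torusEigenvalue k) ^ (m + 1) * Fintype.card (Torus L))⁻¹ *
        (torusChar k z).re := by
    ext z
    rw [resolventKernel, Finset.sum_div]
    exact Finset.sum_congr rfl fun k _ => by rw [div_div, div_eq_inv_mul]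
  rw [hkernel, massiveLaplacian_sum_mul, resolventKernel, Finset.sum_div]
  refine Finset.sum_congr rfl fun k _ => ?_
  have hne : κ + (W : ℝ) ^ 2 * torusEigenvalue k ≠ 0 := by
    have := torusEigenvalue_nonneg k
    positivity
  rw [massiveLaplacian_re_torusChar]
  field_simp
  ring

end Fourier

section BandProfile

variable {L : Fin 3 → ℕ} [∀ i, NeZero (L i)]

lemma resolventKernel_nonneg (W : ℕ) {κ : ℝ} (hκ : 0 < κ) (m : ℕ) (x : Torus L) :
    0 ≤ resolventKernel W κ m x := by
  induction m generalizing x with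
  | zero =>
    rw [resolventKernel_pow_zero]
    split_ifs <;> norm_num
  | succ m ih =>
    refine nonneg_of_massiveLaplacian_nonneg (W := W) hκ (fun z => ?_) x
    rw [massiveLaplacian_resolventKernel W hκ]
    exact ih z

lemma resolventKernel_one_pos {W : ℕ} (hW : 1 ≤ W) {κ : ℝ} (hκ : 0 < κ) (x : Torus L) :
    0 < resolventKernel W κ 1 x := by
  have hdelta : ∀ z : Torus L, massiveLaplacian W κ (resolventKernel W κ 1) z =
      resolventKernel W κ 0 z := massiveLaplacian_resolventKernel W hκ 0
  refine (resolventKernel_nonneg W hκ 1 x).lt_of_ne fun hx => ?_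
  have hzero := eq_zero_of_massiveLaplacian_nonneg hW hκ
    (fun z => (hdelta z).symm ▸ resolventKernel_nonneg W hκ 0 z) hx.symm
  have hone := hdelta 0
  rw [resolventKernel_pow_zero, if_pos rfl] at hone
  simp [massiveLaplacian, hzero] at hone

lemma Jmat_apply (W : ℕ) (x y : Torus L) : Jmat L W x y = resolventKernel W 1 1 (x - y) := by
  have hinv : (((W : ℝ) ^ 2) • (-lap L) + 1) *
      (Matrix.of fun x y : Torus L => resolventKernel W 1 1 (x - y)) = 1 := by
    ext x y
    rw [← one_smul ℝ (1 : Matrix (Torus L) (Torus L) ℝ), smul_neg_lap_add_smul_one_mul_apply]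
    simp only [of_apply, massiveLaplacian_comp_sub_right, one_smul, one_apply,
      massiveLaplacian_resolventKernel W one_pos 0, resolventKernel_pow_zero, sub_eq_zero]
  rw [Jmat, inv_eq_right_inv hinv, of_apply]

lemma Jmat_pos {W : ℕ} (hW : 1 ≤ W) (x y : Torus L) : 0 < Jmat L W x y := by
  rw [Jmat_apply]
  exact resolventKernel_one_pos hW one_pos _

lemma Jmat_comm (W : ℕ) (x y : Torus L) : Jmat L W x y = Jmat L W y x := by
  rw [Jmat_apply, Jmat_apply, ← resolventKernel_neg, neg_sub]

lemma Jmat_add_right (W : ℕ) (a x y : Torus L) : Jmat L W (x + a) (y + a) = Jmat L W x y := by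
  rw [Jmat_apply, Jmat_apply, add_sub_add_right_eq_sub]

lemma resolventKernel_two_le_one (W m : ℕ) (x : Torus L) :
    resolventKernel W 2 (m + 1) x ≤ resolventKernel W 1 1 x := by
  have hmass : ∀ z : Torus L, massiveLaplacian W 2 (resolventKernel W 1 1) z =
      resolventKernel W 1 1 z + resolventKernel W 1 0 z := fun z => by
    rw [← massiveLaplacian_resolventKernel W one_pos 0]
    simp only [massiveLaplacian]
    ring
  suffices hdiff : ∀ z : Torus L,
      0 ≤ massiveLaplacian W 2 (resolventKernel W 1 1 - resolventKernel W 2 (m + 1)) z from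
    sub_nonneg.1 (nonneg_of_massiveLaplacian_nonneg two_pos hdiff x)
  intro z
  rw [massiveLaplacian_sub, hmass, massiveLaplacian_resolventKernel W two_pos]
  cases m with
  | zero =>
    rw [resolventKernel_pow_zero, resolventKernel_pow_zero, add_sub_cancel_right]
    exact resolventKernel_nonneg W one_pos 1 z
  | succ m =>
    linarith [resolventKernel_two_le_one W m z, resolventKernel_nonneg W one_pos 0 z]

end BandProfile

section CharacterIncrements

lemma norm_one_sub_sq {a : ℂ} (ha : ‖a‖ = 1) : ‖1 - a‖ ^ 2 = 2 - 2 * a.re := by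
  rw [Complex.sq_norm, Complex.normSq_sub, Complex.normSq_eq_norm_sq a, ha]
  simp
  ring

lemma norm_one_sub_mul_le {a b : ℂ} (ha : ‖a‖ = 1) : ‖1 - a * b‖ ≤ ‖1 - a‖ + ‖1 - b‖ := by
  calc ‖1 - a * b‖ = ‖(1 - a) + a * (1 - b)‖ := by ring_nf
    _ ≤ ‖1 - a‖ + ‖a * (1 - b)‖ := norm_add_le _ _
    _ = _ := by rw [norm_mul, ha, one_mul]

lemma norm_one_sub_prod_le {α : Type*} (s : Finset α) {a : α → ℂ} (ha : ∀ i ∈ s, ‖a i‖ = 1) :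
    ‖1 - ∏ i ∈ s, a i‖ ≤ ∑ i ∈ s, ‖1 - a i‖ := by
  classical
  induction s using Finset.induction_on with
  | empty => simp
  | insert i s hi ih =>
    rw [Finset.prod_insert hi, Finset.sum_insert hi]
    exact (norm_one_sub_mul_le (ha i (Finset.mem_insert_self i s))).trans
      (add_le_add_right (ih fun j hj => ha j (Finset.mem_insert_of_mem hj)) _)

lemma norm_one_sub_zpow_le {a : ℂ} (ha : ‖a‖ = 1) (d : ℤ) : ‖1 - a ^ d‖ ≤ |(d : ℝ)| * ‖1 - a‖ := by
  have hpow : ∀ n : ℕ, ‖1 - a ^ n‖ ≤ n * ‖1 - a‖ := fun n => by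
    simpa using norm_one_sub_prod_le (Finset.range n) (a := fun _ => a) fun _ _ => ha
  obtain ⟨n, rfl | rfl⟩ := d.eq_nat_or_neg
  · simpa using hpow n
  · have hne : a ≠ 0 := norm_ne_zero_iff.1 (ha ▸ one_ne_zero)
    have hreflect : ‖1 - a ^ (-(n : ℤ))‖ = ‖1 - a ^ n‖ := by
      have hmul : 1 - a ^ n = a ^ n * -(1 - a ^ (-(n : ℤ))) := by
        rw [_root_.zpow_neg, zpow_natCast]
        field_simp
        ring
      rw [hmul, norm_mul, norm_pow, ha, one_pow, one_mul, norm_neg]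
    rw [hreflect]
    simpa using hpow n

lemma one_sub_re_torusChar_le {L : Fin 3 → ℕ} [∀ i, NeZero (L i)] (k : Torus L) {x : Torus L}
    {r : ℝ} {d : Fin 3 → ℤ} (hd : ∀ i, |(d i : ℝ)| ≤ r) (hx : ∀ i, x i = d i) :
    1 - (torusChar k x).re ≤ 3 / 2 * r ^ 2 * torusEigenvalue k := by
  have : 0 ≤ r := (abs_nonneg _).trans (hd 0)
  have hfactor : ∀ i, ‖1 - ZMod.stdAddChar (k i * x i)‖ ≤ r * ‖1 - ZMod.stdAddChar (k i)‖ :=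
    fun i => by
      rw [hx i, mul_comm (k i), ← zsmul_eq_mul, AddChar.map_zsmul_eq_zpow]
      exact (norm_one_sub_zpow_le (AddChar.norm_apply _ _) _).trans
        (mul_le_mul_of_nonneg_right (hd i) (norm_nonneg _))
  have hsum : ‖1 - torusChar k x‖ ≤ r * ∑ i, ‖1 - ZMod.stdAddChar (k i)‖ := by
    rw [Finset.mul_sum]
    exact (norm_one_sub_prod_le _ fun i _ => AddChar.norm_apply _ _).trans
      (Finset.sum_le_sum fun i _ => hfactor i)
  have hcauchy : (∑ i, ‖1 - ZMod.stdAddChar (k i)‖) ^ 2 ≤ 3 * torusEigenvalue k := by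
    have h := sq_sum_le_card_mul_sum_sq (s := Finset.univ)
      (f := fun i => ‖1 - ZMod.stdAddChar (k i)‖)
    simpa only [Finset.card_univ, Fintype.card_fin, Nat.cast_ofNat, torusEigenvalue,
      norm_one_sub_sq (AddChar.norm_apply _ _)] using h
  have hsq : 2 - 2 * (torusChar k x).re ≤ r ^ 2 * (3 * torusEigenvalue k) := by
    rw [← norm_one_sub_sq (norm_torusChar k x)]
    calc ‖1 - torusChar k x‖ ^ 2 ≤ (r * ∑ i, ‖1 - ZMod.stdAddChar (k i)‖) ^ 2 := by gcongr
      _ = r ^ 2 * (∑ i, ‖1 - ZMod.stdAddChar (k i)‖) ^ 2 := mul_pow ..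
      _ ≤ _ := by gcongr
  linarith

end CharacterIncrements

section BandProfileLowerBound

lemma two_sub_two_mul_stdAddChar_re {n : ℕ} [NeZero n] (j : ZMod n) :
    2 - 2 * (ZMod.stdAddChar j).re = 4 * Real.sin (Real.pi * j.val / n) ^ 2 := by
  have hexp : ZMod.stdAddChar j = Complex.exp ((2 * (Real.pi * j.val / n) : ℝ) * Complex.I) := by
    conv_lhs => rw [← ZMod.natCast_zmod_val j, ← Int.cast_natCast, ZMod.stdAddChar_coe]
    congr 1
    push_cast
    ring
  rw [hexp, Complex.exp_ofReal_mul_I_re, Real.cos_two_mul, Real.cos_sq']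
  ring

lemma two_mul_div_le_sin {n m : ℕ} (h : 2 * m ≤ n) :
    2 * ((m : ℝ) / n) ≤ Real.sin (Real.pi * m / n) := by
  rcases n.eq_zero_or_pos with rfl | hn
  · simp
  have hn' : (0 : ℝ) < n := by exact_mod_cast hn
  have h' : 2 * (m : ℝ) ≤ n := by exact_mod_cast h
  have hangle : Real.pi * m / n ≤ Real.pi / 2 := by
    rw [div_le_div_iff₀ hn' two_pos]
    nlinarith [Real.pi_pos]
  calc 2 * ((m : ℝ) / n) = 2 / Real.pi * (Real.pi * m / n) := by
        have := Real.pi_ne_zero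
        field_simp
    _ ≤ _ := Real.mul_le_sin (by positivity) hangle

lemma inv_one_add_sin_sq_le_of_two_mul_le {n m : ℕ} {w : ℝ} (hw : 0 < w) (hm : 0 < m)
    (hmn : 2 * m ≤ n) :
    1 / (1 + w ^ 2 * (4 * Real.sin (Real.pi * m / n) ^ 2)) ≤
      (n / w) ^ 2 / 16 * ((m : ℝ) ^ 2)⁻¹ := by
  have : (0 : ℝ) < m := by exact_mod_cast hm
  have hn' : (0 : ℝ) < n := by exact_mod_cast (by omega : 0 < n)
  have hsin : (2 * ((m : ℝ) / n)) ^ 2 ≤ Real.sin (Real.pi * m / n) ^ 2 :=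
    pow_le_pow_left₀ (by positivity) (two_mul_div_le_sin hmn) 2
  calc 1 / (1 + w ^ 2 * (4 * Real.sin (Real.pi * m / n) ^ 2))
      ≤ 1 / (w ^ 2 * (4 * (2 * ((m : ℝ) / n)) ^ 2)) :=
        one_div_le_one_div_of_le (by positivity) (le_add_of_nonneg_of_le zero_le_one (by gcongr))
    _ = _ := by
      field_simp
      norm_num

lemma inv_one_add_sin_sq_le {n m : ℕ} {w : ℝ} (hw : 0 < w) (hm : 0 < m) (hmn : m < n) :
    1 / (1 + w ^ 2 * (4 * Real.sin (Real.pi * m / n) ^ 2)) ≤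
      (n / w) ^ 2 / 16 * (((m : ℝ) ^ 2)⁻¹ + (((n - m : ℕ) : ℝ) ^ 2)⁻¹) := by
  rw [mul_add]
  rcases le_total (2 * m) n with h | h
  · exact (inv_one_add_sin_sq_le_of_two_mul_le hw hm h).trans
      (le_add_of_nonneg_right (by positivity))
  · have hreflect : Real.sin (Real.pi * m / n) = Real.sin (Real.pi * ((n - m : ℕ) : ℝ) / n) := by
      have hn : (n : ℝ) ≠ 0 := Nat.cast_ne_zero.2 (by omega)
      rw [← Real.sin_pi_sub, Nat.cast_sub hmn.le]
      congr 1
      field_simp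
    rw [hreflect]
    exact (inv_one_add_sin_sq_le_of_two_mul_le hw (Nat.sub_pos_of_lt hmn) (by omega)).trans
      (le_add_of_nonneg_left (by positivity))

lemma sum_Ioo_inv_one_add_sin_sq_le {n : ℕ} {w : ℝ} (hw : 0 < w) :
    ∑ m ∈ Finset.Ioo 0 n, 1 / (1 + w ^ 2 * (4 * Real.sin (Real.pi * m / n) ^ 2)) ≤
      (n / w) ^ 2 / 4 := by
  have hsq : ∑ m ∈ Finset.Ioo 0 n, ((m : ℝ) ^ 2)⁻¹ ≤ 2 := by
    simpa using sum_Ioo_inv_sq_le (α := ℝ) 0 n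
  have hreflect : ∑ m ∈ Finset.Ioo 0 n, (((n - m : ℕ) : ℝ) ^ 2)⁻¹ =
      ∑ m ∈ Finset.Ioo 0 n, ((m : ℝ) ^ 2)⁻¹ := by
    refine Finset.sum_nbij' (fun m => n - m) (fun m => n - m) ?_ ?_ ?_ ?_ fun _ _ => rfl
    all_goals
      intro m hm
      simp only [Finset.mem_Ioo] at *
      omega
  calc _ ≤ ∑ m ∈ Finset.Ioo 0 n,
        (n / w) ^ 2 / 16 * (((m : ℝ) ^ 2)⁻¹ + (((n - m : ℕ) : ℝ) ^ 2)⁻¹) :=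
        Finset.sum_le_sum fun m hm =>
          inv_one_add_sin_sq_le hw (Finset.mem_Ioo.1 hm).1 (Finset.mem_Ioo.1 hm).2
    _ ≤ (n / w) ^ 2 / 16 * (2 + 2) := by
      rw [← Finset.mul_sum, Finset.sum_add_distrib, hreflect]
      gcongr
    _ = _ := by ring

lemma sum_zmod_val {M : Type*} [AddCommMonoid M] {n : ℕ} [NeZero n] (f : ℕ → M) :
    ∑ j : ZMod n, f j.val = ∑ m ∈ Finset.range n, f m := by
  cases n with
  | zero => exact absurd rfl (NeZero.ne 0)
  | succ n => exact Fin.sum_univ_eq_sum_range f (n + 1)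

lemma sum_inv_one_add_stdAddChar_le {n : ℕ} [NeZero n] {w : ℝ} (hw : 0 < w) (hwn : w ≤ n) :
    ∑ j : ZMod n, 1 / (1 + w ^ 2 * (2 - 2 * (ZMod.stdAddChar j).re)) ≤ 2 * (n / w) ^ 2 := by
  have hone : 1 ≤ (n / w) ^ 2 := one_le_pow₀ ((one_le_div hw).2 hwn)
  simp only [two_sub_two_mul_stdAddChar_re]
  rw [sum_zmod_val fun m => 1 / (1 + w ^ 2 * (4 * Real.sin (Real.pi * m / n) ^ 2)),
    Finset.range_eq_Ico, ← Finset.add_sum_Ioo_eq_sum_Ico (Nat.pos_of_neZero n)]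
  have hzero : 1 / (1 + w ^ 2 * (4 * Real.sin (Real.pi * (0 : ℕ) / n) ^ 2)) = 1 := by simp
  linarith [sum_Ioo_inv_one_add_sin_sq_le (n := n) hw]

variable {L : Fin 3 → ℕ} [∀ i, NeZero (L i)]

lemma inv_two_add_torusEigenvalue_pow_three_le (w : ℝ) (k : Torus L) :
    1 / (2 + w ^ 2 * torusEigenvalue k) ^ 3 ≤
      ∏ i, 1 / (1 + w ^ 2 * (2 - 2 * (ZMod.stdAddChar (k i)).re)) := by
  have hnonneg : ∀ i, 0 ≤ 2 - 2 * (ZMod.stdAddChar (k i)).re := fun i => by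
    linarith [stdAddChar_re_le_one (k i)]
  have hsingle : ∀ i, 2 - 2 * (ZMod.stdAddChar (k i)).re ≤ torusEigenvalue k := fun i =>
    Finset.single_le_sum (f := fun i => 2 - 2 * (ZMod.stdAddChar (k i)).re)
      (fun i _ => hnonneg i) (Finset.mem_univ i)
  have hpos : ∀ i, 0 < 1 + w ^ 2 * (2 - 2 * (ZMod.stdAddChar (k i)).re) := fun i => by
    have := hnonneg i
    positivity
  calc 1 / (2 + w ^ 2 * torusEigenvalue k) ^ 3
      = ∏ _i : Fin 3, 1 / (2 + w ^ 2 * torusEigenvalue k) := by simp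
    _ ≤ _ := by
      refine Finset.prod_le_prod (fun i _ => ?_) fun i _ => one_div_le_one_div_of_le (hpos i) ?_
      · have := torusEigenvalue_nonneg k
        positivity
      · have := hsingle i
        gcongr
        norm_num

lemma sum_inv_two_add_torusEigenvalue_pow_three_le {w : ℝ} (hw : 0 < w) (hwL : ∀ i, w ≤ L i) :
    ∑ k : Torus L, 1 / (2 + w ^ 2 * torusEigenvalue k) ^ 3 ≤
      8 * (Fintype.card (Torus L) / w ^ 3) ^ 2 := by
  calc ∑ k : Torus L, 1 / (2 + w ^ 2 * torusEigenvalue k) ^ 3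
      ≤ ∑ k : Torus L, ∏ i, 1 / (1 + w ^ 2 * (2 - 2 * (ZMod.stdAddChar (k i)).re)) :=
        Finset.sum_le_sum fun k _ => inv_two_add_torusEigenvalue_pow_three_le w k
    _ = ∏ i, ∑ j : ZMod (L i), 1 / (1 + w ^ 2 * (2 - 2 * (ZMod.stdAddChar j).re)) := by
        rw [Finset.prod_univ_sum, Fintype.piFinset_univ]
    _ ≤ ∏ i, 2 * ((L i : ℝ) / w) ^ 2 := by
        refine Finset.prod_le_prod (fun i _ => Finset.sum_nonneg fun j _ => ?_) fun i _ =>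
          sum_inv_one_add_stdAddChar_le hw (hwL i)
        have : 0 ≤ 2 - 2 * (ZMod.stdAddChar j).re := by linarith [stdAddChar_re_le_one j]
        positivity
    _ = _ := by
        rw [Fintype.card_pi]
        simp only [ZMod.card, Fin.prod_univ_three]
        push_cast
        ring

lemma le_resolventKernel_apply_zero (W : ℕ) {κ : ℝ} (hκ : 0 < κ) (m : ℕ) :
    1 / κ ^ m / Fintype.card (Torus L) ≤ resolventKernel W κ m (0 : Torus L) := by
  have hterm : ∀ k : Torus L, 0 ≤ 1 / (κ + (W : ℝ) ^ 2 * torusEigenvalue k) ^ m := fun k => by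
    have := torusEigenvalue_nonneg k
    positivity
  have hzero := Finset.single_le_sum (fun k _ => hterm k) (Finset.mem_univ (0 : Torus L))
  simp only [resolventKernel, torusChar_zero_right, Complex.one_re]
  gcongr
  simpa using hzero

lemma resolventKernel_apply_zero_sub_le {W : ℕ} (hW : 1 ≤ W) {κ : ℝ} (hκ : 0 < κ) (m : ℕ)
    {x : Torus L} {r : ℝ} {d : Fin 3 → ℤ} (hd : ∀ i, |(d i : ℝ)| ≤ r) (hx : ∀ i, x i = d i) :
    resolventKernel W κ (m + 1) (0 : Torus L) - resolventKernel W κ (m + 1) x ≤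
      3 / 2 * (r / W) ^ 2 * resolventKernel W κ m (0 : Torus L) := by
  have : (0 : ℝ) < W := by exact_mod_cast hW
  simp only [resolventKernel, torusChar_zero_right, Complex.one_re]
  rw [← sub_div, mul_div_assoc', ← Finset.sum_sub_distrib, Finset.mul_sum]
  gcongr with k
  set a : ℝ := κ + (W : ℝ) ^ 2 * torusEigenvalue k with ha
  have ha0 : 0 < a := by
    have := torusEigenvalue_nonneg k
    positivity
  calc 1 / a ^ (m + 1) - (torusChar k x).re / a ^ (m + 1)
      = (1 - (torusChar k x).re) / a ^ (m + 1) := (sub_div ..).symm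
    _ ≤ 3 / 2 * r ^ 2 * (a / (W : ℝ) ^ 2) / a ^ (m + 1) := by
        have hle : torusEigenvalue k ≤ a / (W : ℝ) ^ 2 := by
          rw [le_div_iff₀ (by positivity), ha]
          linarith
        have := one_sub_re_torusChar_le k hd hx
        gcongr
        exact this.trans (by gcongr)
    _ = _ := by
        field_simp
        ring

lemma le_resolventKernel_two_four {W : ℕ} (hW : 1 ≤ W) (hWL : ∀ i, W ≤ L i) {x : Torus L}
    {r : ℝ} {d : Fin 3 → ℤ} (hd : ∀ i, |(d i : ℝ)| ≤ r) (hx : ∀ i, x i = d i)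
    (hr : r * 20 * ((Fintype.card (Torus L) : ℝ) / (W : ℝ) ^ 3) ≤ W) :
    1 / 32 / (Fintype.card (Torus L) : ℝ) ≤ resolventKernel W 2 4 x := by
  have hW0 : (0 : ℝ) < W := by exact_mod_cast hW
  have hr0 : 0 ≤ r := (abs_nonneg _).trans (hd 0)
  set n : ℝ := (Fintype.card (Torus L) : ℝ)
  have hthree : resolventKernel W 2 3 (0 : Torus L) ≤ 8 * (n / (W : ℝ) ^ 3) ^ 2 / n := by
    simp only [resolventKernel, torusChar_zero_right, Complex.one_re]
    gcongr
    exact sum_inv_two_add_torusEigenvalue_pow_three_le hW0 fun i => by exact_mod_cast hWL i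
  have hsmall : (r / W * (n / (W : ℝ) ^ 3)) ^ 2 ≤ (1 / 20) ^ 2 := by
    gcongr
    rw [div_mul_eq_mul_div, div_le_div_iff₀ hW0 (by norm_num)]
    linarith
  have hfour : 1 / 2 ^ 4 / n ≤ resolventKernel W 2 4 (0 : Torus L) :=
    le_resolventKernel_apply_zero W two_pos 4
  have hdiff : 3 / 2 * (r / W) ^ 2 * resolventKernel W 2 3 (0 : Torus L) ≤ 1 / 32 / n := by
    calc 3 / 2 * (r / W) ^ 2 * resolventKernel W 2 3 (0 : Torus L)
        ≤ 3 / 2 * (r / W) ^ 2 * (8 * (n / (W : ℝ) ^ 3) ^ 2 / n) := by gcongr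
      _ = 12 * (r / W * (n / (W : ℝ) ^ 3)) ^ 2 / n := by ring
      _ ≤ 12 * (1 / 20) ^ 2 / n := by gcongr
      _ ≤ _ := by
        gcongr
        norm_num
  have hhalf : 1 / 2 ^ 4 / n = 1 / 32 / n + 1 / 32 / n := by ring
  linarith [resolventKernel_apply_zero_sub_le hW two_pos 3 hd hx]

end BandProfileLowerBound

section TorusBox

variable {L : Fin 3 → ℕ} [∀ i, NeZero (L i)]

/-- The box of sites whose coordinates are represented by `0, …, q`. -/
def torusBox (L : Fin 3 → ℕ) [∀ i, NeZero (L i)] (q : ℕ) : Finset (Torus L) :=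
  Fintype.piFinset fun i => (Finset.range (q + 1)).image (Nat.cast : ℕ → ZMod (L i))

lemma card_torusBox {q : ℕ} (hq : ∀ i, q < L i) : (torusBox L q).card = (q + 1) ^ 3 := by
  have hside : ∀ i, ((Finset.range (q + 1)).image (Nat.cast : ℕ → ZMod (L i))).card = q + 1 := by
    intro i
    rw [Finset.card_image_of_injOn, Finset.card_range]
    refine (CharP.natCast_injOn_Iio (ZMod (L i)) (L i)).mono fun a ha => ?_
    exact (Nat.lt_succ_iff.1 (Finset.mem_range.1 (Finset.mem_coe.1 ha))).trans_lt (hq i)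
  rw [torusBox, Fintype.card_piFinset]
  simp only [hside, Finset.prod_const, Finset.card_univ, Fintype.card_fin]

lemma le_Jmat_of_mem_torusBox {W q : ℕ} (hW : 1 ≤ W) (hWL : ∀ i, W ≤ L i)
    (hq : q * 20 * ((Fintype.card (Torus L) : ℝ) / (W : ℝ) ^ 3) ≤ W) {x y : Torus L}
    (hx : x ∈ torusBox L q) (hy : y ∈ torusBox L q) :
    1 / 32 / (Fintype.card (Torus L) : ℝ) ≤ Jmat L W x y := by
  rw [Jmat_apply]
  simp only [torusBox, Fintype.mem_piFinset, Finset.mem_image, Finset.mem_range,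
    Nat.lt_succ_iff] at hx hy
  choose a ha hax using hx
  choose b hb hby using hy
  refine (le_resolventKernel_two_four hW hWL (d := fun i => (a i : ℤ) - b i) (fun i => ?_)
    (fun i => ?_) hq).trans (resolventKernel_two_le_one W 3 _)
  · have haq : (a i : ℝ) ≤ q := by exact_mod_cast ha i
    have hbq : (b i : ℝ) ≤ q := by exact_mod_cast hb i
    push_cast
    exact abs_sub_le_of_nonneg_of_le (Nat.cast_nonneg _) haq (Nat.cast_nonneg _) hbq
  · simp [← hax i, ← hby i]

lemma one_le_card_torus_div {W : ℕ} (hW : 1 ≤ W) (hWL : ∀ i, W ≤ L i) :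
    1 ≤ (Fintype.card (Torus L) : ℝ) / (W : ℝ) ^ 3 := by
  have hprod : W ^ 3 ≤ Fintype.card (Torus L) := by
    simpa [Fintype.card_pi] using Finset.prod_le_prod' fun i (_ : i ∈ Finset.univ) => hWL i
  rw [one_le_div (by positivity)]
  exact_mod_cast hprod

lemma exists_finset_le_Jmat {W : ℕ} (hW : 1 ≤ W) (hWL : ∀ i, W ≤ L i) :
    ∃ (B : Finset (Torus L)) (s : ℝ), B.Nonempty ∧ 0 < s ∧ (∀ x ∈ B, ∀ y ∈ B, s ≤ Jmat L W x y) ∧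
      1 / (256000 * ((Fintype.card (Torus L) : ℝ) / (W : ℝ) ^ 3) ^ 4) ≤ B.card * s := by
  have hW0 : (0 : ℝ) < W := by exact_mod_cast hW
  have hN := one_le_card_torus_div (L := L) hW hWL
  have hcard : (Fintype.card (Torus L) : ℝ) =
      (Fintype.card (Torus L) : ℝ) / (W : ℝ) ^ 3 * (W : ℝ) ^ 3 := by field_simp
  set N : ℝ := (Fintype.card (Torus L) : ℝ) / (W : ℝ) ^ 3
  set r : ℝ := W / (20 * N) with hr
  have hqr : (⌊r⌋₊ : ℝ) ≤ r := Nat.floor_le (by positivity)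
  have hrW : r < W := by
    rw [hr, div_lt_iff₀ (by positivity)]
    nlinarith
  have hqL : ∀ i, ⌊r⌋₊ < L i := fun i =>
    lt_of_lt_of_le (by exact_mod_cast hqr.trans_lt hrW) (hWL i)
  have hqN : ⌊r⌋₊ * 20 * N ≤ W := by
    calc ⌊r⌋₊ * 20 * N ≤ r * 20 * N := by gcongr
      _ = W := by
        rw [hr]
        field_simp
  have hB := card_torusBox hqL
  refine ⟨torusBox L ⌊r⌋₊, 1 / 32 / (Fintype.card (Torus L) : ℝ),
    Finset.card_pos.1 (by rw [hB]; positivity), by positivity,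
    fun x hx y hy => le_Jmat_of_mem_torusBox hW hWL hqN hx hy, ?_⟩
  calc 1 / (256000 * N ^ 4) = r ^ 3 * (1 / 32 / (Fintype.card (Torus L) : ℝ)) := by
        rw [hcard, hr]
        field_simp
        norm_num
    _ ≤ (torusBox L ⌊r⌋₊).card * (1 / 32 / (Fintype.card (Torus L) : ℝ)) := by
        rw [hB]
        push_cast
        gcongr
        exact (Nat.lt_floor_add_one r).le

end TorusBox

section BandMatrix

variable {L : Fin 3 → ℕ} [∀ i, NeZero (L i)]

lemma siteIdx_injective : Function.Injective (siteIdx L) := fun _ _ h =>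
  (Fintype.equivFin (Torus L)).injective (Fin.ext h)

lemma isHermitian_ext_of_siteIdx_lt {M N : Matrix (Torus L) (Torus L) ℂ} (hM : M.IsHermitian)
    (hN : N.IsHermitian) (hdiag : ∀ i, M i i = N i i)
    (hlt : ∀ i j, siteIdx L i < siteIdx L j → M i j = N i j) : M = N := by
  ext i j
  rcases lt_trichotomy (siteIdx L i) (siteIdx L j) with h | h | h
  · exact hlt i j h
  · obtain rfl := siteIdx_injective h
    exact hdiag i
  · rw [← hM.apply, ← hN.apply, hlt j i h]

/-- The band matrix as a linear function of the Gaussian coordinates. -/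
def bandMatrix (L : Fin 3 → ℕ) [∀ i, NeZero (L i)] (W : ℕ) :
    EuclideanSpace ℝ (Torus L × Torus L) →ₗ[ℝ] Matrix (Torus L) (Torus L) ℂ where
  toFun w := Hmat L W w.ofLp
  map_add' v w := by
    ext i j
    simp only [Hmat, of_apply, Matrix.add_apply, WithLp.ofLp_add, Pi.add_apply]
    split_ifs <;> push_cast <;> ring
  map_smul' c w := by
    ext i j
    simp only [Hmat, of_apply, Matrix.smul_apply, WithLp.ofLp_smul, Pi.smul_apply,
      smul_eq_mul, RingHom.id_apply, Complex.real_smul]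
    split_ifs <;> push_cast <;> ring

lemma bandMatrix_apply_self (W : ℕ) (w : EuclideanSpace ℝ (Torus L × Torus L)) (i : Torus L) :
    bandMatrix L W w i i = (√(Jmat L W i i) * w (i, i) : ℝ) := by
  simp [bandMatrix, Hmat]

lemma bandMatrix_apply_of_lt (W : ℕ) (w : EuclideanSpace ℝ (Torus L × Torus L)) {i j : Torus L}
    (hij : siteIdx L i < siteIdx L j) :
    bandMatrix L W w i j =
      (√(Jmat L W i j / 2) : ℝ) * ((w (i, j) : ℂ) + Complex.I * (w (j, i) : ℂ)) := by
  have hne : i ≠ j := fun h => hij.ne (congrArg _ h)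
  simp [bandMatrix, Hmat, hne, hij]

lemma bandMatrix_isHermitian (W : ℕ) (w : EuclideanSpace ℝ (Torus L × Torus L)) :
    (bandMatrix L W w).IsHermitian := by
  have hlt : ∀ i j, siteIdx L i < siteIdx L j →
      star (bandMatrix L W w j i) = bandMatrix L W w i j := fun i j hij => by
    have hne : j ≠ i := fun h => hij.ne' (congrArg _ h)
    rw [bandMatrix_apply_of_lt W w hij]
    simp [bandMatrix, Hmat, hne, hij.not_gt, Jmat_comm W j i]
  ext i j
  rw [conjTranspose_apply]
  rcases lt_trichotomy (siteIdx L i) (siteIdx L j) with h | h | h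
  · exact hlt i j h
  · obtain rfl := siteIdx_injective h
    rw [bandMatrix_apply_self, Complex.star_def, Complex.conj_ofReal]
  · rw [← hlt j i h, star_star]

lemma exists_bandMatrix_eq {W : ℕ} (hW : 1 ≤ W) {M : Matrix (Torus L) (Torus L) ℂ}
    (hM : M.IsHermitian) : ∃ w, bandMatrix L W w = M := by
  refine ⟨WithLp.toLp 2 fun p => if p.1 = p.2 then (M p.1 p.1).re / √(Jmat L W p.1 p.1)
    else if siteIdx L p.1 < siteIdx L p.2 then (M p.1 p.2).re / √(Jmat L W p.1 p.2 / 2)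
    else (M p.2 p.1).im / √(Jmat L W p.2 p.1 / 2),
    isHermitian_ext_of_siteIdx_lt (bandMatrix_isHermitian W _) hM (fun i => ?_) fun i j hij => ?_⟩
  · have hJ : √(Jmat L W i i) ≠ 0 := (Real.sqrt_pos.2 (Jmat_pos hW i i)).ne'
    rw [bandMatrix_apply_self]
    simp only [if_true]
    rw [mul_div_cancel₀ _ hJ]
    exact Complex.conj_eq_iff_re.1 (hM.apply i i)
  · have hJ : ((√(Jmat L W i j / 2) : ℝ) : ℂ) ≠ 0 :=
      Complex.ofReal_ne_zero.2 (Real.sqrt_pos.2 (half_pos (Jmat_pos hW i j))).ne'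
    have hne : i ≠ j := fun h => hij.ne (congrArg _ h)
    rw [bandMatrix_apply_of_lt W _ hij]
    simp only [hne, hne.symm, hij, hij.not_gt, if_true, if_false, Complex.ofReal_div]
    rw [mul_add, mul_left_comm, mul_div_cancel₀ _ hJ, mul_div_cancel₀ _ hJ, mul_comm Complex.I]
    exact Complex.re_add_im _

lemma isHermitianParam_bandMatrix {W : ℕ} (hW : 1 ≤ W) : IsHermitianParam (bandMatrix L W) where
  isHermitian := bandMatrix_isHermitian W
  exists_eq _ hM := exists_bandMatrix_eq hW hM

lemma norm_sq_bandMatrix_apply {W : ℕ} (hW : 1 ≤ W) (w : EuclideanSpace ℝ (Torus L × Torus L))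
    (i j : Torus L) :
    ‖bandMatrix L W w i j‖ ^ 2 = Jmat L W i j * ((w (i, j) ^ 2 + w (j, i) ^ 2) / 2) := by
  have hlt : ∀ i j, siteIdx L i < siteIdx L j → ‖bandMatrix L W w i j‖ ^ 2 =
      Jmat L W i j * ((w (i, j) ^ 2 + w (j, i) ^ 2) / 2) := fun i j hij => by
    rw [bandMatrix_apply_of_lt W w hij, norm_mul, mul_pow, Complex.norm_real, Real.norm_eq_abs,
      sq_abs, Real.sq_sqrt (half_pos (Jmat_pos hW i j)).le, mul_comm Complex.I, Complex.sq_norm,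
      Complex.normSq_add_mul_I]
    ring
  rcases lt_trichotomy (siteIdx L i) (siteIdx L j) with h | h | h
  · exact hlt i j h
  · obtain rfl := siteIdx_injective h
    rw [bandMatrix_apply_self, Complex.norm_real, Real.norm_eq_abs, sq_abs, mul_pow,
      Real.sq_sqrt (Jmat_pos hW i i).le]
    ring
  · rw [← (bandMatrix_isHermitian W w).apply, norm_star, hlt j i h, Jmat_comm W j i]
    ring

lemma hasVarianceProfile_bandMatrix {W : ℕ} (hW : 1 ≤ W) :
    HasVarianceProfile (bandMatrix L W) (Jmat L W) := by
  intro w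
  simp only [norm_sq_bandMatrix_apply hW, mul_div_cancel_left₀ _ (Jmat_pos hW _ _).ne']
  rw [EuclideanSpace.norm_sq_eq, Fintype.sum_prod_type]
  simp only [← Finset.sum_div, Finset.sum_add_distrib, Real.norm_eq_abs, sq_abs]
  rw [Finset.sum_comm (f := fun i j => w (j, i) ^ 2)]
  ring

end BandMatrix

section DensityOfStates

variable {L : Fin 3 → ℕ} [∀ i, NeZero (L i)]

lemma dos_eq_integral_stdGaussian (W : ℕ) (E : ℝ) {ε : ℝ} (hε : 0 < ε) :
    dos L W E ε = 1 / Real.pi *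
      ∫ w, (negImResolvent (spectralParam E ε) (bandMatrix L W w) 0 0).re
        ∂stdGaussian (EuclideanSpace ℝ (Torus L × Torus L)) := by
  have hz : (spectralParam E ε).im ≠ 0 := by simpa using hε.ne'
  have hcont : Continuous fun w => resolventMatrix (spectralParam E ε) (bandMatrix L W w) 0 0 :=
    (continuous_resolventMatrix (bandMatrix L W).continuous_of_finiteDimensional
      (bandMatrix_isHermitian W) continuous_const fun _ => hz).matrix_elem 0 0
  have hint : Integrable
      (fun w => resolventMatrix (spectralParam E ε) (bandMatrix L W w) 0 0)
      (stdGaussian (EuclideanSpace ℝ (Torus L × Torus L))) :=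
    Integrable.of_bound hcont.aestronglyMeasurable _
      (ae_of_all _ fun w => norm_resolventMatrix_diag_le (bandMatrix_isHermitian W w) hz 0)
  have havg : avgGreen L W E ε 0 0 =
      ∫ w, resolventMatrix (spectralParam E ε) (bandMatrix L W w) 0 0
        ∂stdGaussian (EuclideanSpace ℝ (Torus L × Torus L)) := by
    rw [← map_pi_eq_stdGaussian, integral_map (by fun_prop) hcont.aestronglyMeasurable]
    rfl
  have him := integral_im hint
  simp only [RCLike.im_to_complex] at him
  simp only [re_negImResolvent_diag_eq_neg_im]
  rw [dos, havg, integral_neg, him]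
  ring

lemma exists_tendsto_dos_le {W : ℕ} (hW : 1 ≤ W) {B : Finset (Torus L)} (hB : B.Nonempty) {s : ℝ}
    (hs0 : 0 < s) (hs : ∀ x ∈ B, ∀ y ∈ B, s ≤ Jmat L W x y) (E : ℝ) :
    ∃ ρ : ℝ, Tendsto (fun ε : ℝ => dos L W E ε) (𝓝[>] (0 : ℝ)) (𝓝 ρ) ∧
      |ρ| ≤ 8 / gaussianAbsMoment ^ 2 / √(B.card * s) := by
  obtain ⟨ρ, hρ0, hρ, hlim⟩ := exists_densityOfStates_le (L := bandMatrix L W)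
    (isHermitianParam_bandMatrix hW) (hasVarianceProfile_bandMatrix hW) (Jmat_add_right W)
    hB hs0 hs E
  refine ⟨1 / Real.pi * ρ, (hlim.const_mul _).congr' ?_, ?_⟩
  · filter_upwards [self_mem_nhdsWithin] with ε hε
    exact (dos_eq_integral_stdGaussian W E hε).symm
  rw [abs_of_nonneg (by positivity), one_div_mul_eq_div, div_le_iff₀ Real.pi_pos]
  exact hρ.trans_eq (by ring)

end DensityOfStates

lemma mul_sq_le_mul_exp {A N : ℝ} (hA : 0 ≤ A) (hN : 0 ≤ N) :
    A * N ^ 2 ≤ (2 * A + 1) * Real.exp ((2 * A + 1) * N) := by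
  have hexp : N ^ 2 ≤ 2 * Real.exp N := by linarith [Real.quadratic_le_exp_of_nonneg hN]
  have hscale : N ≤ (2 * A + 1) * N := le_mul_of_one_le_left hN (by linarith)
  calc A * N ^ 2 ≤ A * (2 * Real.exp N) := by gcongr
    _ ≤ (2 * A + 1) * Real.exp N := by nlinarith [Real.exp_pos N]
    _ ≤ (2 * A + 1) * Real.exp ((2 * A + 1) * N) := by gcongr

theorem dos_bounded_union_general :
    ∃ K : ℝ, 0 < K ∧ ∀ (W : ℕ), 1 ≤ W →
      ∀ (L : Fin 3 → ℕ) [∀ i, NeZero (L i)], (∀ i, W ≤ L i) → ∀ E : ℝ,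
        ∃ ρΛ : ℝ, Tendsto (fun ε : ℝ => dos L W E ε) (𝓝[>] (0 : ℝ)) (𝓝 ρΛ) ∧
          |ρΛ| ≤ K * ((Fintype.card (Torus L) : ℝ) / (W : ℝ) ^ 3) ^ 2 := by
  have hg := gaussianAbsMoment_pos
  refine ⟨8 / gaussianAbsMoment ^ 2 * 506, by positivity, fun W hW L _ hWL E => ?_⟩
  obtain ⟨B, s, hB, hs0, hs, hBs⟩ := exists_finset_le_Jmat hW hWL
  obtain ⟨ρ, hlim, hρ⟩ := exists_tendsto_dos_le hW hB hs0 hs E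
  refine ⟨ρ, hlim, hρ.trans ?_⟩
  have hN : 0 < (Fintype.card (Torus L) : ℝ) / (W : ℝ) ^ 3 :=
    one_pos.trans_le (one_le_card_torus_div hW hWL)
  generalize (Fintype.card (Torus L) : ℝ) / (W : ℝ) ^ 3 = N at hN hBs ⊢
  have hsqrt : 1 / (506 * N ^ 2) ≤ √(B.card * s) := by
    refine Real.le_sqrt_of_sq_le (le_trans ?_ hBs)
    rw [div_pow, one_pow]
    refine one_div_le_one_div_of_le (by positivity) ?_
    nlinarith [pow_pos hN 4]
  calc 8 / gaussianAbsMoment ^ 2 / √(B.card * s)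
      ≤ 8 / gaussianAbsMoment ^ 2 / (1 / (506 * N ^ 2)) := by gcongr
    _ = 8 / gaussianAbsMoment ^ 2 * 506 * N ^ 2 := by field_simp

/-- On any finite union of cubes of side `W`, the averaged density of states
satisfies `|ρ̄_Λ(E)| ≤ K e^{K|Λ|/W³}` for `E ∈ 𝓘`. -/
theorem dos_bounded_union (η : ℝ) (hη : 0 < η) :
    ∃ (W₀ : ℕ) (K : ℝ), 0 < K ∧
      ∀ (W : ℕ), W₀ ≤ W →
      ∀ (L : Fin 3 → ℕ) [∀ i, NeZero (L i)], (∀ i, W ∣ L i) →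
      ∀ E ∈ specI η,
        ∃ ρΛ : ℝ,
          Tendsto (fun ε : ℝ => dos L W E ε) (𝓝[>] (0 : ℝ)) (𝓝 ρΛ) ∧
          |ρΛ| ≤ K * Real.exp (K * (Fintype.card (Torus L) : ℝ) / (W : ℝ) ^ 3) := by
  obtain ⟨K, hK, hdos⟩ := dos_bounded_union_general
  refine ⟨1, 2 * K + 1, by positivity, fun W hW L _ hWL E _ => ?_⟩
  obtain ⟨ρ, hlim, hρ⟩ := hdos W hW L (fun i => Nat.le_of_dvd (Nat.pos_of_neZero _) (hWL i)) E
  refine ⟨ρ, hlim, hρ.trans ?_⟩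
  rw [mul_div_assoc]
  exact mul_sq_le_mul_exp hK.le (by positivity)
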